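/- Let G be a metabelian group with a finite presentation ⟨X | R⟩, and let k be the minimum, over all abelian normal subgroups A of G whose quotient G/A is abelian (such A exist, e.g. A = [G,G]), of the torsion-free rank of the finitely generated abelian group G/A. Then the Dehn function δ of this presentation satisfies: δ(n) ≼ n² if k = 0, and δ(n) ≼ 2^{n^{2k}} if k > 0. -/

import Mathlib

open Function

/-- The length of the reduced word representing an element of a free group. -/
noncomputable def freeNorm {X : Type*} (w : FreeGroup X) : ℕ :=
  letI := Classical.decEq X
  w.toWord.length

/-- `w` equals a product of exactly `N` conjugates of elements of `R ∪ R⁻¹`. -/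
def AreaIs {G : Type*} [Group G] (R : Set G) (w : G) (N : ℕ) : Prop :=
  ∃ r f : Fin N → G, (∀ i, r i ∈ R ∨ (r i)⁻¹ ∈ R) ∧
    w = (List.ofFn fun i => (f i)⁻¹ * r i * f i).prod

/-- The area of `w` with respect to the relators `R` is at most `N`. -/
def AreaLe {G : Type*} [Group G] (R : Set G) (w : G) (N : ℕ) : Prop :=
  ∃ N' ≤ N, AreaIs R w N'

/-- `f ≼ g` : there is `C > 0` with `f n ≤ C * g (C * n) + C * n + C` for all `n`. -/
def Dominates (f g : ℕ → ℕ) : Prop :=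
  ∃ C : ℕ, 0 < C ∧ ∀ n, f n ≤ C * g (C * n) + C * n + C

/-- `f ≈ g` : mutual domination. -/
def DehnEquiv (f g : ℕ → ℕ) : Prop := Dominates f g ∧ Dominates g f

/-- `δ` is the Dehn function of the presentation with relator set `R`. -/
def IsDehnFunctionOf {X : Type*} (R : Set (FreeGroup X)) (δ : ℕ → ℕ) : Prop :=
  ∀ n, IsLeast {N | ∀ w ∈ Subgroup.normalClosure R, freeNorm w ≤ n → AreaLe R w N} (δ n)

/-- A group is metabelian if its derived subgroup is abelian. -/
def IsMetabelian (G : Type*) [Group G] : Prop :=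
  ∀ a b : G, a ∈ commutator G → b ∈ commutator G → a * b = b * a

instance derivedSeriesNormalInst {G : Type*} [Group G] (n : ℕ) : (derivedSeries G n).Normal :=
  derivedSeries_normal G n

/-- The free metabelian group on `X`: the free group modulo its second derived subgroup. -/
abbrev FreeMetabelian (X : Type*) := FreeGroup X ⧸ derivedSeries (FreeGroup X) 2

/-- The word length of `w` in the free metabelian group is at most `n`. -/
def mNormLe {X : Type*} (w : FreeMetabelian X) (n : ℕ) : Prop :=
  ∃ v : FreeGroup X, QuotientGroup.mk' (derivedSeries (FreeGroup X) 2) v = w ∧ freeNorm v ≤ n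

/-- `δ` is the relative Dehn function (in the variety of metabelian groups) of the
relative presentation with relator set `R`. -/
def IsRelDehnFunctionOf {X : Type*} (R : Set (FreeMetabelian X)) (δ : ℕ → ℕ) : Prop :=
  ∀ n, IsLeast {N | ∀ w ∈ Subgroup.normalClosure R, mNormLe w n → AreaLe R w N} (δ n)

/-- The paper's commutator convention: `[x, y] = x⁻¹ * y⁻¹ * x * y`. -/
def pcomm {G : Type*} [Group G] (x y : G) : G := x⁻¹ * y⁻¹ * x * y

/-- A group has torsion-free rank `k` if it has a finite-index subgroup isomorphic to `ℤ^k`. -/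
def HasTFRank (Q : Type*) [Group Q] (k : ℕ) : Prop :=
  ∃ H : Subgroup Q, H.index ≠ 0 ∧ Nonempty (H ≃* Multiplicative (Fin k → ℤ))

/-- `G ⧸ A` is abelian and has torsion-free rank `j`. -/
def QuotientRankProp {G : Type*} [Group G] (A : Subgroup G) [A.Normal] (j : ℕ) : Prop :=
  (∀ x y : G ⧸ A, x * y = y * x) ∧ HasTFRank (G ⧸ A) j

/-- The set of torsion-free ranks of quotients `G ⧸ A` by abelian normal subgroups `A`
with `G ⧸ A` abelian. -/
def abelianRankSet (G : Type*) [Group G] : Set ℕ :=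
  {j | ∃ A : Subgroup G, ∃ h : A.Normal, (∀ x y : G, x ∈ A → y ∈ A → x * y = y * x) ∧
    @QuotientRankProp G _ A h j}

namespace MB

def PrLe {G : Type*} [Group G] (Z : Set G) (w : G) (n : ℕ) : Prop :=
  ∃ l : List G, l.length ≤ n ∧ (∀ a ∈ l, a ∈ Z ∨ a⁻¹ ∈ Z) ∧ l.prod = w

section
variable {G : Type*} [Group G] {Z Z' : Set G} {w w' : G} {n m : ℕ}

lemma PrLe.one : PrLe Z (1 : G) n := ⟨[], by simp, by simp, by simp⟩

lemma PrLe.mono (h : PrLe Z w n) (hnm : n ≤ m) : PrLe Z w m := by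
  obtain ⟨l, h1, h2, h3⟩ := h
  exact ⟨l, h1.trans hnm, h2, h3⟩

lemma PrLe.mono_set (h : PrLe Z w n) (hZ : Z ⊆ Z') : PrLe Z' w n := by
  obtain ⟨l, h1, h2, h3⟩ := h
  exact ⟨l, h1, fun a ha => (h2 a ha).imp (fun h => hZ h) (fun h => hZ h), h3⟩

lemma PrLe.mul (h : PrLe Z w n) (h' : PrLe Z w' m) : PrLe Z (w * w') (n + m) := by
  obtain ⟨l, h1, h2, h3⟩ := h
  obtain ⟨l', h1', h2', h3'⟩ := h'
  refine ⟨l ++ l', by simp; omega, ?_, by simp [h3, h3']⟩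
  intro a ha
  rcases List.mem_append.1 ha with ha | ha
  · exact h2 a ha
  · exact h2' a ha

lemma PrLe.inv (h : PrLe Z w n) : PrLe Z w⁻¹ n := by
  obtain ⟨l, h1, h2, h3⟩ := h
  refine ⟨(l.map (·⁻¹)).reverse, by simpa using h1, ?_, ?_⟩
  · intro a ha
    simp only [List.mem_reverse, List.mem_map] at ha
    obtain ⟨b, hb, rfl⟩ := ha
    rcases h2 b hb with h | h
    · right; simpa using h
    · left; exact h
  · rw [← h3, List.prod_inv_reverse]

lemma PrLe.of_mem (h : w ∈ Z) : PrLe Z w 1 := ⟨[w], by simp, by simp [h], by simp⟩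

lemma PrLe.conj (h : PrLe Z w n) (f : G) (hZ : ∀ a ∈ Z, f * a * f⁻¹ ∈ Z') :
    PrLe Z' (f * w * f⁻¹) n := by
  obtain ⟨l, h1, h2, h3⟩ := h
  refine ⟨l.map (fun a => f * a * f⁻¹), by simpa using h1, ?_, ?_⟩
  · intro a ha
    obtain ⟨b, hb, rfl⟩ := List.mem_map.1 ha
    rcases h2 b hb with h | h
    · left; exact hZ _ h
    · right
      have := hZ _ h
      simpa [mul_assoc] using this
  · rw [← h3]
    exact List.prod_hom l (MulAut.conj f).toMonoidHom

lemma PrLe.induct {Pz : G → Prop} (h : PrLe Z w n) (h1 : Pz 1)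
    (hZ : ∀ a ∈ Z, Pz a) (hi : ∀ a, Pz a → Pz a⁻¹) (hm : ∀ a b, Pz a → Pz b → Pz (a * b)) :
    Pz w := by
  obtain ⟨l, _, h2, rfl⟩ := h
  induction l with
  | nil => simpa using h1
  | cons a l ih =>
    rw [List.prod_cons]
    apply hm
    · rcases h2 a (by simp) with h | h
      · exact hZ _ h
      · simpa using hi _ (hZ _ h)
    · exact ih (by simp at *; omega) (fun b hb => h2 b (by simp [hb]))

lemma PrLe.mem_subgroup (h : PrLe Z w n) (H : Subgroup G) (hZ : Z ⊆ H) : w ∈ H :=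
  h.induct (Pz := fun w => w ∈ H) H.one_mem (fun _ ha => hZ ha) (fun _ => H.inv_mem)
    (fun _ _ => H.mul_mem)

lemma exists_prLe_of_mem_closure (h : w ∈ Subgroup.closure Z) : ∃ n, PrLe Z w n := by
  induction h using Subgroup.closure_induction with
  | mem x hx => exact ⟨1, PrLe.of_mem hx⟩
  | one => exact ⟨0, PrLe.one⟩
  | mul x y _ _ hx hy =>
    obtain ⟨a, ha⟩ := hx
    obtain ⟨b, hb⟩ := hy
    exact ⟨_, ha.mul hb⟩
  | inv x _ hx =>
    obtain ⟨a, ha⟩ := hx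
    exact ⟨_, ha.inv⟩

def conjSet (R : Set G) : Set G := {a | ∃ r ∈ R, ∃ f : G, a = f * r * f⁻¹}

abbrev Ar (R : Set G) (w : G) (n : ℕ) : Prop := PrLe (conjSet R) w n

variable {R : Set G}

lemma areaLe_of_ar (h : Ar R w n) : AreaLe R w n := by
  obtain ⟨l, h1, h2, h3⟩ := h
  have key : ∀ a ∈ l, ∃ r f : G, (r ∈ R ∨ r⁻¹ ∈ R) ∧ a = f⁻¹ * r * f := by
    intro a ha
    rcases h2 a ha with ⟨r, hr, f, hf⟩ | ⟨r, hr, f, hf⟩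
    · exact ⟨r, f⁻¹, Or.inl hr, by simpa using hf⟩
    · refine ⟨r⁻¹, f⁻¹, Or.inr (by simpa using hr), ?_⟩
      rw [← inv_inv a, hf]; simp [mul_assoc]
  choose! r f h4 h5 using key
  refine ⟨l.length, h1, fun i => r (l.get i), fun i => f (l.get i), fun i => h4 _ (by simp), ?_⟩
  have : (fun i : Fin l.length => (f (l.get i))⁻¹ * r (l.get i) * f (l.get i)) = l.get := by
    funext i
    exact (h5 _ (by simp)).symm
  rw [this, List.ofFn_get, h3]

lemma Ar.cj (h : Ar R w n) (f : G) : Ar R (f * w * f⁻¹) n := by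
  apply PrLe.conj h
  rintro a ⟨r, hr, g, rfl⟩
  exact ⟨r, hr, f * g, by group⟩

lemma exists_ar (h : w ∈ Subgroup.normalClosure R) : ∃ n, Ar R w n := by
  apply exists_prLe_of_mem_closure
  rw [Subgroup.normalClosure] at h
  refine Subgroup.closure_mono ?_ h
  intro x hx
  rw [Group.mem_conjugatesOfSet_iff] at hx
  obtain ⟨r, hr, hc⟩ := hx
  rw [isConj_iff] at hc
  obtain ⟨c, hc⟩ := hc
  exact ⟨r, hr, c, hc.symm⟩

lemma Ar.mem (h : Ar R w n) : w ∈ Subgroup.normalClosure R := by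
  apply PrLe.mem_subgroup h
  rintro a ⟨r, hr, g, rfl⟩
  exact Subgroup.normalClosure_normal.conj_mem _ (Subgroup.subset_normalClosure hr) _

/-- uniform area bound over a finite family -/
lemma exists_ar_finite {ι : Type*} [Finite ι] (f : ι → G)
    (h : ∀ i, f i ∈ Subgroup.normalClosure R) : ∃ n, ∀ i, Ar R (f i) n := by
  choose g hg using fun i => exists_ar (h i)
  obtain ⟨M, hM⟩ := Finite.exists_le g
  exact ⟨M, fun i => (hg i).mono (hM i)⟩

def Eq' (R : Set G) (a b : G) (n : ℕ) : Prop := Ar R (a * b⁻¹) n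

variable {a b c : G}
lemma Eq'.refl : Eq' R a a n := by unfold Eq'; simpa using PrLe.one
lemma Eq'.mono (h : Eq' R a b n) (hm : n ≤ m) : Eq' R a b m := PrLe.mono h hm
lemma Eq'.symm (h : Eq' R a b n) : Eq' R b a n := by
  have := PrLe.inv h
  simpa [Eq'] using this
lemma Eq'.trans (h : Eq' R a b n) (h' : Eq' R b c m) : Eq' R a c (n + m) := by
  have := PrLe.mul h h'
  simpa [Eq', mul_assoc] using this
lemma Eq'.mul {a' b' : G} (h : Eq' R a b n) (h' : Eq' R a' b' m) :
    Eq' R (a * a') (b * b') (n + m) := by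
  have := PrLe.mul (Ar.cj h' a) h
  rw [add_comm]
  simpa [Eq', mul_assoc] using this
lemma Eq'.inv (h : Eq' R a b n) : Eq' R a⁻¹ b⁻¹ n := by
  have := Ar.cj (PrLe.inv h) a⁻¹
  unfold Eq'
  convert this using 1
  group
lemma Eq'.cj (h : Eq' R a b n) (f : G) : Eq' R (f * a * f⁻¹) (f * b * f⁻¹) n := by
  have := Ar.cj h f
  unfold Eq'
  convert this using 1
  group
lemma Eq'.ar (h : Eq' R a b n) (h' : Ar R b m) : Ar R a (n + m) := by
  have := PrLe.mul h h'
  simpa [Eq', mul_assoc] using this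

def Cm (R : Set G) (a b : G) (n : ℕ) : Prop := Eq' R (a * b * a⁻¹) b n

lemma Cm.mono (h : Cm R a b n) (hm : n ≤ m) : Cm R a b m := PrLe.mono h hm
lemma Cm.symm (h : Cm R a b n) : Cm R b a n := by
  have := PrLe.inv h
  unfold Cm Eq'
  convert this using 1
  group
lemma Cm.mul_right (h : Cm R a b n) (h' : Cm R a c m) : Cm R a (b * c) (n + m) := by
  have := Eq'.mul h h'
  unfold Cm
  convert this using 1
  group
lemma Cm.inv_right (h : Cm R a b n) : Cm R a b⁻¹ n := by
  have := Eq'.inv h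
  unfold Cm
  convert this using 1
  group
lemma Cm.one_right : Cm R a 1 n := by unfold Cm; simpa using Eq'.refl
lemma Cm.one_left : Cm R 1 a n := by unfold Cm; simpa using Eq'.refl
lemma Cm.mul_left (h : Cm R b a n) (h' : Cm R c a m) : Cm R (b * c) a (n + m) :=
  (h.symm.mul_right h'.symm).symm
lemma Cm.inv_left (h : Cm R b a n) : Cm R b⁻¹ a n := h.symm.inv_right.symm
lemma Cm.cj (h : Cm R a b n) (f : G) : Cm R (f * a * f⁻¹) (f * b * f⁻¹) n := by
  have := Eq'.cj h f
  unfold Cm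
  convert this using 1
  group
lemma Cm.cj' {f : G} (h : Cm R (f * a * f⁻¹) (f * b * f⁻¹) n) : Cm R a b n := by
  have := Cm.cj h f⁻¹
  convert this using 1 <;> group
lemma Cm.congr_right (h : Eq' R b c m) (h' : Cm R a c n) : Cm R a b (n + 2 * m) := by
  have := ((Eq'.cj h a).trans h').trans h.symm
  exact Eq'.mono this (by omega)
lemma Cm.congr_left (h : Eq' R b c m) (h' : Cm R c a n) : Cm R b a (n + 2 * m) :=
  (h'.symm.congr_right h).symm

lemma Cm.of_prLe (h : PrLe Z w n) {B : ℕ} (hZ : ∀ z ∈ Z, Cm R z b B) : Cm R w b (n * B) := by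
  obtain ⟨l, h1, h2, rfl⟩ := h
  have : Cm R l.prod b (l.length * B) := by
    clear h1
    induction l with
    | nil => simpa using Cm.one_left
    | cons a l ih =>
      rw [List.prod_cons]
      have h3 : Cm R a b B := by
        rcases h2 a (by simp) with h | h
        · exact hZ _ h
        · simpa using (hZ _ h).inv_left
      exact (h3.mul_left (ih fun x hx => h2 x (by simp [hx]))).mono (by simp; nlinarith)
  exact this.mono (Nat.mul_le_mul_right _ h1)

/-! signed lists -/
variable {J : Type*}

def sv (g : J → G) (p : J × Bool) : G := if p.2 then g p.1 else (g p.1)⁻¹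
def lprod (g : J → G) (L : List (J × Bool)) : G := (L.map (sv g)).prod
noncomputable def sg (b : Bool) : ℤ := if b then 1 else -1
noncomputable def lsum (L : List (J × Bool)) : J →₀ ℤ := (L.map fun p => Finsupp.single p.1 (sg p.2)).sum
def linv (L : List (J × Bool)) : List (J × Bool) := (L.map fun p => (p.1, !p.2)).reverse

lemma sv_not (g : J → G) (j : J) (b : Bool) : sv g (j, !b) = (sv g (j, b))⁻¹ := by
  cases b <;> simp [sv]

@[simp] lemma lprod_nil (g : J → G) : lprod g [] = 1 := rfl
@[simp] lemma lprod_cons (g : J → G) (p L) : lprod g (p :: L) = sv g p * lprod g L := by simp [lprod]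
@[simp] lemma lprod_append (g : J → G) (L L') : lprod g (L ++ L') = lprod g L * lprod g L' := by simp [lprod]
@[simp] lemma lsum_nil : lsum ([] : List (J × Bool)) = 0 := rfl
@[simp] lemma lsum_cons (p : J × Bool) (L) : lsum (p :: L) = Finsupp.single p.1 (sg p.2) + lsum L := by simp [lsum]
@[simp] lemma lsum_append (L L' : List (J × Bool)) : lsum (L ++ L') = lsum L + lsum L' := by simp [lsum]
@[simp] lemma lprod_linv (g : J → G) (L) : lprod g (linv L) = (lprod g L)⁻¹ := by
  induction L with
  | nil => simp [linv]
  | cons p L ih =>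
    have : linv (p :: L) = linv L ++ [(p.1, !p.2)] := by simp [linv]
    rw [this, lprod_append, ih]
    simp [sv_not]
@[simp] lemma lsum_linv (L : List (J × Bool)) : lsum (linv L) = - lsum L := by
  induction L with
  | nil => simp [linv]
  | cons p L ih =>
    have : linv (p :: L) = linv L ++ [(p.1, !p.2)] := by simp [linv]
    rw [this, lsum_append, ih]
    obtain ⟨j, b⟩ := p
    cases b <;> simp [sg, Finsupp.single_neg, add_comm]
@[simp] lemma length_linv (L : List (J × Bool)) : (linv L).length = L.length := by simp [linv]
lemma mem_linv {L : List (J × Bool)} {p} (h : p ∈ linv L) : ∃ p' ∈ L, p'.1 = p.1 := by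
  simp only [linv, List.mem_reverse, List.mem_map] at h
  obtain ⟨p', h1, rfl⟩ := h
  exact ⟨p', h1, rfl⟩

lemma lsum_sign (L : List (J × Bool)) (j : J) (b : Bool) (h : (j, !b) ∉ L) :
    0 ≤ sg b * lsum L j := by
  classical
  induction L with
  | nil => simp
  | cons p L ih =>
    have ih := ih (fun h' => h (by simp [h']))
    obtain ⟨i, b'⟩ := p
    simp only [lsum_cons, Finsupp.add_apply, mul_add]
    by_cases hij : i = j
    · subst hij
      have : b' = b := by
        by_contra hb
        apply h
        have : b' = !b := by cases b <;> cases b' <;> simp_all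
        simp [this]
      subst this
      simp only [Finsupp.single_eq_same]
      have : sg b' * sg b' = 1 := by cases b' <;> simp [sg]
      omega
    · rw [Finsupp.single_eq_of_ne (by tauto)]
      simpa using ih

lemma Cm.lprod_right (g : J → G) (L : List (J × Bool)) {B : ℕ}
    (h : ∀ p ∈ L, Cm R a (g p.1) B) : Cm R a (lprod g L) (L.length * B) := by
  induction L with
  | nil => simpa using Cm.one_right
  | cons p L ih =>
    rw [lprod_cons]
    have h3 : Cm R a (sv g p) B := by
      unfold sv
      split
      · exact h p (by simp)
      · exact (h p (by simp)).inv_right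
    exact (h3.mul_right (ih fun x hx => h x (by simp [hx]))).mono (by simp; nlinarith)

lemma abel (g : J → G) {B : ℕ} : ∀ (n : ℕ) (L : List (J × Bool)), L.length ≤ n → lsum L = 0 →
    (∀ p ∈ L, ∀ p' ∈ L, Cm R (g p.1) (g p'.1) B) → Ar R (lprod g L) (n * n * B) := by
  intro n
  induction n using Nat.strong_induction_on with
  | _ n ih =>
  intro L hL hs hc
  rcases L with _ | ⟨⟨j, b⟩, L⟩
  · simpa using PrLe.one
  · have hmem : (j, !b) ∈ L := by
      by_contra hno
      have h1 := lsum_sign L j b hno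
      have h2 : lsum ((j, b) :: L) j = 0 := by rw [hs]; rfl
      simp only [lsum_cons, Finsupp.add_apply, Finsupp.single_eq_same] at h2
      have h3 : lsum L j = - sg b := by omega
      rw [h3] at h1
      cases b <;> simp [sg] at h1
    obtain ⟨L1, L2, rfl⟩ := List.append_of_mem hmem
    simp only [List.length_cons, List.length_append] at hL
    have e1 : lsum (L1 ++ L2) = 0 := by
      rw [← hs]
      cases b <;> simp [sg, Finsupp.single_neg]
      · abel
      · abel
    have h1 := ih (n - 2) (by omega) (L1 ++ L2) (by simp; omega) e1
      (fun p hp p' hp' => hc p (by simp at hp ⊢; tauto) p' (by simp at hp' ⊢; tauto))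
    have h2 : Cm R (g j) (lprod g L1) (L1.length * B) :=
      Cm.lprod_right g L1 fun p hp => hc (j, b) (by simp) p (by simp [hp])
    have h3 : Cm R (sv g (j, b)) (lprod g L1) (L1.length * B) := by
      unfold sv
      split
      · exact h2
      · exact h2.inv_left
    have h4 := PrLe.mul h3 h1
    have h5 : lprod g ((j, b) :: (L1 ++ (j, !b) :: L2)) =
        sv g (j, b) * lprod g L1 * (sv g (j, b))⁻¹ * (lprod g L1)⁻¹ * lprod g (L1 ++ L2) := by
      simp [sv_not, mul_assoc]
    rw [h5]
    refine h4.mono ?_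
    have : L1.length ≤ n - 2 := by omega
    obtain ⟨m, rfl⟩ : ∃ m, n = m + 2 := ⟨n - 2, by omega⟩
    simp at this ⊢
    nlinarith [Nat.mul_le_mul_right B this]

end
end MB

namespace MB
section
variable {F : Type*} [Group F] {R : Set F} {ι : Type*}

def cc (f s : F) : F := f * s * f⁻¹

lemma cc_mul (f g s : F) : cc (f * g) s = cc f (cc g s) := by simp [cc, mul_assoc]
lemma cc_inv (f s : F) : cc f s⁻¹ = (cc f s)⁻¹ := by simp [cc, mul_assoc]
lemma cc_one (s : F) : cc 1 s = s := by simp [cc]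
lemma Eq'.cc {a b : F} {n : ℕ} (h : Eq' R a b n) (f : F) : Eq' R (cc f a) (cc f b) n := h.cj f

def cw (y : ι → F) (L : List ι) (u : ι → ℤ) : F := (L.map fun i => y i ^ u i).prod

@[simp] lemma cw_nil (y : ι → F) (u) : cw y [] u = 1 := rfl
@[simp] lemma cw_cons (y : ι → F) (i L u) : cw y (i :: L) u = y i ^ u i * cw y L u := by simp [cw]
lemma cw_append (y : ι → F) (L L' u) : cw y (L ++ L') u = cw y L u * cw y L' u := by simp [cw]

lemma cw_congr (y : ι → F) (L : List ι) {u u' : ι → ℤ} (h : ∀ i ∈ L, u i = u' i) :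
    cw y L u = cw y L u' := by
  unfold cw
  congr 1
  apply List.map_congr_left
  intro i hi
  rw [h i hi]

lemma swap1 {a b p s : F} {N : ℕ} (h : Cm R (a⁻¹ * b⁻¹ * a * b) (cc p s) N) :
    Eq' R (cc (a * b * p) s) (cc (b * a * p) s) N := by
  have := Eq'.cj h (b * a)
  convert this using 1
  · simp [cc, mul_assoc]
  · simp [cc, mul_assoc]

lemma swapNat {a b p s : F} {N : ℕ} (n : ℕ)
    (h : ∀ m < n, Cm R (a⁻¹ * b⁻¹ * a * b) (cc (b ^ m * p) s) N) :
    Eq' R (cc (a * b ^ n * p) s) (cc (b ^ n * a * p) s) (n * N) := by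
  induction n with
  | zero => simpa using Eq'.refl
  | succ n ih =>
    have h1 := swap1 (h n (by omega))
    have h2 := (ih (fun m hm => h m (by omega))).cc b
    have h3 := h1.trans (c := cc (b ^ (n + 1) * a * p) s) (m := n * N) (by
      convert h2 using 1
      · rw [← cc_mul]; simp [mul_assoc]
      · rw [← cc_mul]; simp [mul_assoc, pow_succ'])
    have h4 : a * b ^ (n + 1) * p = a * b * (b ^ n * p) := by simp [mul_assoc, pow_succ']
    rw [h4]
    exact h3.mono (by nlinarith)

variable [DecidableEq ι]

lemma T1 (y : ι → F) (S : Set F)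
    (hS : ∀ i j, ∀ ε δ : ℤ, (ε = 1 ∨ ε = -1) → (δ = 1 ∨ δ = -1) →
      (y i ^ ε)⁻¹ * (y j ^ δ)⁻¹ * y i ^ ε * y j ^ δ ∈ S)
    (s : F) {N : ℕ} (i : ι) (ε : ℤ) (hε : ε = 1 ∨ ε = -1) :
    ∀ (L : List ι), L.Nodup → i ∈ L → ∀ u : ι → ℤ,
    (∀ u' : ι → ℤ, (∀ z, |u' z| ≤ |u z|) → ∀ z ∈ S, Cm R z (cc (cw y L u') s) N) →
    Eq' R (cc (y i ^ ε * cw y L u) s) (cc (cw y L (u + Pi.single i ε)) s)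
      ((L.map fun z => (u z).natAbs).sum * N) := by
  intro L
  induction L with
  | nil => simp
  | cons j L ih =>
    intro hnd hi u H
    rw [List.nodup_cons] at hnd
    by_cases hij : i = j
    · subst hij
      have : cw y (i :: L) (u + Pi.single i ε) = y i ^ ε * cw y (i :: L) u := by
        rw [cw_cons, cw_cons, ← mul_assoc, ← zpow_add]
        congr 1
        · simp [add_comm]
        · apply cw_congr
          intro z hz
          have : z ≠ i := fun h => hnd.1 (h ▸ hz)
          simp [this]
      rw [this]
      exact Eq'.refl
    · have hiL : i ∈ L := by simpa [hij] using hi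
      have h1 : ∀ u' : ι → ℤ, (∀ z, |u' z| ≤ |u z|) → ∀ z ∈ S, Cm R z (cc (cw y L u') s) N := by
        intro u' hu' z hz
        have := H (Function.update u' j 0) (by
          intro z
          by_cases hz : z = j
          · subst hz; simp
          · simp [hz, hu' z]) z hz
        rw [cw_cons] at this
        rw [cw_congr y L (u' := u')] at this
        · simpa using this
        · intro z hz
          have : z ≠ j := fun h => hnd.1 (h ▸ hz)
          simp [this]
      have h2 := (ih hnd.2 hiL u h1).cc (y j ^ u j)
      have hpow : ∀ m : ℤ, |m| ≤ |u j| → ∀ z ∈ S, Cm R z (cc (y j ^ m * cw y L u) s) N := by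
        intro m hm z hz
        have := H (Function.update u j m) (by
          intro z
          by_cases hz : z = j
          · subst hz; simpa using hm
          · simp [hz]) z hz
        rw [cw_cons] at this
        rw [cw_congr y L (u' := u)] at this
        · simpa using this
        · intro z hz
          have : z ≠ j := fun h => hnd.1 (h ▸ hz)
          simp [this]
      have h3 : Eq' R (cc (y i ^ ε * y j ^ u j * cw y L u) s)
          (cc (y j ^ u j * y i ^ ε * cw y L u) s) ((u j).natAbs * N) := by
        obtain ⟨n, hn | hn⟩ := Int.eq_nat_or_neg (u j)
        · have := swapNat (R := R) (a := y i ^ ε) (b := y j ^ (1 : ℤ)) (p := cw y L u) (s := s) (N := N) n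
            (fun m hm => by
              have := hpow m (by rw [hn]; simp; omega) _ (hS i j ε 1 hε (Or.inl rfl))
              simpa using this)
          rw [hn]
          simpa using this
        · have := swapNat (R := R) (a := y i ^ ε) (b := y j ^ (-1 : ℤ)) (p := cw y L u) (s := s) (N := N) n
            (fun m hm => by
              have := hpow (-m) (by rw [hn]; simp; omega) _ (hS i j ε (-1) hε (Or.inr rfl))
              simpa using this)
          rw [hn]
          simpa using this
      have h4 := h3.trans (c := cc (cw y (j :: L) (u + Pi.single i ε)) s)
        (m := (L.map fun z => (u z).natAbs).sum * N) (by
          convert h2 using 1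
          · rw [← cc_mul, mul_assoc]
          · rw [← cc_mul, cw_cons]
            have : j ≠ i := fun h => hij h.symm
            simp [this])
      rw [cw_cons, ← mul_assoc]
      exact h4.mono (by simp [add_mul])

end

section
variable {ι : Type*} [Fintype ι]
def nsq (u : ι → ℤ) : ℤ := ∑ i, u i ^ 2
def dt (u q : ι → ℤ) : ℤ := ∑ i, u i * q i
def btw (p u : ι → ℤ) : Prop := ∀ z, (0 ≤ p z ∧ p z ≤ u z) ∨ (u z ≤ p z ∧ p z ≤ 0)

lemma sum_natAbs_le (L : List ι) (hL : L.Nodup) (u : ι → ℤ) :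
    (((L.map fun z => (u z).natAbs).sum : ℕ) : ℤ) ≤ nsq u := by
  classical
  have h1 : (L.map fun z => (u z).natAbs).sum = ∑ z ∈ L.toFinset, (u z).natAbs := by
    rw [List.sum_toFinset _ hL]
  rw [h1]
  push_cast
  unfold nsq
  refine (Finset.sum_le_univ_sum_of_nonneg (fun _ => abs_nonneg _)).trans ?_
  apply Finset.sum_le_sum
  intro i _
  have : |u i| ≤ u i ^ 2 := by
    rw [← sq_abs]
    rcases (abs_nonneg (u i)).eq_or_lt with h | h
    · rw [← h]; simp
    · nlinarith
  simpa using this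

lemma nsq_mono {u u' : ι → ℤ} (h : ∀ z, |u' z| ≤ |u z|) : nsq u' ≤ nsq u :=
  Finset.sum_le_sum fun i _ => sq_le_sq.2 (h i)

lemma geo {u p q : ι → ℤ} (h : btw p u) : nsq (q + p) ≤ nsq u + 2 * dt u q + 2 * nsq q := by
  unfold nsq dt
  rw [Finset.mul_sum, Finset.mul_sum, ← Finset.sum_add_distrib, ← Finset.sum_add_distrib]
  apply Finset.sum_le_sum
  intro i _
  simp only [Pi.add_apply]
  have hpos : 0 ≤ p i * (u i - p i) := by
    rcases h i with ⟨h1, h2⟩ | ⟨h1, h2⟩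
    · exact mul_nonneg h1 (by omega)
    · exact mul_nonneg_of_nonpos_of_nonpos h2 (by omega)
  nlinarith [sq_nonneg (u i - p i + q i)]
end

section
variable {F : Type*} [Group F] {R : Set F} {ι : Type*} [Fintype ι] [DecidableEq ι]

def CommB (R : Set F) (y : ι → F) (L : List ι) (S : Set F) (ρ : ℝ) (N : ℕ) : Prop :=
  ∀ u : ι → ℤ, (nsq u : ℝ) ≤ ρ → ∀ s ∈ S, ∀ s' ∈ S, Cm R s (cc (cw y L u) s') N

structure Setup (y : ι → F) (L : List ι) (S : Set F) : Prop where
  hS : ∀ i j, ∀ ε δ : ℤ, (ε = 1 ∨ ε = -1) → (δ = 1 ∨ δ = -1) →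
      (y i ^ ε)⁻¹ * (y j ^ δ)⁻¹ * y i ^ ε * y j ^ δ ∈ S
  nd : L.Nodup
  full : ∀ i, i ∈ L

variable {y : ι → F} {L : List ι} {S : Set F} {ρ : ℝ} {N D : ℕ}

lemma T1' (hs : Setup y L S) (hc : CommB R y L S ρ N) (hD : ρ ≤ D) {s : F} (hsS : s ∈ S)
    (i : ι) (ε : ℤ) (hε : ε = 1 ∨ ε = -1) (u : ι → ℤ) (hu : (nsq u : ℝ) ≤ ρ) :
    Eq' R (cc (y i ^ ε * cw y L u) s) (cc (cw y L (u + Pi.single i ε)) s) (D * N) := by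
  refine (T1 (R := R) (N := N) y S hs.hS s i ε hε L hs.nd (hs.full i) u ?_).mono ?_
  · intro u' hu' z hz
    refine hc u' (le_trans ?_ hu) z hz s hsS
    exact_mod_cast nsq_mono hu'
  · apply Nat.mul_le_mul_right
    have h1 := sum_natAbs_le L hs.nd u
    have h2 : (nsq u : ℝ) ≤ D := hu.trans hD
    have h3 : nsq u ≤ (D : ℤ) := by exact_mod_cast h2
    exact_mod_cast h1.trans h3

lemma T3pow (hs : Setup y L S) (hc : CommB R y L S ρ N) (hD : ρ ≤ D) {s : F} (hsS : s ∈ S)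
    (i : ι) (j : ℤ) (v : ι → ℤ) (hv : ∀ j' : ℤ, (0 ≤ j' ∧ j' ≤ j) ∨ (j ≤ j' ∧ j' ≤ 0) →
      (nsq (v + Pi.single i j') : ℝ) ≤ ρ) :
    Eq' R (cc (y i ^ j * cw y L v) s) (cc (cw y L (v + Pi.single i j)) s) (j.natAbs * (D * N)) := by
  have key : ∀ (ε : ℤ) (hε : ε = 1 ∨ ε = -1) (n : ℕ),
      (∀ m : ℕ, m < n → (nsq (v + Pi.single i (ε * m)) : ℝ) ≤ ρ) →
      Eq' R (cc (y i ^ (ε * n) * cw y L v) s) (cc (cw y L (v + Pi.single i (ε * n))) s)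
        (n * (D * N)) := by
    intro ε hε n
    induction n with
    | zero => intro _; simpa using Eq'.refl
    | succ n ih =>
      intro h
      have h1 := (ih fun m hm => h m (by omega)).cc (y i ^ ε)
      have h2 := T1' hs hc hD hsS i ε hε _ (h n (by omega))
      rw [← cc_mul, ← cc_mul] at h1
      have h3 := h1.trans h2
      rw [add_assoc v, ← Pi.single_add, ← mul_assoc, ← zpow_add] at h3
      have e1 : ε * ((n + 1 : ℕ) : ℤ) = ε + ε * n := by push_cast; ring
      rw [e1]
      rw [add_comm (ε * (n:ℤ)) ε] at h3
      exact h3.mono (by nlinarith)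
  obtain ⟨n, hn | hn⟩ := Int.eq_nat_or_neg j
  · have := key 1 (Or.inl rfl) n (fun m hm => hv _ (Or.inl (by omega)))
    rw [hn]
    simpa using this
  · have := key (-1) (Or.inr rfl) n (fun m hm => hv _ (Or.inr (by omega)))
    rw [hn]
    simpa using this

def rs (L : List ι) (u : ι → ℤ) : ι → ℤ := fun z => if z ∈ L then u z else 0

lemma rs_full (hs : Setup y L S) (u : ι → ℤ) : rs L u = u := by
  funext z; simp [rs, hs.full z]

lemma rs_cons {i : ι} {L' : List ι} (h : i ∉ L') (u : ι → ℤ) :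
    rs (i :: L') u = rs L' u + Pi.single i (u i) := by
  funext z
  by_cases hz : z = i
  · subst hz; simp [rs, h]
  · simp [rs, hz]

lemma T3 (hs : Setup y L S) (hc : CommB R y L S ρ N) (hD : ρ ≤ D) {s : F} (hsS : s ∈ S)
    (u v : ι → ℤ) (h : ∀ p, btw p u → (nsq (v + p) : ℝ) ≤ ρ) :
    ∀ L' : List ι, L'.Nodup →
    Eq' R (cc (cw y L' u * cw y L v) s) (cc (cw y L (v + rs L' u)) s)
      ((L'.map fun z => (u z).natAbs).sum * (D * N)) := by
  intro L'
  induction L' with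
  | nil =>
    intro _
    have : rs [] u = 0 := by funext z; simp [rs]
    simpa [this] using Eq'.refl
  | cons i L' ih =>
    intro hnd
    rw [List.nodup_cons] at hnd
    have h1 := (ih hnd.2).cc (y i ^ u i)
    have h2 := T3pow hs hc hD hsS i (u i) (v + rs L' u) (by
      intro j' hj'
      rw [add_assoc]
      apply h
      intro z
      by_cases hz : z = i
      · subst hz; simpa [rs, hnd.1] using hj'
      · by_cases hz' : z ∈ L'
        · simp [rs, hz, hz']
          omega
        · simp [rs, hz, hz']
          omega)
    rw [← cc_mul, ← cc_mul] at h1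
    have h3 := h1.trans h2
    rw [cw_cons, rs_cons hnd.1, mul_assoc, ← add_assoc]
    exact h3.mono (by simp; nlinarith)

lemma T3inv (hs : Setup y L S) (hc : CommB R y L S ρ N) (hD : ρ ≤ D) {s : F} (hsS : s ∈ S)
    (u : ι → ℤ) :
    ∀ L' : List ι, L'.Nodup → ∀ v : ι → ℤ, (∀ p, btw p (-rs L' u) → (nsq (v + p) : ℝ) ≤ ρ) →
    Eq' R (cc ((cw y L' u)⁻¹ * cw y L v) s) (cc (cw y L (v - rs L' u)) s)
      ((L'.map fun z => (u z).natAbs).sum * (D * N)) := by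
  intro L'
  induction L' with
  | nil =>
    intro _ v _
    have : rs [] u = 0 := by funext z; simp [rs]
    simpa [this] using Eq'.refl
  | cons i L' ih =>
    intro hnd v h
    rw [List.nodup_cons] at hnd
    have h2 := T3pow hs hc hD hsS i (- u i) v (by
      intro j' hj'
      apply h
      intro z
      by_cases hz : z = i
      · subst hz; simpa [rs] using hj'
      · simp [rs, hz]
        split <;> omega)
    have h1 := ih hnd.2 (v + Pi.single i (- u i)) (by
      intro p hp
      rw [add_assoc]
      apply h
      intro z
      have := hp z
      by_cases hz : z = i
      · subst hz
        simp [rs, hnd.1] at this ⊢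
        omega
      · simpa [rs, hz] using this)
    have h2' := h2.cc (cw y L' u)⁻¹
    rw [← cc_mul, ← cc_mul] at h2'
    have h3 := h2'.trans h1
    rw [cw_cons, rs_cons hnd.1]
    have e1 : v - (rs L' u + Pi.single i (u i)) = v + Pi.single i (-u i) - rs L' u := by
      rw [Pi.single_neg]; abel
    rw [e1]
    have e2 : (y i ^ u i * cw y L' u)⁻¹ * cw y L v = (cw y L' u)⁻¹ * (y i ^ (-u i) * cw y L v) := by
      simp [mul_assoc]
    rw [e2]
    exact h3.mono (by simp; nlinarith)

end
end MB

namespace MB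
set_option linter.unusedSectionVars false
section
variable {F : Type*} [Group F] {R : Set F} {ι : Type*} [Fintype ι] [DecidableEq ι]

def GPset (y : ι → F) (L : List ι) (S : Set F) (Dq : ℤ) (ε : ℝ) (v : ι → ℝ) : Set F :=
  {a | ∃ s' ∈ S, ∃ q : ι → ℤ, nsq q ≤ Dq ∧ ε ≤ ∑ z, v z * q z ∧ a = cc (cw y L q) s'}

def GP (R : Set F) (y : ι → F) (L : List ι) (S : Set F) (Dq : ℤ) (ε : ℝ) (K0 : ℕ)
    (v : ι → ℝ) : Prop :=
  ∀ s ∈ S, ∃ w, PrLe (GPset y L S Dq ε v) w K0 ∧ Eq' R s w K0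

variable {y : ι → F} {L : List ι} {S : Set F} {ρ : ℝ} {N D : ℕ}

lemma dt_cast (u q : ι → ℤ) (r : ℝ) (hr : 0 < r) :
    (dt u q : ℝ) = r * ∑ z, ((u z : ℝ) / r) * q z := by
  unfold dt
  push_cast
  rw [Finset.mul_sum]
  apply Finset.sum_congr rfl
  intro z _
  field_simp

lemma nsq_neg (u : ι → ℤ) : nsq (-u) = nsq u := by simp [nsq]

lemma comm_step (hs : Setup y L S) (hc : CommB R y L S ρ N) (hD : ρ ≤ D)
    {Dq : ℤ} {ε : ℝ} {K0 : ℕ} (u : ι → ℤ) (r : ℝ) (hr : 0 < r) (hu : (nsq u : ℝ) = r ^ 2)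
    (hg : GP R y L S Dq ε K0 (fun z => u z / r) ∨ GP R y L S Dq ε K0 (fun z => -(u z / r)))
    (hρ : r ^ 2 - 2 * ε * r + 2 * Dq ≤ ρ) (hD' : r ^ 2 ≤ D) {s s' : F} (hsS : s ∈ S)
    (hsS' : s' ∈ S) :
    Cm R s (cc (cw y L u) s') (K0 * (N + 2 * (D * (D * N))) + 2 * K0) := by
  have hsum : (L.map fun z => (u z).natAbs).sum ≤ D := by
    have h1 := sum_natAbs_le L hs.nd u
    have h2 : (nsq u : ℝ) ≤ D := hu ▸ hD'
    have h3 : nsq u ≤ (D : ℤ) := by exact_mod_cast h2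
    exact_mod_cast h1.trans h3
  rcases hg with hg | hg
  · obtain ⟨w, hw, hew⟩ := hg s hsS
    refine Cm.congr_left hew ?_
    refine Cm.of_prLe hw ?_
    rintro z ⟨s'', hs'', q, hq, hq', rfl⟩
    apply Cm.cj' (f := (cw y L u)⁻¹)
    have hgeo : ∀ p, btw p (-u) → (nsq (q + p) : ℝ) ≤ ρ := by
      intro p hp
      have h1 : (nsq (q + p) : ℝ) ≤ nsq (-u) + 2 * dt (-u) q + 2 * nsq q := by
        exact_mod_cast geo hp
      have h2 : (dt (-u) q : ℝ) = - dt u q := by unfold dt; simp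
      rw [nsq_neg, hu, h2, dt_cast u q r hr] at h1
      have h3 : (nsq q : ℝ) ≤ Dq := by exact_mod_cast hq
      nlinarith [mul_le_mul_of_nonneg_left hq' hr.le]
    have h1 := T3inv hs hc hD hs'' u L hs.nd q (by rw [rs_full hs]; exact hgeo)
    rw [rs_full hs] at h1
    have h2 := hc (q - u) (by
      have := hgeo (-u) (by intro z; simp; omega)
      rwa [← sub_eq_add_neg] at this) s' hsS' s'' hs''
    have h3 := Cm.congr_left h1 h2.symm
    have h4 : Cm R (cc ((cw y L u)⁻¹ * cw y L q) s'') s' (N + 2 * (D * (D * N))) :=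
      h3.mono (by gcongr)
    convert h4 using 1
    · simp [cc, mul_assoc]
    · simp [cc, mul_assoc]
  · obtain ⟨w, hw, hew⟩ := hg s' hsS'
    refine Cm.congr_right (hew.cc _) ?_
    have hw' := hw.conj (cw y L u) (Z' := (fun a => cc (cw y L u) a) '' GPset y L S Dq ε (fun z => -(u z / r)))
      (fun a ha => ⟨a, ha, rfl⟩)
    apply Cm.symm
    refine Cm.of_prLe hw' ?_
    rintro z ⟨_, ⟨s'', hs'', q, hq, hq', rfl⟩, rfl⟩
    have hgeo : ∀ p, btw p u → (nsq (q + p) : ℝ) ≤ ρ := by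
      intro p hp
      have h1 : (nsq (q + p) : ℝ) ≤ nsq u + 2 * dt u q + 2 * nsq q := by
        exact_mod_cast geo hp
      rw [hu, dt_cast u q r hr] at h1
      have h3 : (nsq q : ℝ) ≤ Dq := by exact_mod_cast hq
      have h4 : ∑ z, -((u z : ℝ) / r) * q z = - ∑ z, ((u z : ℝ) / r) * q z := by
        simp
      rw [h4] at hq'
      nlinarith [mul_le_mul_of_nonneg_left hq' hr.le]
    have h1 := T3 hs hc hD hs'' u q hgeo L hs.nd
    rw [rs_full hs] at h1
    have h2 := hc (q + u) (hgeo u (by intro z; omega)) s hsS s'' hs''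
    have h3 := Cm.congr_left h1 h2.symm
    have h4 : Cm R (cc (cw y L u * cw y L q) s'') s (N + 2 * (D * (D * N))) :=
      h3.mono (by gcongr)
    rw [cc_mul] at h4
    exact h4

lemma finite_nsq (ρ : ℝ) : {u : ι → ℤ | (nsq u : ℝ) ≤ ρ}.Finite := by
  refine Set.Finite.subset (Set.finite_Icc (fun _ => -⌈ρ⌉) (fun _ => ⌈ρ⌉)) ?_
  intro u hu
  have h1 : nsq u ≤ ⌈ρ⌉ := by
    have : (nsq u : ℝ) ≤ (⌈ρ⌉ : ℝ) := le_trans hu (Int.le_ceil ρ)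
    exact_mod_cast this
  have h2 : ∀ i, u i ^ 2 ≤ nsq u := fun i =>
    Finset.single_le_sum (f := fun i => u i ^ 2) (fun _ _ => sq_nonneg _) (Finset.mem_univ i)
  constructor <;> intro i <;> have := h2 i <;> simp only <;> nlinarith

lemma commB_rec (hs : Setup y L S) (hSf : S.Finite)
    (hcomm : ∀ s ∈ S, ∀ s' ∈ S, ∀ f, ∃ n, Cm R s (cc f s') n)
    {Dq : ℤ} (hDq : 0 ≤ Dq) {ε : ℝ} (hε : 0 < ε) {K0 : ℕ}
    (hg : ∀ v : ι → ℝ, ∑ z, v z ^ 2 = 1 → GP R y L S Dq ε K0 v ∨ GP R y L S Dq ε K0 (fun z => - v z)) :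
    ∃ C : ℕ, ∃ r0 : ℝ, 0 < r0 ∧ ∀ j : ℕ, CommB R y L S ((r0 + j * (ε / 2)) ^ 2) (C ^ ((j + 1) ^ 2)) := by
  set r0 : ℝ := 1 + ε + 2 * Dq / ε with hr0
  have hDqR : (0 : ℝ) ≤ Dq := by exact_mod_cast hDq
  have hdiv : 0 ≤ 2 * (Dq : ℝ) / ε := by positivity
  have hr0p : 0 < r0 := by positivity
  have hbase : ∃ N0 : ℕ, CommB R y L S (r0 ^ 2) N0 := by
    have : Finite {u : ι → ℤ | (nsq u : ℝ) ≤ r0 ^ 2} := finite_nsq _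
    have := hSf.to_subtype
    choose f hf using fun x : {u : ι → ℤ | (nsq u : ℝ) ≤ r0 ^ 2} × S × S =>
      hcomm x.2.1 x.2.1.2 x.2.2 x.2.2.2 (cw y L x.1.1)
    obtain ⟨M, hM⟩ := Finite.exists_le f
    exact ⟨M, fun u hu s hs s' hs' => (hf (⟨u, hu⟩, ⟨s, hs⟩, ⟨s', hs'⟩)).mono (hM _)⟩
  obtain ⟨N0, hN0⟩ := hbase
  obtain ⟨c, hc⟩ := exists_nat_ge ((r0 + ε) ^ 2)
  set K' : ℕ := K0 * (3 + 2 * c ^ 2) with hK'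
  set C : ℕ := 16 * K' + N0 + 1 with hC
  refine ⟨C, r0, hr0p, ?_⟩
  intro j
  induction j with
  | zero =>
    have e : (r0 + ((0 : ℕ) : ℝ) * (ε / 2)) ^ 2 = r0 ^ 2 := by simp
    rw [e]
    intro u hu s hs s' hs'
    refine (hN0 u hu s hs s' hs').mono ?_
    simp [hC]; omega
  | succ j ih =>
    intro u hu s hs1 s' hs1'
    by_cases hsmall : (nsq u : ℝ) ≤ (r0 + j * (ε / 2)) ^ 2
    · refine (ih u hsmall s hs1 s' hs1').mono ?_
      apply Nat.pow_le_pow_right (by omega)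
      gcongr; omega
    push Not at hsmall
    have hpos : 0 < (nsq u : ℝ) := lt_of_le_of_lt (sq_nonneg _) hsmall
    set r := Real.sqrt (nsq u) with hr
    have hrp : 0 < r := Real.sqrt_pos.2 hpos
    have hr2 : (nsq u : ℝ) = r ^ 2 := (Real.sq_sqrt hpos.le).symm
    have hjn : (0 : ℝ) ≤ j := Nat.cast_nonneg j
    have hje : (0 : ℝ) ≤ j * (ε / 2) := by positivity
    rw [hr2] at hu hsmall
    have h1 : r0 + j * (ε / 2) < r := lt_of_pow_lt_pow_left₀ 2 hrp.le hsmall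
    have h2 : r ≤ r0 + (j + 1 : ℕ) * (ε / 2) := by
      refine le_of_sq_le_sq hu (by positivity)
    push_cast at h2
    have hD1 : r ^ 2 ≤ ((c * (j + 1) ^ 2 : ℕ) : ℝ) := by
      push_cast
      have : r ≤ (r0 + ε) * (j + 1) := by nlinarith [mul_nonneg hjn hr0p.le]
      calc r ^ 2 ≤ ((r0 + ε) * (j + 1)) ^ 2 := by gcongr
        _ = (r0 + ε) ^ 2 * (j + 1) ^ 2 := by ring
        _ ≤ _ := by gcongr
    have h3 : 2 * (Dq : ℝ) ≤ ε * r := by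
      have : 2 * (Dq : ℝ) / ε ≤ r := by linarith
      rw [div_le_iff₀ hε] at this
      linarith
    have h4 := comm_step (N := C ^ ((j + 1) ^ 2)) hs ih (D := c * (j + 1) ^ 2) (hsmall.le.trans hD1) (Dq := Dq) (ε := ε) (K0 := K0) u r hrp hr2
      (hg _ (by
        simp only [div_pow]
        rw [← Finset.sum_div]
        rw [div_eq_one_iff_eq (by positivity)]
        rw [← hr2]; unfold nsq; push_cast; rfl))
      (by
        have : (r - ε / 2) ^ 2 ≤ (r0 + j * (ε / 2)) ^ 2 := by
          apply pow_le_pow_left₀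
          · linarith
          · linarith
        nlinarith [sq_nonneg ε]) hD1 hs1 hs1'
    refine h4.mono ?_
    set N := C ^ ((j + 1) ^ 2) with hN
    have hNp : 1 ≤ N := Nat.one_le_pow _ _ (by omega)
    have hj1 : 1 ≤ (j + 1) ^ 4 := Nat.one_le_pow _ _ (by omega)
    have h5 : K0 * (N + 2 * (c * (j + 1) ^ 2 * (c * (j + 1) ^ 2 * N))) + 2 * K0 ≤ N * (K' * (j + 1) ^ 4) := by
      have e : N * (K' * (j + 1) ^ 4) = K0 * (N * (j + 1) ^ 4 + 2 * (c * (j + 1) ^ 2 * (c * (j + 1) ^ 2 * N))) + 2 * K0 * (N * (j+1)^4) := by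
        rw [hK']; ring
      rw [e]
      have : 1 ≤ N * (j + 1) ^ 4 := Nat.one_le_iff_ne_zero.2 (by positivity)
      have t1 : N ≤ N * (j + 1) ^ 4 := Nat.le_mul_of_pos_right _ (by positivity)
      have t2 : 2 * K0 * 1 ≤ 2 * K0 * (N * (j + 1) ^ 4) := Nat.mul_le_mul_left _ this
      have t3 := Nat.mul_le_mul_left K0 (Nat.add_le_add_right t1 (2 * (c * (j + 1) ^ 2 * (c * (j + 1) ^ 2 * N))))
      omega
    refine h5.trans ?_
    have h6 : (j + 1) ^ 4 ≤ 16 ^ (j + 1) := by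
      have := (Nat.lt_two_pow_self (n := j + 1)).le
      calc (j + 1) ^ 4 ≤ (2 ^ (j + 1)) ^ 4 := Nat.pow_le_pow_left this 4
        _ = 16 ^ (j + 1) := by rw [← pow_mul, mul_comm, pow_mul]; norm_num
    have h7 : K' * (j + 1) ^ 4 ≤ C ^ (j + 1) := by
      calc K' * (j + 1) ^ 4 ≤ K' * 16 ^ (j + 1) := by gcongr
        _ ≤ K' ^ (j + 1) * 16 ^ (j + 1) := by
          gcongr
          exact Nat.le_self_pow (by omega) _
        _ = (K' * 16) ^ (j + 1) := (mul_pow _ _ _).symm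
        _ ≤ _ := by apply Nat.pow_le_pow_left; omega
    calc N * (K' * (j + 1) ^ 4) ≤ C ^ ((j + 1) ^ 2) * C ^ (j + 1) := by gcongr
      _ = C ^ ((j + 1) ^ 2 + (j + 1)) := (pow_add _ _ _).symm
      _ ≤ C ^ ((j + 1 + 1) ^ 2) := by
        apply Nat.pow_le_pow_right (by omega)
        nlinarith

end

section
variable {X : Type*} [Fintype X] [DecidableEq X] {R : Set (FreeGroup X)} {L : List X} {S : Set (FreeGroup X)}

noncomputable def wvec : List (X × Bool) → (X → ℤ)
  | [] => 0
  | p :: l => wvec l + Pi.single p.1 (sg p.2)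

lemma mk_cons (p : X × Bool) (l : List (X × Bool)) :
    FreeGroup.mk (p :: l) = FreeGroup.of p.1 ^ (sg p.2) * FreeGroup.mk l := by
  obtain ⟨x, b⟩ := p
  cases b
  · simp only [sg, Bool.false_eq_true, if_false, zpow_neg, zpow_one]
    simp [FreeGroup.of, FreeGroup.invRev]
  · simp [sg, FreeGroup.of]

lemma wvec_abs (l : List (X × Bool)) : ∑ x, |wvec l x| ≤ l.length := by
  induction l with
  | nil => simp [wvec]
  | cons p l ih =>
    have h : ∑ x, |(wvec l + (Pi.single p.1 (sg p.2) : X → ℤ)) x| ≤ ∑ x, |wvec l x| + ∑ x, |(Pi.single p.1 (sg p.2) : X → ℤ) x| := by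
      rw [← Finset.sum_add_distrib]
      exact Finset.sum_le_sum fun i _ => abs_add_le _ _
    have h2 : ∑ x, |(Pi.single p.1 (sg p.2) : X → ℤ) x| = 1 := by
      rw [Finset.sum_eq_single p.1]
      · cases h : p.2 <;> simp [sg]
      · intro b _ hb; simp [hb]
      · simp
    simp only [wvec, List.length_cons]
    push_cast
    linarith

lemma nsq_wvec (l : List (X × Bool)) : nsq (wvec l) ≤ (l.length : ℤ) ^ 2 := by
  have h1 := wvec_abs l
  have h2 : nsq (wvec l) ≤ (∑ x, |wvec l x|) ^ 2 := by
    unfold nsq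
    have := Finset.sum_sq_le_sq_sum_of_nonneg (s := Finset.univ) (f := fun x => |wvec l x|) (fun i _ => abs_nonneg _)
    simpa using this
  refine h2.trans ?_
  have : 0 ≤ ∑ x, |wvec l x| := Finset.sum_nonneg fun i _ => abs_nonneg _
  gcongr

lemma transport (hs : Setup FreeGroup.of L S) {m N : ℕ} {ρ : ℝ} (hρ : (m : ℝ) ^ 2 ≤ ρ) {D : ℕ} (hD : ρ ≤ D)
    (hc : CommB R FreeGroup.of L S ρ N) {s : FreeGroup X} (hsS : s ∈ S) :
    ∀ l : List (X × Bool), l.length ≤ m →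
      Eq' R (cc (FreeGroup.mk l) s) (cc (cw FreeGroup.of L (wvec l)) s) (l.length * (D * N)) := by
  intro l
  induction l with
  | nil =>
    intro _
    have : cw FreeGroup.of L (wvec ([] : List (X × Bool))) = 1 := by
      unfold cw
      apply List.prod_eq_one
      intro x hx
      simp only [List.mem_map] at hx
      obtain ⟨i, _, rfl⟩ := hx
      simp [wvec]
    rw [this]
    exact Eq'.refl
  | cons p l ih =>
    intro hl
    simp only [List.length_cons] at hl
    have h1 := (ih (by omega)).cc (FreeGroup.of p.1 ^ (sg p.2))
    rw [← cc_mul, ← cc_mul] at h1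
    have h2 := T1' hs hc hD hsS p.1 (sg p.2) (by cases p.2 <;> simp [sg]) (wvec l) (by
      have : (nsq (wvec l) : ℝ) ≤ (l.length : ℝ) ^ 2 := by exact_mod_cast nsq_wvec l
      refine this.trans (le_trans ?_ hρ)
      have : (l.length : ℝ) ≤ m := by exact_mod_cast (by omega : l.length ≤ m)
      gcongr)
    rw [mk_cons]
    exact (h1.trans h2).mono (by simp; nlinarith)

lemma COMM (hs : Setup FreeGroup.of L S) (hSf : S.Finite)
    (hcomm : ∀ s ∈ S, ∀ s' ∈ S, ∀ f, ∃ n, Cm R s (cc f s') n)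
    {Dq : ℤ} (hDq : 0 ≤ Dq) {ε : ℝ} (hε : 0 < ε) {K0 : ℕ}
    (hg : ∀ v : X → ℝ, ∑ z, v z ^ 2 = 1 → GP R FreeGroup.of L S Dq ε K0 v ∨ GP R FreeGroup.of L S Dq ε K0 (fun z => - v z)) :
    ∃ C : ℕ, ∀ n : ℕ, ∀ f : FreeGroup X, freeNorm f ≤ n → ∀ s ∈ S, ∀ s' ∈ S, Cm R s (cc f s') (C ^ ((n + 1) ^ 2)) := by
  obtain ⟨C, r0, hr0, hC⟩ := commB_rec hs hSf hcomm hDq hε hg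
  obtain ⟨c, hc⟩ := exists_nat_ge (2 / ε)
  obtain ⟨c2, hc2⟩ := exists_nat_ge ((r0 + c * ε) ^ 2)
  have hcp : 0 < c := by
    rcases Nat.eq_zero_or_pos c with h | h
    · subst h
      have : 0 < 2 / ε := by positivity
      simp at hc; linarith
    · exact h
  refine ⟨C ^ (c ^ 2) * (8 * (1 + 2 * c2)) + 1, ?_⟩
  intro n f hf s hs1 s' hs1'
  set ρ := (r0 + (c * n : ℕ) * (ε / 2)) ^ 2 with hρ
  have h1 : (n : ℝ) ≤ r0 + (c * n : ℕ) * (ε / 2) := by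
    push_cast
    rw [div_le_iff₀ hε] at hc
    have : (n : ℝ) * 2 ≤ n * (c * ε) := by gcongr
    nlinarith
  have hρ1 : (n : ℝ) ^ 2 ≤ ρ := by rw [hρ]; gcongr
  have hD : ρ ≤ ((c2 * (n + 1) ^ 2 : ℕ) : ℝ) := by
    push_cast
    calc ρ ≤ ((r0 + c * ε) * (n + 1)) ^ 2 := by
          rw [hρ]; push_cast
          gcongr
          have : (0 : ℝ) ≤ c * n * ε := by positivity
          have : (0 : ℝ) ≤ r0 * n := by positivity
          have : (0 : ℝ) ≤ c * ε := by positivity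
          nlinarith
      _ = (r0 + c * ε) ^ 2 * (n + 1) ^ 2 := by ring
      _ ≤ _ := by gcongr
  set l := f.toWord with hl
  have hlen : l.length ≤ n := by
    have : freeNorm f = l.length := by
      unfold freeNorm
      rw [hl]
      congr!
    omega
  have h2 := transport hs hρ1 hD (hC (c * n)) hs1' l hlen
  have h3 := hC (c * n) (wvec l) (le_trans (by
    have : (nsq (wvec l) : ℝ) ≤ (l.length : ℝ) ^ 2 := by exact_mod_cast nsq_wvec l
    refine this.trans ?_
    have : (l.length : ℝ) ≤ n := by exact_mod_cast hlen
    gcongr) hρ1) s hs1 s' hs1'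
  have h4 := Cm.congr_right h2 h3
  rw [hl, FreeGroup.mk_toWord] at h4
  refine h4.mono ?_
  set N := C ^ ((c * n + 1) ^ 2) with hN
  have hC1 : N ≤ C ^ (c ^ 2 * (n + 1) ^ 2) ∨ C = 0 := by
    rcases Nat.eq_zero_or_pos C with h | h
    · right; exact h
    · left
      apply Nat.pow_le_pow_right h
      rw [← mul_pow]
      gcongr
      nlinarith
  rcases hC1 with hC1 | hC0
  swap
  · have : N = 0 := by rw [hN, hC0]; simp
    rw [this]; simp
  rw [pow_mul] at hC1
  have h5 : N + 2 * (l.length * (c2 * (n + 1) ^ 2 * N)) ≤ N * ((1 + 2 * c2) * (n + 1) ^ 3) := by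
    have : l.length ≤ n + 1 := by omega
    calc N + 2 * (l.length * (c2 * (n + 1) ^ 2 * N)) ≤ N * (n+1)^3 + 2 * ((n + 1) * (c2 * (n + 1) ^ 2 * N)) := by
          gcongr
          exact Nat.le_mul_of_pos_right _ (by positivity)
      _ = _ := by ring
  refine (h5.trans ?_)
  have h6 : (n + 1) ^ 3 ≤ 8 ^ ((n + 1) ^ 2) := by
    have := (Nat.lt_two_pow_self (n := n + 1)).le
    calc (n + 1) ^ 3 ≤ (2 ^ (n + 1)) ^ 3 := Nat.pow_le_pow_left this 3
      _ = 8 ^ (n + 1) := by rw [← pow_mul, mul_comm, pow_mul]; norm_num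
      _ ≤ _ := by
        apply Nat.pow_le_pow_right (by norm_num)
        nlinarith
  calc N * ((1 + 2 * c2) * (n + 1) ^ 3) ≤ (C ^ c ^ 2) ^ (n + 1) ^ 2 * ((1 + 2 * c2) ^ ((n + 1) ^ 2) * 8 ^ ((n + 1) ^ 2)) := by
        gcongr
        exact Nat.le_self_pow (by positivity) _
    _ = (C ^ c ^ 2 * (8 * (1 + 2 * c2))) ^ ((n + 1) ^ 2) := by
      rw [mul_pow, mul_pow]; ring
    _ ≤ _ := by apply Nat.pow_le_pow_left; omega
end
end MB

namespace MB
set_option linter.unusedSectionVars false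
section
variable {F : Type*} [Group F] {ι : Type*} [DecidableEq ι]

def cm (Y : ι → F) (L : List ι) (μ : ι → ℕ) : F := (L.map fun i => Y i ^ μ i).prod

@[simp] lemma cm_nil (Y : ι → F) (u) : cm Y [] u = 1 := rfl
@[simp] lemma cm_cons (Y : ι → F) (i L u) : cm Y (i :: L) u = Y i ^ u i * cm Y L u := by simp [cm]

lemma cm_congr (Y : ι → F) (L : List ι) {u u' : ι → ℕ} (h : ∀ i ∈ L, u i = u' i) :
    cm Y L u = cm Y L u' := by
  unfold cm
  congr 1
  apply List.map_congr_left
  intro i hi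
  rw [h i hi]

def Pre (Y : ι → F) : List ι → (ι → ℕ) → F → Prop
  | [], _, p => p = 1
  | (j :: L), μ, p => (∃ b ≤ μ j, p = Y j ^ b) ∨ ∃ p', Pre Y L μ p' ∧ p = Y j ^ μ j * p'

def PreSet (Y : ι → F) (L : List ι) (μ : ι → ℕ) (Z : Set F) : Set F :=
  {a | ∃ ζ ∈ Z, ∃ p, Pre Y L μ p ∧ a = cc p ζ}

lemma PreSet.conj_cons {Y : ι → F} {L : List ι} {μ : ι → ℕ} {Z : Set F} {j : ι} {w : F} {n : ℕ}
    (h : PrLe (PreSet Y L μ Z) w n) :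
    PrLe (PreSet Y (j :: L) μ Z) (Y j ^ μ j * w * (Y j ^ μ j)⁻¹) n := by
  apply h.conj
  rintro a ⟨ζ, hζ, p, hp, rfl⟩
  exact ⟨ζ, hζ, Y j ^ μ j * p, Or.inr ⟨p, hp, rfl⟩, by rw [cc_mul]; rfl⟩

lemma pow_comm_pr {Z' : Set F} {a z : F} (m : ℕ)
    (h : ∀ b ≤ m, cc (a ^ b) (a * z * a⁻¹ * z⁻¹) ∈ Z') :
    PrLe Z' (a ^ m * z * (a ^ m)⁻¹ * z⁻¹) m := by
  induction m with
  | zero => simpa using PrLe.one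
  | succ m ih =>
    have h1 := (PrLe.of_mem (h m (by omega))).mul (ih fun b hb => h b (by omega))
    refine PrLe.mono ?_ (by omega : 1 + m ≤ m + 1)
    convert h1 using 1
    simp [cc, pow_succ, mul_assoc]

lemma comm_ins (Y : ι → F) {Z : Set F} {z : F} (μ : ι → ℕ) : ∀ L : List ι,
    (∀ j ∈ L, Y j * z * (Y j)⁻¹ * z⁻¹ ∈ Z) →
    PrLe (PreSet Y L μ Z) (cm Y L μ * z * (cm Y L μ)⁻¹ * z⁻¹) ((L.map μ).sum) := by
  intro L
  induction L with
  | nil => intro _; simpa using PrLe.one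
  | cons j L ih =>
    intro h
    have h1 := PreSet.conj_cons (j := j) (ih fun i hi => h i (by simp [hi]))
    have h2 : PrLe (PreSet Y (j :: L) μ Z) (Y j ^ μ j * z * (Y j ^ μ j)⁻¹ * z⁻¹) (μ j) := by
      apply pow_comm_pr
      intro b hb
      exact ⟨_, h j (by simp), _, Or.inl ⟨b, hb, rfl⟩, rfl⟩
    have h3 := h1.mul h2
    refine PrLe.mono ?_ (by simp [add_comm] : (L.map μ).sum + μ j ≤ _)
    convert h3 using 1
    simp [mul_assoc]

lemma ins (Y : ι → F) {Z : Set F} (i : ι) (μ : ι → ℕ) : ∀ L : List ι, L.Nodup → i ∈ L →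
    (∀ j ∈ L, Y j * Y i * (Y j)⁻¹ * (Y i)⁻¹ ∈ Z) →
    PrLe (PreSet Y L μ Z) (cm Y L μ * Y i * (cm Y L (μ + Pi.single i 1))⁻¹) ((L.map μ).sum) := by
  intro L
  induction L with
  | nil => simp
  | cons j L ih =>
    intro hnd hi h
    rw [List.nodup_cons] at hnd
    by_cases hij : i = j
    · subst hij
      have h1 := PreSet.conj_cons (j := i) (comm_ins Y μ L fun i hi => h i (by simp [hi]))
      have e : cm Y L (μ + Pi.single i 1) = cm Y L μ := by
        apply cm_congr
        intro z hz
        have : z ≠ i := fun h => hnd.1 (h ▸ hz)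
        simp [this]
      refine PrLe.mono ?_ (by simp : (L.map μ).sum ≤ _)
      convert h1 using 1
      simp [mul_assoc, e, pow_succ]
    · have h1 := PreSet.conj_cons (j := j) (ih hnd.2 (by simpa [hij] using hi) fun i hi => h i (by simp [hi]))
      refine PrLe.mono ?_ (by simp : (L.map μ).sum ≤ _)
      convert h1 using 1
      have : j ≠ i := fun h => hij h.symm
      simp [mul_assoc, this]

lemma Pre.exists_le {Y : ι → F} {μ : ι → ℕ} : ∀ {L : List ι} {p : F}, L.Nodup → Pre Y L μ p →
    ∃ μ' : ι → ℕ, μ' ≤ μ ∧ p = cm Y L μ' := by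
  intro L
  induction L with
  | nil => intro p _ hp; exact ⟨μ, le_rfl, by simpa [Pre] using hp⟩
  | cons j L ih =>
    intro p hnd hp
    rw [List.nodup_cons] at hnd
    rcases hp with ⟨b, hb, rfl⟩ | ⟨p', hp', rfl⟩
    · refine ⟨Pi.single j b, ?_, ?_⟩
      · intro z
        by_cases hz : z = j
        · subst hz; simpa using hb
        · simp [hz]
      · have : cm Y L (Pi.single j b) = 1 := by
          apply List.prod_eq_one
          intro x hx
          simp only [List.mem_map] at hx
          obtain ⟨i, hi, rfl⟩ := hx
          have : i ≠ j := fun h => hnd.1 (h ▸ hi)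
          simp [this]
        simp [this]
    · obtain ⟨μ', h1, rfl⟩ := ih hnd.2 hp'
      refine ⟨Function.update μ' j (μ j), ?_, ?_⟩
      · intro z
        by_cases hz : z = j
        · subst hz; simp
        · simpa [hz] using h1 z
      · rw [cm_cons, cm_congr Y L (u := Function.update μ' j (μ j)) (u' := μ')]
        · simp
        · intro z hz
          have : z ≠ j := fun h => hnd.1 (h ▸ hz)
          simp [this]

structure AddFun (V : F → ℝ) : Prop where
  mul : ∀ a b, V (a * b) = V a + V b

variable {V : F → ℝ}
lemma AddFun.one (h : AddFun V) : V 1 = 0 := by have := h.mul 1 1; simp at this; exact this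
lemma AddFun.inv (h : AddFun V) (a) : V a⁻¹ = - V a := by
  have := h.mul a a⁻¹; rw [mul_inv_cancel, h.one] at this; linarith
lemma AddFun.pow (h : AddFun V) (a) (n : ℕ) : V (a ^ n) = n * V a := by
  induction n with
  | zero => simp [h.one]
  | succ n ih => rw [pow_succ, h.mul, ih]; push_cast; ring
lemma AddFun.cc (h : AddFun V) (a s) : V (cc a s) = V s := by
  unfold MB.cc; rw [h.mul, h.mul, h.inv]; ring
lemma AddFun.neg (h : AddFun V) : AddFun (fun f => - V f) := ⟨fun a b => by rw [h.mul]; ring⟩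

def VSort (Y : ι → F) (V : F → ℝ) (L : List ι) : Prop := L.Pairwise fun a b => 0 < V (Y a) → 0 < V (Y b)

lemma cm_V_nonneg (hV : AddFun V) {Y : ι → F} {L : List ι} (hL : ∀ j ∈ L, 0 ≤ V (Y j)) (μ : ι → ℕ) :
    0 ≤ V (cm Y L μ) := by
  induction L with
  | nil => simp [hV.one]
  | cons j L ih =>
    rw [cm_cons, hV.mul, hV.pow]
    have h1 := hL j (by simp)
    have h2 := ih fun i hi => hL i (by simp [hi])
    positivity

lemma Pre.V_le_nonneg (hV : AddFun V) {Y : ι → F} {μ : ι → ℕ} : ∀ {L : List ι} {p : F},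
    (∀ j ∈ L, 0 ≤ V (Y j)) → Pre Y L μ p → V p ≤ V (cm Y L μ) := by
  intro L
  induction L with
  | nil => intro p _ hp; have : p = 1 := hp; rw [this]; simp
  | cons j L ih =>
    intro p hL hp
    have h1 := hL j (by simp)
    have h2 : 0 ≤ V (cm Y L μ) := cm_V_nonneg hV (fun i hi => hL i (by simp [hi])) μ
    rw [cm_cons, hV.mul, hV.pow]
    rcases hp with ⟨b, hb, rfl⟩ | ⟨p', hp', rfl⟩
    · rw [hV.pow]
      have : (b : ℝ) ≤ μ j := by exact_mod_cast hb
      nlinarith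
    · rw [hV.mul, hV.pow]
      have := ih (fun i hi => hL i (by simp [hi])) hp'
      linarith

lemma Pre.V_le (hV : AddFun V) {Y : ι → F} {μ : ι → ℕ} : ∀ {L : List ι} {p : F},
    VSort Y V L → Pre Y L μ p → V p ≤ max 0 (V (cm Y L μ)) := by
  intro L
  induction L with
  | nil => intro p _ hp; have : p = 1 := hp; rw [this, hV.one]; simp
  | cons j L ih =>
    intro p hL hp
    rcases le_or_gt (V (Y j)) 0 with h0 | h0
    · rcases hp with ⟨b, hb, rfl⟩ | ⟨p', hp', rfl⟩
      · rw [hV.pow]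
        refine le_trans ?_ (le_max_left _ _)
        exact mul_nonpos_of_nonneg_of_nonpos (by positivity) h0
      · have := ih (List.pairwise_cons.1 hL).2 hp'
        rw [cm_cons, hV.mul, hV.mul, hV.pow]
        have h3 : (μ j : ℝ) * V (Y j) ≤ 0 := mul_nonpos_of_nonneg_of_nonpos (by positivity) h0
        rcases le_max_iff.1 this with h | h
        · exact le_max_of_le_left (by linarith)
        · exact le_max_of_le_right (by linarith)
    · refine le_max_of_le_right (Pre.V_le_nonneg hV ?_ hp)
      intro i hi
      rcases List.mem_cons.1 hi with rfl | hi
      · exact h0.le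
      · exact ((List.pairwise_cons.1 hL).1 i hi h0).le

lemma exists_vsort [Fintype ι] (Y : ι → F) (V : F → ℝ) :
    ∃ L : List ι, L.Nodup ∧ (∀ i, i ∈ L) ∧ VSort Y V L := by
  classical
  let P : ι → Prop := fun i => 0 < V (Y i)
  let A := (Finset.univ.filter fun i => ¬ P i).toList
  let B := (Finset.univ.filter P).toList
  have hA : ∀ i ∈ A, ¬ P i := by intro i hi; simpa [A] using hi
  have hB : ∀ i ∈ B, P i := by intro i hi; simpa [B] using hi
  refine ⟨A ++ B, ?_, ?_, ?_⟩
  · rw [List.nodup_append']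
    refine ⟨Finset.nodup_toList _, Finset.nodup_toList _, ?_⟩
    intro i hi hi'
    exact hA i hi (hB i hi')
  · intro i
    by_cases h : P i <;> simp [A, B, h]
  · unfold VSort
    rw [List.pairwise_append]
    refine ⟨?_, ?_, ?_⟩
    · apply List.Pairwise.imp_of_mem (R := fun _ _ => True) (fun {a b} ha _ _ h => absurd h (hA a ha))
      exact List.pairwise_of_forall (fun _ _ => trivial)
    · apply List.Pairwise.imp_of_mem (R := fun _ _ => True) (S := fun a b => 0 < V (Y a) → 0 < V (Y b)) (fun {a b} _ hb _ _ => hB b hb)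
      exact List.pairwise_of_forall (fun _ _ => trivial)
    · intro a ha b hb _
      exact hB b hb

end
end MB

namespace MB
set_option linter.unusedSectionVars false
section
variable {F : Type*} [Group F] {k : ℕ}

def canon (h : Fin k →₀ ℤ) : Fin k × Bool → ℕ := fun l => if l.2 then (h l.1).toNat else (-h l.1).toNat
def hn (h : Fin k →₀ ℤ) : ℕ := ∑ i, (h i).natAbs

lemma sum_canon (h : Fin k →₀ ℤ) : ∑ l, canon h l = hn h := by
  rw [Fintype.sum_prod_type]
  unfold hn
  apply Finset.sum_congr rfl
  intro i _
  simp [canon]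

lemma hn_add (h h' : Fin k →₀ ℤ) : hn (h + h') ≤ hn h + hn h' := by
  unfold hn
  rw [← Finset.sum_add_distrib]
  exact Finset.sum_le_sum fun i _ => by simpa using Int.natAbs_add_le _ _

lemma hn_single (i : Fin k) (b : Bool) : hn (Finsupp.single i (sg b)) = 1 := by
  unfold hn
  rw [Finset.sum_eq_single i]
  · cases b <;> simp [sg]
  · intro j _ hj; simp [hj]
  · simp

lemma hn_lsum (ls : List (Fin k × Bool)) : hn (lsum ls) ≤ ls.length := by
  induction ls with
  | nil => simp [hn]
  | cons p ls ih =>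
    rw [lsum_cons]
    have := hn_add (Finsupp.single p.1 (sg p.2)) (lsum ls)
    rw [hn_single] at this
    simp only [List.length_cons]; omega

lemma canon_add (h : Fin k →₀ ℤ) (i : Fin k) (b : Bool) (hs : 0 ≤ sg b * h i) :
    canon (h + Finsupp.single i (sg b)) = canon h + Pi.single (i, b) 1 := by
  funext ⟨j, b'⟩
  by_cases hij : j = i
  · subst hij
    cases b <;> cases b' <;> simp [canon, sg] at * <;> omega
  · have : (Pi.single (i, b) 1 : Fin k × Bool → ℕ) (j, b') = 0 := by
      rw [Pi.single_eq_of_ne]; simp [hij]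
    simp only [Pi.add_apply, this]
    simp [canon, Finsupp.single_eq_of_ne hij]

lemma canon_zero : canon (0 : Fin k →₀ ℤ) = 0 := by funext l; simp [canon]

def ES {ι : Type*} [Fintype ι] (Y : ι → F) (L : List ι) (V : F → ℝ) (Z : Set F) (d : ℕ) (M : ℝ) : Set F :=
  {a | ∃ ζ ∈ Z, ∃ μ : ι → ℕ, ∑ i, μ i ≤ d ∧ V (cm Y L μ) ≤ M ∧ a = cc (cm Y L μ) ζ}

lemma ES_mono {ι : Type*} [Fintype ι] {Y : ι → F} {L : List ι} {V : F → ℝ} {Z Z' : Set F} {d d' : ℕ} {M M' : ℝ}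
    (hZ : Z ⊆ Z') (hd : d ≤ d') (hM : M ≤ M') : ES Y L V Z d M ⊆ ES Y L V Z' d' M' := by
  rintro a ⟨ζ, hζ, μ, h1, h2, rfl⟩
  exact ⟨ζ, hZ hζ, μ, h1.trans hd, h2.trans hM, rfl⟩

structure Lok (y : Fin k → F) (V : F → ℝ) (L : List (Fin k × Bool)) : Prop where
  hV : AddFun V
  nd : L.Nodup
  full : ∀ i, i ∈ L
  vs : VSort (sv y) V L

def Zc (y : Fin k → F) : Set F := {a | ∃ l m, a = sv y l * sv y m * (sv y l)⁻¹ * (sv y m)⁻¹}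

lemma Zc_finite (y : Fin k → F) : (Zc y).Finite := by
  have : Zc y = Set.range (fun p : (Fin k × Bool) × (Fin k × Bool) => sv y p.1 * sv y p.2 * (sv y p.1)⁻¹ * (sv y p.2)⁻¹) := by
    ext a; constructor
    · rintro ⟨l, m, rfl⟩; exact ⟨(l, m), rfl⟩
    · rintro ⟨p, rfl⟩; exact ⟨_, _, rfl⟩
  rw [this]; exact Set.finite_range _

variable {y : Fin k → F} {V : F → ℝ} {L : List (Fin k × Bool)}

lemma V_ES_zero (hV : AddFun V) {a : F} {d M} (h : a ∈ ES (sv y) L V (Zc y) d M) : V a = 0 := by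
  obtain ⟨ζ, ⟨l, m, rfl⟩, μ, -, -, rfl⟩ := h
  rw [hV.cc]; simp only [hV.mul, hV.inv]; ring

lemma ins_ES (hL : Lok y V L) (l : Fin k × Bool) (μ : Fin k × Bool → ℕ) :
    PrLe (ES (sv y) L V (Zc y) (∑ i, μ i) (max 0 (V (cm (sv y) L μ))))
      (cm (sv y) L μ * sv y l * (cm (sv y) L (μ + Pi.single l 1))⁻¹) (∑ i, μ i) := by
  have h := ins (sv y) (Z := Zc y) l μ L hL.nd (hL.full l) (fun j _ => ⟨j, l, rfl⟩)
  have e : (L.map μ).sum = ∑ i, μ i := by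
    rw [← List.sum_toFinset _ hL.nd]
    congr 1
    ext i; simp [hL.full]
  rw [e] at h
  refine h.mono_set ?_
  rintro a ⟨ζ, hζ, p, hp, rfl⟩
  obtain ⟨μ', h1, rfl⟩ := hp.exists_le hL.nd
  exact ⟨ζ, hζ, μ', Finset.sum_le_sum fun i _ => h1 i, hp.V_le hL.hV hL.vs, rfl⟩

lemma V_of_pr (hL : Lok y V L) {a b : F} {d M n} (h : PrLe (ES (sv y) L V (Zc y) d M) (a * b⁻¹) n) :
    V a = V b := by
  have : V (a * b⁻¹) = 0 := h.induct (Pz := fun w => V w = 0) hL.hV.one (fun a ha => V_ES_zero hL.hV ha)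
    (fun a ha => by rw [hL.hV.inv, ha]; simp) (fun a b ha hb => by rw [hL.hV.mul, ha, hb]; simp)
  rw [hL.hV.mul, hL.hV.inv] at this; linarith

lemma letter_step (hL : Lok y V L) {c : ℝ} (hc : ∀ l, |V (sv y l)| ≤ c) (h : Fin k →₀ ℤ) (l : Fin k × Bool) :
    PrLe (ES (sv y) L V (Zc y) (hn h + 1) (max 0 (V (cm (sv y) L (canon h))) + c))
      (cm (sv y) L (canon h) * sv y l * (cm (sv y) L (canon (h + Finsupp.single l.1 (sg l.2))))⁻¹) (hn h + 1)
    ∧ V (cm (sv y) L (canon (h + Finsupp.single l.1 (sg l.2)))) ≤ V (cm (sv y) L (canon h)) + c := by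
  obtain ⟨i, b⟩ := l
  have hc0 : 0 ≤ c := (abs_nonneg _).trans (hc (i, b))
  have hcb := abs_le.1 (hc (i, b))
  simp only
  by_cases hs : 0 ≤ sg b * h i
  · rw [canon_add h i b hs]
    have h1 := ins_ES hL (i, b) (canon h)
    have h2 := V_of_pr hL h1
    rw [hL.hV.mul] at h2
    constructor
    · rw [sum_canon] at h1
      exact (h1.mono_set (ES_mono le_rfl (by omega) (by linarith))).mono (by omega)
    · linarith
  · set h' := h + Finsupp.single i (sg b) with hh'
    have e : h = h' + Finsupp.single i (sg (!b)) := by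
      rw [hh', add_assoc, ← Finsupp.single_add]
      cases b <;> simp [sg]
    have hs' : 0 ≤ sg (!b) * h' i := by
      rw [hh']
      cases b <;> simp [sg] at hs ⊢ <;> omega
    have h3 := canon_add h' i (!b) hs'
    rw [← e] at h3
    have h1 := ins_ES hL (i, !b) (canon h')
    rw [← h3] at h1
    have h2 := V_of_pr hL h1
    rw [hL.hV.mul, sv_not, hL.hV.inv] at h2
    have h5 : hn h' ≤ hn h + 1 := by
      have := hn_add h (Finsupp.single i (sg b))
      rwa [hn_single] at this
    constructor
    · rw [sum_canon] at h1
      have h4 := (h1.mono_set (ES_mono (Z' := Zc y) (d' := hn h + 1) (M' := max 0 (V (cm (sv y) L (canon h))) + c) le_rfl h5 (by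
        apply max_le
        · have := le_max_left 0 (V (cm (sv y) L (canon h))); linarith
        · have := le_max_right 0 (V (cm (sv y) L (canon h))); linarith))).mono h5
      have h6 := h4.inv
      convert h6 using 1
      simp [sv_not, mul_assoc]
    · linarith

lemma word_step (hL : Lok y V L) {c : ℝ} (hc0 : 0 ≤ c) (hc : ∀ l, |V (sv y l)| ≤ c) :
    ∀ (ls : List (Fin k × Bool)) (h : Fin k →₀ ℤ),
    PrLe (ES (sv y) L V (Zc y) (hn h + ls.length) (max 0 (V (cm (sv y) L (canon h))) + ls.length * c))
      (cm (sv y) L (canon h) * lprod y ls * (cm (sv y) L (canon (h + lsum ls)))⁻¹) (ls.length * (hn h + ls.length)) := by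
  intro ls
  induction ls with
  | nil => intro h; simpa using PrLe.one
  | cons l ls ih =>
    intro h
    obtain ⟨h1, h2⟩ := letter_step hL hc h l
    have h3 := ih (h + Finsupp.single l.1 (sg l.2))
    have h5 : hn (h + Finsupp.single l.1 (sg l.2)) ≤ hn h + 1 := by
      have := hn_add h (Finsupp.single l.1 (sg l.2))
      rwa [hn_single] at this
    have hlc : 0 ≤ (ls.length : ℝ) * c := by positivity
    have h1' := h1.mono_set (ES_mono (Z' := Zc y) (d' := hn h + (l :: ls).length)
      (M' := max 0 (V (cm (sv y) L (canon h))) + (l :: ls).length * c) le_rfl (by simp) (by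
        simp only [List.length_cons]; push_cast; nlinarith))
    have h3' := h3.mono_set (ES_mono (Z' := Zc y) (d' := hn h + (l :: ls).length)
      (M' := max 0 (V (cm (sv y) L (canon h))) + (l :: ls).length * c) le_rfl (by simp; omega) (by
        simp only [List.length_cons]; push_cast
        have : max 0 (V (cm (sv y) L (canon (h + Finsupp.single l.1 (sg l.2))))) ≤ max 0 (V (cm (sv y) L (canon h))) + c := by
          apply max_le
          · have := le_max_left 0 (V (cm (sv y) L (canon h))); linarith
          · have := le_max_right 0 (V (cm (sv y) L (canon h))); linarith
        nlinarith))
    have h6 := h1'.mul h3'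
    refine PrLe.mono (n := (hn h + 1) + ls.length * (hn (h + Finsupp.single l.1 (sg l.2)) + ls.length)) ?_ ?_
    · convert h6 using 1
      simp [mul_assoc, add_assoc]
    · simp only [List.length_cons]
      nlinarith [Nat.mul_le_mul_left ls.length h5]

lemma exists_lsum (h : Fin k →₀ ℤ) : ∃ ls : List (Fin k × Bool), lsum ls = h := by
  induction h using Finsupp.induction_linear with
  | zero => exact ⟨[], rfl⟩
  | add f g hf hg =>
    obtain ⟨a, rfl⟩ := hf
    obtain ⟨b, rfl⟩ := hg
    exact ⟨a ++ b, by simp⟩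
  | single i z =>
    have key : ∀ (b : Bool) (n : ℕ), lsum (List.replicate n (i, b)) = Finsupp.single i (n * sg b) := by
      intro b n
      induction n with
      | zero => simp
      | succ n ih => rw [List.replicate_succ, lsum_cons, ih, ← Finsupp.single_add]; congr 1; push_cast; ring
    obtain ⟨n, hn | hn⟩ := Int.eq_nat_or_neg z
    · exact ⟨_, (key true n).trans (by simp [sg, hn])⟩
    · exact ⟨_, (key false n).trans (by simp [sg, hn])⟩

variable {Q : Type*} [CommGroup Q] {π : F →* Q}

structure Dat (π : F →* Q) (k : ℕ) where
  y : Fin k → F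
  E : (Fin k →₀ ℤ) → Q
  Eadd : ∀ a b, E (a + b) = E a * E b
  Einj : Function.Injective E
  Ey : ∀ i, π (y i) = E (Finsupp.single i 1)
  h : Q → (Fin k →₀ ℤ)
  r : Q → F
  rfin : (Set.range r).Finite
  hr : ∀ q, E (h q) * π (r q) = q

lemma Dat.E0 (D : Dat π k) : D.E 0 = 1 := by
  have := D.Eadd 0 0
  simpa using this

lemma Dat.Eneg (D : Dat π k) (a) : D.E (-a) = (D.E a)⁻¹ := by
  have := D.Eadd a (-a)
  rw [add_neg_cancel, D.E0] at this
  exact eq_inv_of_mul_eq_one_right this.symm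

lemma Dat.lprod (D : Dat π k) (ls) : π (lprod D.y ls) = D.E (lsum ls) := by
  induction ls with
  | nil => simp [D.E0]
  | cons l ls ih =>
    obtain ⟨i, b⟩ := l
    rw [lprod_cons, lsum_cons, map_mul, ih, D.Eadd]
    congr 1
    cases b
    · simp [sv, sg, D.Ey, D.Eneg]
    · simp [sv, sg, D.Ey]

lemma Zc_ker (y : Fin k → F) : Zc y ⊆ π.ker := by
  rintro a ⟨l, m, rfl⟩
  simp only [SetLike.mem_coe, MonoidHom.mem_ker, map_mul, map_inv]
  rw [mul_comm (π (sv y l))]; simp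

lemma ES_ker {Z : Set F} (hZ : Z ⊆ π.ker) {d M} : ES (sv y) L V Z d M ⊆ π.ker := by
  rintro a ⟨ζ, hζ, μ, -, -, rfl⟩
  exact π.normal_ker.conj_mem _ (hZ hζ) _

lemma Dat.cmE (D : Dat π k) (hL : Lok D.y V L) (h) : π (cm (sv D.y) L (canon h)) = D.E h := by
  obtain ⟨ls, rfl⟩ := exists_lsum h
  obtain ⟨c, hc⟩ := Finite.exists_le (fun l => |V (sv D.y l)|)
  have h1 := word_step hL (le_max_right c 0) (fun l => (hc l).trans (le_max_left _ _)) ls 0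
  have h2 := h1.mem_subgroup π.ker (ES_ker (Zc_ker _))
  have h0 : cm (sv D.y) L (canon (0 : Fin k →₀ ℤ)) = 1 := by
    rw [canon_zero]
    apply List.prod_eq_one
    intro x hx
    simp only [List.mem_map] at hx
    obtain ⟨i, _, rfl⟩ := hx
    simp
  rw [h0, zero_add, one_mul, MonoidHom.mem_ker, map_mul, map_inv, D.lprod] at h2
  exact (mul_inv_eq_one.1 h2).symm

def Dat.sec (D : Dat π k) (L : List (Fin k × Bool)) (q : Q) : F := cm (sv D.y) L (canon (D.h q)) * D.r q

lemma Dat.pi_sec (D : Dat π k) (hL : Lok D.y V L) (q) : π (D.sec L q) = q := by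
  unfold Dat.sec
  rw [map_mul, D.cmE hL, D.hr]

lemma EL (D : Dat π k) (hL : Lok D.y V L) (A : Set F) (hA : A.Finite) :
    ∃ (S' : Set F) (c : ℕ), S'.Finite ∧ S' ⊆ π.ker ∧
      (∀ q, ∀ x ∈ A, hn (D.h (q * π x)) ≤ hn (D.h q) + c) ∧
      ∀ q, ∀ x ∈ A, PrLe (ES (sv D.y) L V S' (hn (D.h q) + c) (max 0 (V (D.sec L q)) + c))
        (D.sec L q * x * (D.sec L (q * π x))⁻¹) (c * (hn (D.h q) + 1)) := by
  classical
  choose om hom using fun h : Fin k →₀ ℤ => exists_lsum h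
  let η : F → (Fin k →₀ ℤ) := fun f => Function.invFun D.E (π f)
  let κ : F × F × F → F := fun p => p.1 * p.2.1 * p.2.2⁻¹ * (MB.lprod D.y (om (η (p.1 * p.2.1 * p.2.2⁻¹))))⁻¹
  let U : Set (F × F × F) := (Set.range D.r) ×ˢ A ×ˢ (Set.range D.r)
  have hU : U.Finite := D.rfin.prod (hA.prod D.rfin)
  have := hU.to_subtype
  have := D.rfin.to_subtype
  obtain ⟨c1, hc1⟩ := Finite.exists_le (fun p : U => (om (η (p.1.1 * p.1.2.1 * p.1.2.2⁻¹))).length)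
  obtain ⟨c2, hc2⟩ := Finite.exists_le (fun l => |V (sv D.y l)|)
  obtain ⟨c3, hc3⟩ := Finite.exists_le (fun x : Set.range D.r => |V x|)
  obtain ⟨c4, hc4⟩ := exists_nat_ge (max c2 0 * c1 + max c3 0)
  have hedge : ∀ q, ∀ x ∈ A, D.h (q * π x) = D.h q + lsum (om (η (D.r q * x * (D.r (q * π x))⁻¹))) ∧
      κ (D.r q, x, D.r (q * π x)) ∈ π.ker := by
    intro q x hx
    have e1 := D.hr q
    have e2 := D.hr (q * π x)
    have e3 : D.E (D.h (q * π x) - D.h q) = π (D.r q * x * (D.r (q * π x))⁻¹) := by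
      rw [sub_eq_add_neg, D.Eadd, D.Eneg]
      simp only [map_mul, map_inv]
      rw [eq_mul_inv_of_mul_eq e2, eq_mul_inv_of_mul_eq e1]
      simp only [mul_inv_rev, inv_inv]
      rw [mul_comm (q * π x), mul_assoc, mul_comm, mul_assoc, mul_comm (π (D.r q)), mul_comm q]
      simp [mul_assoc]
      exact mul_left_comm _ _ _
    have e4 : η (D.r q * x * (D.r (q * π x))⁻¹) = D.h (q * π x) - D.h q := by
      simp only [η, ← e3]
      exact Function.leftInverse_invFun D.Einj _
    constructor
    · rw [e4, hom]; abel
    · simp only [κ, MonoidHom.mem_ker]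
      rw [e4, map_mul, map_inv, D.lprod, hom, ← e3]; simp
  refine ⟨Zc D.y ∪ (κ '' U ∩ π.ker), c1 * c1 + c1 + c4 + 1, (Zc_finite _).union ((hU.image _).inter_of_left _), ?_, ?_, ?_⟩
  · exact Set.union_subset (Zc_ker _) Set.inter_subset_right
  · intro q x hx
    rw [(hedge q x hx).1]
    have h1 := hn_add (D.h q) (lsum (om (η (D.r q * x * (D.r (q * π x))⁻¹))))
    have h2 := hn_lsum (om (η (D.r q * x * (D.r (q * π x))⁻¹)))
    have h3 := hc1 ⟨(D.r q, x, D.r (q * π x)), ⟨⟨q, rfl⟩, hx, ⟨_, rfl⟩⟩⟩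
    simp only at h3
    omega
  · intro q x hx
    obtain ⟨h1, h2⟩ := hedge q x hx
    set ls := om (η (D.r q * x * (D.r (q * π x))⁻¹)) with hls
    have h3 : ls.length ≤ c1 := hc1 ⟨(D.r q, x, D.r (q * π x)), ⟨⟨q, rfl⟩, hx, ⟨_, rfl⟩⟩⟩
    have h4 := word_step hL (le_max_right c2 0) (fun l => (hc2 l).trans (le_max_left _ _)) ls (D.h q)
    have h5 : |V (D.r q)| ≤ max c3 0 := (hc3 ⟨_, ⟨q, rfl⟩⟩).trans (le_max_left _ _)
    have h6 : max 0 (V (cm (sv D.y) L (canon (D.h q)))) ≤ max 0 (V (D.sec L q)) + max c3 0 := by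
      unfold Dat.sec
      rw [hL.hV.mul]
      have := abs_le.1 h5
      apply max_le
      · positivity
      · have := le_max_right 0 (V (cm (sv D.y) L (canon (D.h q))) + V (D.r q))
        linarith
    have h7 : (ls.length : ℝ) * max c2 0 ≤ max c2 0 * c1 := by
      rw [mul_comm]; gcongr
    have hp : 0 ≤ max c2 0 * (c1 : ℝ) := by positivity
    have hM : max 0 (V (cm (sv D.y) L (canon (D.h q)))) + ls.length * max c2 0 ≤ max 0 (V (D.sec L q)) + (c1 * c1 + c1 + c4 + 1 : ℕ) := by
      push_cast
      have : (0 : ℝ) ≤ c1 := Nat.cast_nonneg _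
      nlinarith
    have h8 := h4.mono_set (ES_mono (Z' := Zc D.y ∪ (κ '' U ∩ π.ker)) (d' := hn (D.h q) + (c1 * c1 + c1 + c4 + 1))
      Set.subset_union_left (by omega) hM)
    have h9 : cc (cm (sv D.y) L (canon (D.h q))) (κ (D.r q, x, D.r (q * π x))) ∈ ES (sv D.y) L V (Zc D.y ∪ (κ '' U ∩ π.ker))
        (hn (D.h q) + (c1 * c1 + c1 + c4 + 1)) (max 0 (V (D.sec L q)) + (c1 * c1 + c1 + c4 + 1 : ℕ)) := by
      refine ⟨_, Or.inr ⟨⟨_, ⟨⟨q, rfl⟩, hx, ⟨_, rfl⟩⟩, rfl⟩, h2⟩, canon (D.h q), ?_, ?_, rfl⟩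
      · rw [sum_canon]; omega
      · refine le_trans (le_max_right 0 _) (le_trans ?_ hM)
        have : 0 ≤ (ls.length : ℝ) * max c2 0 := by positivity
        linarith
    have h10 := (PrLe.of_mem h9).mul h8
    refine PrLe.mono (n := 1 + ls.length * (hn (D.h q) + ls.length)) ?_ ?_
    · convert h10 using 1
      unfold Dat.sec
      have hk : κ (D.r q, x, D.r (q * π x)) = D.r q * x * (D.r (q * π x))⁻¹ * (MB.lprod D.y ls)⁻¹ := rfl
      rw [h1, hk]
      simp [cc, mul_assoc]
    · have : ls.length * (hn (D.h q) + ls.length) ≤ c1 * (hn (D.h q) + c1) := by gcongr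
      nlinarith
end
end MB

namespace MB
set_option linter.unusedSectionVars false
section
variable {X : Type*} [Finite X]

lemma freeNorm_mul (a b : FreeGroup X) : freeNorm (a * b) ≤ freeNorm a + freeNorm b := by
  let _ := Classical.decEq X
  exact FreeGroup.norm_mul_le a b
lemma freeNorm_inv (a : FreeGroup X) : freeNorm a⁻¹ = freeNorm a := by
  let _ := Classical.decEq X
  exact FreeGroup.norm_inv_eq
lemma exists_word (a : FreeGroup X) : ∃ l : List (X × Bool), l.length = freeNorm a ∧ FreeGroup.mk l = a := by
  let _ := Classical.decEq X
  exact ⟨a.toWord, rfl, FreeGroup.mk_toWord⟩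

def gens (X : Type*) : Set (FreeGroup X) := Set.range fun p : X × Bool => FreeGroup.of p.1 ^ (sg p.2)
lemma gens_finite : (gens X).Finite := Set.finite_range _

lemma mk_cons' (p : X × Bool) (l : List (X × Bool)) :
    FreeGroup.mk (p :: l) = FreeGroup.of p.1 ^ (sg p.2) * FreeGroup.mk l := by
  let _ := Classical.decEq X
  have := Fintype.ofFinite X
  exact mk_cons p l

variable {F : Type*} [Group F]
def MS {ι : Type*} [Fintype ι] (Y : ι → F) (L : List ι) (Z : Set F) (d : ℕ) : Set F :=
  {a | ∃ ζ ∈ Z, ∃ μ : ι → ℕ, ∑ i, μ i ≤ d ∧ a = cc (cm Y L μ) ζ}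

variable {Q : Type*} [CommGroup Q] {π : FreeGroup X →* Q} {k : ℕ}

lemma step1 (D : Dat π k) {L : List (Fin k × Bool)} (hL : Lok D.y (fun _ => 0) L) :
    ∃ (S' : Set (FreeGroup X)) (C : ℕ), S'.Finite ∧ S' ⊆ π.ker ∧
      ∀ n d w, w ∈ π.ker → freeNorm w ≤ n → (k = 0 ∨ C * (n + 1) ≤ d) →
        PrLe (MS (sv D.y) L S' d) w (C * (n + 1) * (d + 1)) := by
  obtain ⟨S', c, hf, hK, h1, h2⟩ := EL D hL (gens X) gens_finite
  refine ⟨S', (hn (D.h 1) + c * (2 * freeNorm (D.sec L 1) + 2) + c), hf, hK, ?_⟩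
  have hsub : ∀ {q : Q} {d : ℕ}, (k = 0 ∨ hn (D.h q) + c ≤ d) → ES (sv D.y) L (fun _ => (0:ℝ)) S' (hn (D.h q) + c) (max 0 0 + c) ⊆ MS (sv D.y) L S' d := by
    rintro q d hd a ⟨ζ, hζ, μ, hμ, -, rfl⟩
    refine ⟨ζ, hζ, μ, ?_, rfl⟩
    rcases hd with rfl | hd
    · simp
    · omega
  have key : ∀ (l : List (X × Bool)) (q : Q) (d : ℕ), (k = 0 ∨ hn (D.h q) + c * l.length + c ≤ d) →
      PrLe (MS (sv D.y) L S' d) (D.sec L q * FreeGroup.mk l * (D.sec L (q * π (FreeGroup.mk l)))⁻¹) (l.length * (c * (d + 1))) := by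
    intro l
    induction l with
    | nil =>
      intro q d _
      have : FreeGroup.mk ([] : List (X × Bool)) = 1 := rfl
      rw [this]
      simpa using PrLe.one
    | cons p l ih =>
      intro q d hd
      set x := FreeGroup.of p.1 ^ (sg p.2) with hx
      have hxg : x ∈ gens X := ⟨p, rfl⟩
      have h3 := h2 q x hxg
      have h4 := h3.mono_set (hsub (q := q) (d := d) (hd.imp id fun h => by
        simp only [List.length_cons] at h; nlinarith))
      have h5 := ih (q * π x) d (hd.imp id fun h => by
        have := h1 q x hxg
        simp only [List.length_cons] at h; nlinarith)
      have h6 : hn (D.h q) ≤ d := by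
        rcases hd with rfl | h
        · simp [hn]
        · nlinarith
      have h7 := h4.mul h5
      refine PrLe.mono (n := c * (hn (D.h q) + 1) + l.length * (c * (d + 1))) ?_ ?_
      · convert h7 using 1
        rw [mk_cons', map_mul, ← hx]
        simp [mul_assoc]
      · have : c * (hn (D.h q) + 1) ≤ c * (d + 1) := by gcongr
        simp only [List.length_cons]
        nlinarith
  intro n d w hw hn' hd
  set m := freeNorm (D.sec L 1) with hm
  obtain ⟨l, hl, hl'⟩ := exists_word ((D.sec L 1)⁻¹ * w * D.sec L 1)
  have hlen : l.length ≤ n + 2 * m := by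
    have a1 := freeNorm_mul ((D.sec L 1)⁻¹ * w) (D.sec L 1)
    have a2 := freeNorm_mul (D.sec L 1)⁻¹ w
    rw [freeNorm_inv] at a2
    omega
  have h3 := key l 1 d (hd.imp id fun h => by
    refine le_trans ?_ h
    have : c * l.length ≤ c * (n + 2 * m) := by gcongr
    nlinarith [Nat.zero_le (hn (D.h 1) * n), Nat.zero_le (c * m * n), Nat.zero_le (c * n)])
  have hpi : π ((D.sec L 1)⁻¹ * w * D.sec L 1) = 1 := by
    rw [MonoidHom.mem_ker] at hw
    simp [hw]
  rw [hl', hpi] at h3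
  refine PrLe.mono (n := l.length * (c * (d + 1))) ?_ ?_
  · convert h3 using 1
    simp [mul_assoc]
  · calc l.length * (c * (d + 1)) ≤ (n + 2 * m) * (c * (d + 1)) := by gcongr
      _ = ((n + 2 * m) * c) * (d + 1) := by ring
      _ ≤ _ := by
        apply Nat.mul_le_mul_right
        nlinarith [Nat.zero_le (hn (D.h 1) * n), Nat.zero_le (c * m * n), Nat.zero_le (c * n)]

lemma exists_dat (hπ : Function.Surjective π) (hk : HasTFRank Q k) : Nonempty (Dat π k) := by
  obtain ⟨H, hH, ⟨e⟩⟩ := hk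
  have : Finite (Q ⧸ H) := by
    rw [Subgroup.index] at hH
    exact Nat.finite_of_card_ne_zero hH
  let E : (Fin k →₀ ℤ) → Q := fun h => (e.symm (Multiplicative.ofAdd (⇑h)) : H)
  choose σ hσ using hπ
  have hmem : ∀ q : Q, q * ((QuotientGroup.mk q : Q ⧸ H).out)⁻¹ ∈ H := by
    intro q
    have : (QuotientGroup.mk ((QuotientGroup.mk q : Q ⧸ H).out) : Q ⧸ H) = QuotientGroup.mk q := Quotient.out_eq _
    rw [QuotientGroup.eq] at this
    rwa [mul_comm]
  refine ⟨⟨fun i => σ (E (Finsupp.single i 1)), E, ?_, ?_, fun i => hσ _,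
    fun q => Finsupp.equivFunOnFinite.symm (Multiplicative.toAdd (e ⟨_, hmem q⟩)),
    fun q => σ ((QuotientGroup.mk q : Q ⧸ H).out), ?_, ?_⟩⟩
  · intro a b
    simp only [E, ← Subgroup.coe_mul, ← map_mul]
    rfl
  · intro a b hab
    simp only [E, SetLike.coe_eq_coe, EmbeddingLike.apply_eq_iff_eq, DFunLike.coe_fn_eq] at hab
    exact hab
  · refine (Set.finite_range fun z : Q ⧸ H => σ z.out).subset ?_
    rintro _ ⟨q, rfl⟩
    exact ⟨_, rfl⟩
  · intro q
    simp [E, hσ]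
end
end MB

namespace MB
set_option linter.unusedSectionVars false

section perm
variable {B1 B2 : Type*} [Group B1] [Group B2]
open Classical in
noncomputable def jl (B1 B2 : Type*) [Group B1] [Group B2] : B1 →* Equiv.Perm (B1 × B2) where
  toFun b :=
    { toFun := fun p => if p.2 = 1 then (b * p.1, p.2) else p
      invFun := fun p => if p.2 = 1 then (b⁻¹ * p.1, p.2) else p
      left_inv := by intro p; by_cases h : p.2 = 1 <;> simp [h]; ext <;> simp [h]
      right_inv := by intro p; by_cases h : p.2 = 1 <;> simp [h]; ext <;> simp [h] }
  map_one' := by ext p <;> by_cases h : p.2 = 1 <;> simp [h]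
  map_mul' a b := by ext p <;> by_cases h : p.2 = 1 <;> simp [h, mul_assoc]
open Classical in
noncomputable def jr (B1 B2 : Type*) [Group B1] [Group B2] : B2 →* Equiv.Perm (B1 × B2) where
  toFun b :=
    { toFun := fun p => if p.1 = 1 then (p.1, b * p.2) else p
      invFun := fun p => if p.1 = 1 then (p.1, b⁻¹ * p.2) else p
      left_inv := by intro p; by_cases h : p.1 = 1 <;> simp [h]; ext <;> simp [h]
      right_inv := by intro p; by_cases h : p.1 = 1 <;> simp [h]; ext <;> simp [h] }
  map_one' := by ext p <;> by_cases h : p.1 = 1 <;> simp [h]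
  map_mul' a b := by ext p <;> by_cases h : p.1 = 1 <;> simp [h, mul_assoc]

lemma jlr {b : B1} {a : B2} (hb : b ≠ 1) (ha : a ≠ 1) : jl B1 B2 b * jr B1 B2 a ≠ jr B1 B2 a * jl B1 B2 b := by
  intro h
  have := congrArg (fun f => f (1, 1)) h
  simp [jl, jr, Equiv.Perm.mul_apply, hb, ha] at this

lemma exists_P {K : Type} [Group K] (M1 M2 : Subgroup K) (h1 : M1.Normal) (h2 : M2.Normal) :
    ∃ (P : Type) (_ : Group P) (a1 a2 : K →* P), (∀ x ∈ M1, a1 x = 1) ∧ (∀ x ∈ M2, a2 x = 1) ∧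
      ∀ f g, f ∉ M1 → g ∉ M2 → a1 f * a2 g ≠ a2 g * a1 f := by
  refine ⟨Equiv.Perm ((K ⧸ M1) × (K ⧸ M2)), inferInstance, (jl _ _).comp (QuotientGroup.mk' M1),
    (jr _ _).comp (QuotientGroup.mk' M2), ?_, ?_, ?_⟩
  · intro x hx
    have : QuotientGroup.mk' M1 x = 1 := (QuotientGroup.eq_one_iff x).2 hx
    rw [MonoidHom.comp_apply, this, map_one]
  · intro x hx
    have : QuotientGroup.mk' M2 x = 1 := (QuotientGroup.eq_one_iff x).2 hx
    rw [MonoidHom.comp_apply, this, map_one]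
  · intro f g hf hg
    apply jlr
    · intro h; exact hf ((QuotientGroup.eq_one_iff f).1 h)
    · intro h; exact hg ((QuotientGroup.eq_one_iff g).1 h)
end perm

section
variable {X : Type} {Q : Type} [CommGroup Q] {π : FreeGroup X →* Q}

inductive InR (π : FreeGroup X →* Q) (T : Set Q) : Q → FreeGroup X → Prop
  | one (q : Q) : q ∈ T → InR π T q 1
  | mul (q : Q) (w w' : FreeGroup X) : InR π T q w → InR π T (q * π w) w' → InR π T q (w * w')
  | inv (q : Q) (w : FreeGroup X) : InR π T q w → InR π T (q * π w) w⁻¹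
  | of (q : Q) (x : X) : q ∈ T → q * π (FreeGroup.of x) ∈ T → InR π T q (FreeGroup.of x)

lemma InR.letter {T : Set Q} (q : Q) (x : X) (b : Bool) (h1 : q ∈ T) (h2 : q * π (FreeGroup.of x ^ sg b) ∈ T) :
    InR π T q (FreeGroup.of x ^ sg b) := by
  cases b
  · have e : sg false = -1 := by simp [sg]
    rw [e] at h2 ⊢
    have := InR.inv _ _ (InR.of (π := π) (T := T) (q * π (FreeGroup.of x ^ (-1 : ℤ))) x h2 (by simpa using h1))
    simpa using this
  · have e : sg true = 1 := by simp [sg]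
    rw [e] at h2 ⊢
    simpa using InR.of q x h1 (by simpa using h2)

structure AddQ (W : Q → ℝ) : Prop where
  mul : ∀ a b, W (a * b) = W a + W b
lemma AddQ.one {W : Q → ℝ} (h : AddQ W) : W 1 = 0 := by have := h.mul 1 1; simp at this; exact this
lemma AddQ.inv {W : Q → ℝ} (h : AddQ W) (a) : W a⁻¹ = - W a := by
  have := h.mul a a⁻¹; rw [mul_inv_cancel, h.one] at this; linarith
lemma AddQ.letter {W : Q → ℝ} (h : AddQ W) {M : ℝ} (hM : ∀ x, |W (π (FreeGroup.of x))| ≤ M) (x : X) (b : Bool) :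
    |W (π (FreeGroup.of x ^ sg b))| ≤ M := by
  cases b
  · simpa [sg, h.inv] using hM x
  · simpa [sg] using hM x

lemma InR.word [Finite X] {T : Set Q} {W : Q → ℝ} (hW : AddQ W) {M : ℝ} (hM0 : 0 ≤ M) (hM : ∀ x, |W (π (FreeGroup.of x))| ≤ M) :
    ∀ (l : List (X × Bool)) (q : Q), (∀ q', |W q' - W q| ≤ l.length * M → q' ∈ T) → InR π T q (FreeGroup.mk l) := by
  intro l
  induction l with
  | nil => intro q h; exact InR.one q (h q (by simp))
  | cons p l ih =>
    intro q h
    rw [mk_cons']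
    have hp := hW.letter hM p.1 p.2
    have hlM : 0 ≤ (l.length : ℝ) * M := by positivity
    simp only [List.length_cons] at h
    push_cast at h
    apply InR.mul
    · apply InR.letter
      · apply h; simp; positivity
      · apply h; rw [hW.mul]; simp only [add_sub_cancel_left]; nlinarith
    · apply ih
      intro q' hq'
      apply h
      rw [hW.mul] at hq'
      have := abs_sub_abs_le_abs_sub (W q' - W q) (W (π (FreeGroup.of p.1 ^ sg p.2)))
      have e : W q' - W q - W (π (FreeGroup.of p.1 ^ sg p.2)) = W q' - (W q + W (π (FreeGroup.of p.1 ^ sg p.2))) := by ring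
      rw [e] at this
      nlinarith

def ed (π : FreeGroup X →* Q) (s : Q → FreeGroup X) (hs : ∀ q, π (s q) = q) (q : Q) (w : FreeGroup X) : π.ker :=
  ⟨s q * w * (s (q * π w))⁻¹, by rw [MonoidHom.mem_ker]; simp [hs]⟩

variable {s : Q → FreeGroup X} (hs : ∀ q, π (s q) = q)
lemma ed_one (q : Q) : ed π s hs q 1 = 1 := by
  apply Subtype.ext; simp [ed]
lemma ed_mul (q : Q) (w w') : ed π s hs q (w * w') = ed π s hs q w * ed π s hs (q * π w) w' := by
  apply Subtype.ext; simp [ed, mul_assoc]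
lemma ed_inv (q : Q) (w) : ed π s hs (q * π w) w⁻¹ = (ed π s hs q w)⁻¹ := by
  apply Subtype.ext; simp [ed, mul_assoc]

variable {P : Type} [Group P]

def ltr (π : FreeGroup X →* Q) (φ : Q → X → P) (x : X) : Equiv.Perm (Q × P) where
  toFun p := (p.1 * (π (FreeGroup.of x))⁻¹, φ (p.1 * (π (FreeGroup.of x))⁻¹) x * p.2)
  invFun p := (p.1 * π (FreeGroup.of x), (φ p.1 x)⁻¹ * p.2)
  left_inv p := by simp
  right_inv p := by simp

def rho (π : FreeGroup X →* Q) (φ : Q → X → P) : FreeGroup X →* Equiv.Perm (Q × P) := FreeGroup.lift (ltr π φ)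

def Path (π : FreeGroup X →* Q) (φ : Q → X → P) (q : Q) (w : FreeGroup X) (g : P) : Prop :=
  ∀ p, rho π φ w (q * π w, p) = (q, g * p)

variable {φ : Q → X → P}
lemma Path.mul {q : Q} {w w' : FreeGroup X} {g g' : P} (h : Path π φ q w g) (h' : Path π φ (q * π w) w' g') :
    Path π φ q (w * w') (g * g') := by
  intro p
  have := h' p
  rw [map_mul, map_mul, Equiv.Perm.mul_apply, ← mul_assoc, this, h, mul_assoc]
lemma Path.inv {q : Q} {w : FreeGroup X} {g : P} (h : Path π φ q w g) : Path π φ (q * π w) w⁻¹ g⁻¹ := by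
  intro p
  rw [map_inv, map_inv, Equiv.Perm.inv_eq_iff_eq, h]
  simp
lemma Path.one (q : Q) : Path π φ q 1 1 := by intro p; simp
lemma Path.of (q : Q) (x : X) : Path π φ q (FreeGroup.of x) (φ q x) := by
  intro p; simp [rho, ltr]

lemma path_of_InR {T : Set Q} (a : π.ker →* P) (hφ : ∀ q x, q ∈ T → q * π (FreeGroup.of x) ∈ T → φ q x = a (ed π s hs q (FreeGroup.of x)))
    {q : Q} {w : FreeGroup X} (h : InR π T q w) : Path π φ q w (a (ed π s hs q w)) := by
  induction h with
  | one q hq => rw [ed_one, map_one]; exact Path.one q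
  | mul q w w' _ _ h1 h2 => rw [ed_mul, map_mul]; exact h1.mul h2
  | inv q w _ h1 => rw [ed_inv, map_inv]; exact h1.inv
  | of q x h1 h2 => rw [← hφ q x h1 h2]; exact Path.of q x

/-- core argument -/
lemma tame_core {R : Set (FreeGroup X)} {s1 s2 : Q → FreeGroup X} (hs1 : ∀ q, π (s1 q) = q) (hs2 : ∀ q, π (s2 q) = q)
    (M1 M2 : Subgroup π.ker) (hM1 : M1.Normal) (hM2 : M2.Normal) (T1 T2 : Set Q)
    (hstrip : ∀ q x, q ∈ T1 ∩ T2 → q * π (FreeGroup.of x) ∈ T1 ∩ T2 → ed π s1 hs1 q (FreeGroup.of x) ∈ M1 ∧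
      ed π s2 hs2 q (FreeGroup.of x) ∈ M2)
    (hR0 : ∀ r ∈ R, π r = 1)
    (hR : ∀ r ∈ R, ∀ q, (InR π T1 q r ∧ ed π s1 hs1 q r ∈ M1) ∨ (InR π T2 q r ∧ ed π s2 hs2 q r ∈ M2))
    (a b : FreeGroup X) (ha : InR π T2 1 a) (hb : InR π T1 1 b) (ha0 : π a = 1) (hb0 : π b = 1)
    (hab : a * b * (b * a)⁻¹ ∈ Subgroup.normalClosure R) (hb1 : ed π s1 hs1 1 b ∉ M1) (ha1 : ed π s2 hs2 1 a ∉ M2) : False := by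
  classical
  obtain ⟨P, _, a1, a2, h1, h2, hne⟩ := exists_P M1 M2 hM1 hM2
  let φ : Q → X → P := fun q x => if q ∈ T1 ∧ q * π (FreeGroup.of x) ∈ T1 then a1 (ed π s1 hs1 q (FreeGroup.of x))
    else a2 (ed π s2 hs2 q (FreeGroup.of x))
  have p1 : ∀ {q w}, InR π T1 q w → Path π φ q w (a1 (ed π s1 hs1 q w)) :=
    fun h => path_of_InR hs1 a1 (fun q x hq hq' => by simp only [φ]; rw [if_pos ⟨hq, hq'⟩]) h
  have p2 : ∀ {q w}, InR π T2 q w → Path π φ q w (a2 (ed π s2 hs2 q w)) :=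
    fun h => path_of_InR hs2 a2 (fun q x hq hq' => by
      simp only [φ]
      split
      · next h' =>
        obtain ⟨e1, e2⟩ := hstrip q x ⟨h'.1, hq⟩ ⟨h'.2, hq'⟩
        rw [h1 _ e1, h2 _ e2]
      · rfl) h
  have hker : Subgroup.normalClosure R ≤ (rho π φ).ker := by
    apply Subgroup.normalClosure_le_normal
    intro r hr
    rw [SetLike.mem_coe, MonoidHom.mem_ker]
    ext1 ⟨q, p⟩
    have : Path π φ q r 1 := by
      rcases hR r hr q with ⟨h3, h4⟩ | ⟨h3, h4⟩
      · have := p1 h3; rwa [h1 _ h4] at this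
      · have := p2 h3; rwa [h2 _ h4] at this
    have := this p
    rw [hR0 r hr] at this
    simpa using this
  have h3 := hker hab
  rw [MonoidHom.mem_ker, map_mul, map_inv, mul_inv_eq_one] at h3
  have pa := p2 ha
  have pb := p1 hb
  have pab := (pa.mul (by rw [ha0, mul_one]; exact pb)) 1
  have pba := (pb.mul (by rw [hb0, mul_one]; exact pa)) 1
  have e1 : π (a * b) = 1 := by rw [map_mul, ha0, hb0, mul_one]
  have e2 : π (b * a) = 1 := by rw [map_mul, ha0, hb0, mul_one]
  rw [h3, e1] at pab
  rw [e2] at pba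
  rw [pba] at pab
  simp only [Prod.mk.injEq, mul_one, true_and] at pab
  exact hne _ _ hb1 ha1 pab
end
end MB

namespace MB
set_option linter.unusedSectionVars false

section
variable {F : Type*} [Group F]
def CS (S : Set F) (P : F → Prop) : Subgroup F := Subgroup.closure {a | ∃ s ∈ S, ∃ f, P f ∧ a = cc f s}

lemma CS_mono {S : Set F} {P P' : F → Prop} (h : ∀ f, P f → P' f) : CS S P ≤ CS S P' := by
  apply Subgroup.closure_mono
  rintro a ⟨s, hs, f, hf, rfl⟩
  exact ⟨s, hs, f, h f hf, rfl⟩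

lemma CS_cc {S : Set F} {P P' : F → Prop} (g : F) (h : ∀ f, P f → P' (g * f)) {w : F} (hw : w ∈ CS S P) :
    cc g w ∈ CS S P' := by
  have : CS S P ≤ (CS S P').comap (MulAut.conj g).toMonoidHom := by
    unfold CS
    rw [Subgroup.closure_le]
    rintro a ⟨s, hs, f, hf, rfl⟩
    apply Subgroup.subset_closure
    refine ⟨s, hs, g * f, h f hf, ?_⟩
    simp [cc, mul_assoc]
  exact this hw

lemma CS_height {S : Set F} (V : F → ℝ) {w : F} (hw : w ∈ CS S (fun _ => True)) : ∃ h : ℝ, w ∈ CS S (fun f => V f ≤ h) := by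
  unfold CS at hw
  induction hw using Subgroup.closure_induction with
  | mem x hx =>
    obtain ⟨s, hs, f, -, rfl⟩ := hx
    exact ⟨V f, Subgroup.subset_closure ⟨s, hs, f, le_rfl, rfl⟩⟩
  | one => exact ⟨0, one_mem _⟩
  | mul x y _ _ hx hy =>
    obtain ⟨a, ha⟩ := hx
    obtain ⟨b, hb⟩ := hy
    exact ⟨max a b, mul_mem (CS_mono (fun f hf => hf.trans (le_max_left _ _)) ha) (CS_mono (fun f hf => hf.trans (le_max_right _ _)) hb)⟩
  | inv x _ hx =>
    obtain ⟨a, ha⟩ := hx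
    exact ⟨a, inv_mem ha⟩

lemma CS_height_finite {S : Set F} (V : F → ℝ) {Z : Set F} (hZ : Z.Finite) (hw : ∀ w ∈ Z, w ∈ CS S (fun _ => True)) :
    ∃ h : ℝ, ∀ w ∈ Z, w ∈ CS S (fun f => V f ≤ h) := by
  induction Z, hZ using Set.Finite.induction_on with
  | empty => exact ⟨0, by simp⟩
  | insert _ _ ih =>
    obtain ⟨h, hh⟩ := ih (fun w h => hw w (Set.mem_insert_of_mem _ h))
    obtain ⟨h', hh'⟩ := CS_height V (hw _ (Set.mem_insert _ _))
    refine ⟨max h h', ?_⟩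
    rintro w (rfl | hw)
    · exact CS_mono (fun f hf => hf.trans (le_max_right _ _)) hh'
    · exact CS_mono (fun f hf => hf.trans (le_max_left _ _)) (hh w hw)
end

section
variable {X : Type} [Finite X] {Q : Type} [CommGroup Q] {π : FreeGroup X →* Q} {k : ℕ}

lemma half (D : Dat π k) {V : FreeGroup X → ℝ} (hV : AddFun V) {S : Set (FreeGroup X)}
    (hgen : ∀ w ∈ π.ker, w ∈ CS S (fun _ => True)) :
    ∃ (s : Q → FreeGroup X) (hs : ∀ q, π (s q) = q), ∀ d : ℝ, ∃ d' : ℝ, ∀ q x, V (s q) ≤ d →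
      (ed π s hs q (FreeGroup.of x) : FreeGroup X) ∈ CS S (fun f => V f ≤ d') := by
  obtain ⟨L, h1, h2, h3⟩ := exists_vsort (sv D.y) V
  have hL : Lok D.y V L := ⟨hV, h1, h2, h3⟩
  obtain ⟨S', c, hf, hK, -, h4⟩ := EL D hL (gens X) gens_finite
  obtain ⟨h0, hh0⟩ := CS_height_finite V hf (fun w hw => hgen w (hK hw))
  refine ⟨D.sec L, D.pi_sec hL, fun d => ⟨max 0 d + c + h0, fun q x hq => ?_⟩⟩
  have h5 := h4 q (FreeGroup.of x) ⟨(x, true), by simp [sg]⟩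
  apply h5.mem_subgroup
  rintro a ⟨ζ, hζ, μ, -, h6, rfl⟩
  apply CS_cc _ _ (hh0 ζ hζ)
  intro f hf
  rw [hV.mul]
  have : max 0 (V (D.sec L q)) ≤ max 0 d := max_le_max le_rfl hq
  linarith

lemma go_pos {T : Set Q} {W : Q → ℝ} (hW : AddQ W) (hT : ∀ q, 0 ≤ W q → q ∈ T) :
    ∀ (l : List (X × Bool)) (q : Q), 0 ≤ W q → (∀ p ∈ l, 0 ≤ W (π (FreeGroup.of p.1 ^ sg p.2))) →
      InR π T q (FreeGroup.mk l) ∧ 0 ≤ W (q * π (FreeGroup.mk l)) := by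
  intro l
  induction l with
  | nil =>
    intro q h _
    refine ⟨InR.one q (hT q h), ?_⟩
    rw [show (FreeGroup.mk [] : FreeGroup X) = 1 from rfl, map_one, mul_one]; exact h
  | cons p l ih =>
    intro q h hl
    rw [mk_cons']
    have hp := hl p (by simp)
    have hq : 0 ≤ W (q * π (FreeGroup.of p.1 ^ sg p.2)) := by rw [hW.mul]; linarith
    obtain ⟨i1, i2⟩ := ih _ hq (fun p hp => hl p (by simp [hp]))
    refine ⟨InR.mul _ _ _ (InR.letter _ _ _ (hT _ h) (hT _ hq)) i1, ?_⟩
    rw [map_mul, ← mul_assoc]; exact i2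

lemma go_neg {T : Set Q} {W : Q → ℝ} (hW : AddQ W) (hT : ∀ q, 0 ≤ W q → q ∈ T) :
    ∀ (l : List (X × Bool)) (q : Q), 0 ≤ W (q * π (FreeGroup.mk l)) → (∀ p ∈ l, W (π (FreeGroup.of p.1 ^ sg p.2)) ≤ 0) →
      InR π T q (FreeGroup.mk l) ∧ 0 ≤ W q := by
  intro l
  induction l with
  | nil =>
    intro q h _
    rw [show (FreeGroup.mk [] : FreeGroup X) = 1 from rfl, map_one, mul_one] at h
    exact ⟨InR.one q (hT q h), h⟩
  | cons p l ih =>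
    intro q h hl
    rw [mk_cons', map_mul, ← mul_assoc] at h
    rw [mk_cons']
    have hp := hl p (by simp)
    obtain ⟨i1, i2⟩ := ih _ h (fun p hp => hl p (by simp [hp]))
    have hq : 0 ≤ W q := by rw [hW.mul] at i2; linarith
    exact ⟨InR.mul _ _ _ (InR.letter _ _ _ (hT _ hq) (hT _ i2)) i1, hq⟩

lemma pi_mk (l : List (X × Bool)) : π (FreeGroup.mk l) = (l.map fun p => π (FreeGroup.of p.1 ^ sg p.2)).prod := by
  induction l with
  | nil => exact map_one π
  | cons p l ih => rw [mk_cons', map_mul, ih]; simp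

lemma go {T : Set Q} {W : Q → ℝ} (hW : AddQ W) (hT : ∀ q, 0 ≤ W q → q ∈ T) (g : FreeGroup X) (hg : 0 ≤ W (π g)) :
    ∃ g', π g' = π g ∧ InR π T 1 g' := by
  classical
  obtain ⟨l, -, rfl⟩ := exists_word g
  let P : X × Bool → Bool := fun p => decide (0 ≤ W (π (FreeGroup.of p.1 ^ sg p.2)))
  have e : π (FreeGroup.mk (l.filter P) * FreeGroup.mk (l.filter fun x => !P x)) = π (FreeGroup.mk l) := by
    rw [map_mul, pi_mk, pi_mk, pi_mk, ← List.prod_append, ← List.map_append]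
    exact ((List.filter_append_perm P l).map _).prod_eq
  refine ⟨_, e, ?_⟩
  obtain ⟨a1, a2⟩ := go_pos (π := π) hW hT (l.filter P) 1 (by rw [hW.one]) (fun p hp => by simpa [P] using (List.mem_filter.1 hp).2)
  refine InR.mul _ _ _ a1 (go_neg hW hT _ _ ?_ ?_).1
  · rw [one_mul, ← map_mul, e]; exact hg
  · intro p hp
    have := (List.mem_filter.1 hp).2
    simp [P] at this
    rw [map_zpow]; exact this.le

lemma InR.cj {T : Set Q} {g s : FreeGroup X} (hg : InR π T 1 g) (hs : InR π T (π g) s) (h0 : π s = 1) :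
    InR π T 1 (cc g s) := by
  unfold cc
  refine InR.mul _ _ _ (InR.mul _ _ _ hg (by simpa using hs)) ?_
  have := InR.inv _ _ hg
  simpa [h0] using this

/-- final step -/
lemma tame_fin {N : Subgroup (FreeGroup X)} (hN : N.Normal) {V : FreeGroup X → ℝ} (hV : AddFun V) (hV0 : ∃ f, V f ≠ 0)
    {S : Set (FreeGroup X)} (hSK : S ⊆ π.ker) {d : ℝ} (h : ∀ w ∈ π.ker, w ∈ CS S (fun f => V f ≤ d) ⊔ N) :
    ∀ s ∈ S, ∃ w ∈ CS S (fun f => V f < 0), s * w⁻¹ ∈ N := by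
  obtain ⟨t, ht⟩ : ∃ t, V t < -d := by
    obtain ⟨f, hf⟩ := hV0
    obtain ⟨f, hf⟩ : ∃ f, V f < 0 := by
      rcases lt_or_gt_of_ne hf with h | h
      · exact ⟨f, h⟩
      · exact ⟨f⁻¹, by rw [hV.inv]; linarith⟩
    obtain ⟨n, hn⟩ := exists_nat_gt (d / (-V f))
    refine ⟨f ^ n, ?_⟩
    rw [hV.pow]
    rw [div_lt_iff₀ (by linarith)] at hn
    linarith
  intro s hs
  have h1 := h (cc t⁻¹ s) (π.normal_ker.conj_mem _ (hSK hs) _)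
  rw [Subgroup.mem_sup_of_normal_right] at h1
  obtain ⟨c, hc, n, hn, e⟩ := h1
  refine ⟨cc t c, CS_cc t (fun f hf => by rw [hV.mul]; linarith) hc, ?_⟩
  have e2 : s * (cc t c)⁻¹ = (t * c) * n * (t * c)⁻¹ := by
    have : s = cc t (c * n) := by rw [e]; simp [cc, mul_assoc]
    rw [this]; simp [cc, mul_assoc]
  rw [e2]; exact hN.conj_mem _ hn _

lemma tame (D : Dat π k) (hπ : Function.Surjective π) {R S : Set (FreeGroup X)} (hR : R.Finite) (hS : S.Finite)
    (hRK : ∀ r ∈ R, π r = 1) (hcom : ∀ a ∈ π.ker, ∀ b ∈ π.ker, a * b * (b * a)⁻¹ ∈ Subgroup.normalClosure R)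
    (hSK : S ⊆ π.ker) (hgen : ∀ w ∈ π.ker, w ∈ CS S (fun _ => True))
    {V : FreeGroup X → ℝ} (hV : AddFun V) (hV0 : ∃ f, V f ≠ 0) :
    (∀ s ∈ S, ∃ w ∈ CS S (fun f => 0 < V f), s * w⁻¹ ∈ Subgroup.normalClosure R) ∨
    (∀ s ∈ S, ∃ w ∈ CS S (fun f => V f < 0), s * w⁻¹ ∈ Subgroup.normalClosure R) := by
  set N := Subgroup.normalClosure R with hN
  have nN : N.Normal := Subgroup.normalClosure_normal
  by_cases hVK : ∃ κ ∈ π.ker, V κ ≠ 0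
  · left
    obtain ⟨κ, hκ, h0⟩ := hVK
    obtain ⟨κ, hκ, h0⟩ : ∃ κ ∈ π.ker, 0 < V κ := by
      rcases lt_or_gt_of_ne h0 with h | h
      · exact ⟨κ⁻¹, inv_mem hκ, by rw [hV.inv]; linarith⟩
      · exact ⟨κ, hκ, h⟩
    intro s hs
    refine ⟨cc κ s, Subgroup.subset_closure ⟨s, hs, κ, h0, rfl⟩, ?_⟩
    have := hcom s (hSK hs) κ hκ
    simpa [cc, mul_assoc] using this
  push Not at hVK
  have hNK : N ≤ π.ker := by
    apply Subgroup.normalClosure_le_normal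
    intro r hr; exact hRK r hr
  -- congruence of conjugates
  have hcong : ∀ g g' w, π g = π g' → w ∈ π.ker → ∀ H : Subgroup (FreeGroup X), N ≤ H → cc g w ∈ H → cc g' w ∈ H := by
    intro g g' w e hw H hH h
    have h1 := hcom (g' * g⁻¹) (by rw [MonoidHom.mem_ker]; simp [e]) (cc g w) (π.normal_ker.conj_mem _ hw _)
    have e2 : cc g' w = (g' * g⁻¹ * cc g w * (cc g w * (g' * g⁻¹))⁻¹) * cc g w := by simp [cc, mul_assoc]
    rw [e2]; exact mul_mem (hH h1) h
  have hWV : ∀ a b, π a = π b → V a = V b := by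
    intro a b e
    have := hVK (a * b⁻¹) (by rw [MonoidHom.mem_ker]; simp [e])
    rw [hV.mul, hV.inv] at this; linarith
  choose σ hσ using hπ
  let W : Q → ℝ := fun q => V (σ q)
  have hWπ : ∀ f, W (π f) = V f := fun f => hWV _ _ (hσ _)
  have hW : AddQ W := ⟨fun a b => by
    simp only [W]; rw [← hV.mul]; apply hWV; rw [map_mul, hσ, hσ, hσ]⟩
  have hW' : AddQ (fun q => - W q) := ⟨fun a b => by rw [hW.mul]; ring⟩
  obtain ⟨s1, hs1, hd1⟩ := half D hV hgen
  obtain ⟨s2, hs2, hd2⟩ := half D hV.neg hgen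
  obtain ⟨M0, hM0⟩ := Finite.exists_le (fun x => |W (π (FreeGroup.of x))|)
  let M := max M0 0
  have hM : ∀ x, |W (π (FreeGroup.of x))| ≤ M := fun x => (hM0 x).trans (le_max_left _ _)
  have hMn : 0 ≤ M := le_max_right _ _
  obtain ⟨ℓ, hℓ⟩ : ∃ ℓ : ℕ, ∀ r ∈ R ∪ S, freeNorm r ≤ ℓ := by
    obtain ⟨ℓ, h⟩ := ((hR.union hS).image freeNorm).bddAbove
    exact ⟨ℓ, fun r hr => h ⟨r, hr, rfl⟩⟩
  let d : ℝ := ℓ * M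
  have hd0 : 0 ≤ d := by positivity
  obtain ⟨d1, hd1⟩ := hd1 d
  obtain ⟨d2, hd2⟩ := hd2 d
  let d' := max 0 (max d1 d2)
  have hd1' : d1 ≤ d' := (le_max_left _ _).trans (le_max_right _ _)
  have hd2' : d2 ≤ d' := (le_max_right _ _).trans (le_max_right _ _)
  have hd0' : 0 ≤ d' := le_max_left _ _
  let K1 := CS S (fun f => V f ≤ d') ⊔ N
  let K2 := CS S (fun f => - V f ≤ d') ⊔ N
  by_cases c1 : ∀ w ∈ π.ker, w ∈ K1
  · right; exact tame_fin nN hV hV0 hSK c1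
  by_cases c2 : ∀ w ∈ π.ker, w ∈ K2
  · left
    intro s hs
    obtain ⟨w, hw, h⟩ := tame_fin nN hV.neg (by obtain ⟨f, hf⟩ := hV0; exact ⟨f, by simpa using hf⟩) hSK c2 s hs
    exact ⟨w, CS_mono (fun f hf => by linarith) hw, h⟩
  exfalso
  have pick : ∀ P : FreeGroup X → Prop, (¬ ∀ w ∈ π.ker, w ∈ CS S P ⊔ N) → ∃ g, ∃ s ∈ S, ¬ P g ∧ cc g s ∉ CS S P ⊔ N := by
    intro P h
    by_contra hc
    push Not at hc
    apply h
    intro w hw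
    have : CS S (fun _ => True) ≤ CS S P ⊔ N := by
      conv_lhs => unfold CS
      rw [Subgroup.closure_le]
      rintro a ⟨s, hs, f, -, rfl⟩
      by_cases hf : P f
      · exact (le_sup_left : CS S P ≤ CS S P ⊔ N) (Subgroup.subset_closure ⟨s, hs, f, hf, rfl⟩)
      · exact hc f s hs hf
    exact this (hgen w hw)
  obtain ⟨g1, t1, ht1, hg1, hn1⟩ := pick _ c1
  obtain ⟨g2, t2, ht2, hg2, hn2⟩ := pick _ c2
  simp only [not_le] at hg1 hg2
  let T1 : Set Q := {q | -d ≤ W q}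
  let T2 : Set Q := {q | W q ≤ d}
  have hT1 : ∀ q, 0 ≤ W q → q ∈ T1 := fun q hq => by simp only [T1, Set.mem_setOf_eq]; linarith
  have hT2 : ∀ q, 0 ≤ - W q → q ∈ T2 := fun q hq => by simp only [T2, Set.mem_setOf_eq]; linarith
  have word1 : ∀ r ∈ R ∪ S, ∀ q, 0 ≤ W q → InR π T1 q r := by
    intro r hr q hq
    obtain ⟨l, hl, e⟩ := exists_word r
    rw [← e]
    apply InR.word hW hMn hM
    intro q' h
    have : (l.length : ℝ) * M ≤ d := by
      apply mul_le_mul_of_nonneg_right _ hMn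
      rw [hl]; exact_mod_cast hℓ r hr
    have := (abs_le.1 (h.trans this)).1
    simp only [T1, Set.mem_setOf_eq]; linarith
  have word2 : ∀ r ∈ R ∪ S, ∀ q, W q ≤ 0 → InR π T2 q r := by
    intro r hr q hq
    obtain ⟨l, hl, e⟩ := exists_word r
    rw [← e]
    apply InR.word hW hMn hM
    intro q' h
    have : (l.length : ℝ) * M ≤ d := by
      apply mul_le_mul_of_nonneg_right _ hMn
      rw [hl]; exact_mod_cast hℓ r hr
    have := (abs_le.1 (h.trans this)).2
    simp only [T2, Set.mem_setOf_eq]; linarith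
  obtain ⟨g1', e1, i1⟩ := go hW hT1 g1 (by rw [hWπ]; linarith)
  obtain ⟨g2', e2, i2⟩ := go hW' hT2 g2 (by rw [hWπ]; linarith)
  have nrm : ∀ H : Subgroup (FreeGroup X), N ≤ H → (H.subgroupOf π.ker).Normal := by
    intro H hH
    constructor
    intro n hn g
    rw [Subgroup.mem_subgroupOf] at hn ⊢
    have := mul_mem (hH (hcom g g.2 n n.2)) hn
    simpa [mul_assoc] using this
  have edc : ∀ (s : Q → FreeGroup X) (hs : ∀ q, π (s q) = q) (w : FreeGroup X) (q : Q), π w = 1 →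
      (ed π s hs q w : FreeGroup X) = cc (s q) w := by
    intro s hs w q hw
    simp [ed, cc, hw]
  have hcb : ∀ g, ∀ t ∈ S, π (cc g t) = 1 := fun g t ht => π.normal_ker.conj_mem _ (hSK ht) _
  refine tame_core (R := R) hs1 hs2 (K1.subgroupOf π.ker) (K2.subgroupOf π.ker) (nrm _ le_sup_right) (nrm _ le_sup_right) T1 T2 ?_ hRK ?_
    (cc g2' t2) (cc g1' t1) ?_ ?_ (hcb _ _ ht2) (hcb _ _ ht1) (hcom _ (hcb _ _ ht2) _ (hcb _ _ ht1)) ?_ ?_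
  · rintro q x ⟨q1, q2⟩ -
    have q3 : V (s1 q) = W q := by rw [← hWπ, hs1]
    have q4 : V (s2 q) = W q := by rw [← hWπ, hs2]
    simp only [T1, T2, Set.mem_setOf_eq] at q1 q2
    rw [Subgroup.mem_subgroupOf, Subgroup.mem_subgroupOf]
    constructor
    · exact (le_sup_left : _ ≤ K1) (CS_mono (fun f hf => hf.trans hd1') (hd1 q x (by linarith)))
    · exact (le_sup_left : _ ≤ K2) (CS_mono (fun f hf => hf.trans hd2') (hd2 q x (by linarith)))
  · intro r hr q
    have hrN : ∀ g, cc g r ∈ N := fun g => nN.conj_mem _ (Subgroup.subset_normalClosure hr) _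
    rcases le_total 0 (W q) with h | h
    · left
      refine ⟨word1 r (Or.inl hr) q h, ?_⟩
      rw [Subgroup.mem_subgroupOf, edc _ _ _ _ (hRK r hr)]
      exact (le_sup_right : N ≤ K1) (hrN _)
    · right
      refine ⟨word2 r (Or.inl hr) q h, ?_⟩
      rw [Subgroup.mem_subgroupOf, edc _ _ _ _ (hRK r hr)]
      exact (le_sup_right : N ≤ K2) (hrN _)
  · refine i2.cj (word2 _ (Or.inr ht2) _ ?_) (hSK ht2)
    rw [e2, hWπ]; linarith
  · refine i1.cj (word1 _ (Or.inr ht1) _ ?_) (hSK ht1)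
    rw [e1, hWπ]; linarith
  · rw [Subgroup.mem_subgroupOf, edc _ _ _ _ (hcb _ _ ht1)]
    intro h
    have h' := hcong (s1 1) 1 _ (by rw [hs1, map_one]) (hcb _ _ ht1) K1 le_sup_right h
    simp only [cc, one_mul, inv_one, mul_one] at h'
    exact hn1 (hcong _ _ _ e1 (hSK ht1) K1 le_sup_right h')
  · rw [Subgroup.mem_subgroupOf, edc _ _ _ _ (hcb _ _ ht2)]
    intro h
    have h' := hcong (s2 1) 1 _ (by rw [hs2, map_one]) (hcb _ _ ht2) K2 le_sup_right h
    simp only [cc, one_mul, inv_one, mul_one] at h'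
    exact hn2 (hcong _ _ _ e2 (hSK ht2) K2 le_sup_right h')
end
end MB

namespace MB
set_option linter.unusedSectionVars false

section
variable {X : Type} [Fintype X] [DecidableEq X]

noncomputable def vecH (X : Type) [DecidableEq X] : FreeGroup X →* Multiplicative (X → ℤ) :=
  FreeGroup.lift fun x => Multiplicative.ofAdd (Pi.single x 1)
noncomputable def vec (f : FreeGroup X) : X → ℤ := (vecH X f).toAdd
lemma vec_mul (a b : FreeGroup X) : vec (a * b) = vec a + vec b := by simp [vec]
lemma vec_of (x : X) : vec (FreeGroup.of x) = Pi.single x 1 := by simp [vec, vecH]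
lemma vec_zpow (a : FreeGroup X) (n : ℤ) : vec (a ^ n) = n • vec a := by simp [vec]
lemma vec_one : vec (1 : FreeGroup X) = 0 := by simp [vec]

lemma list_sum_univ {M : Type*} [AddCommMonoid M] {L : List X} (nd : L.Nodup) (full : ∀ i, i ∈ L) (f : X → M) :
    (L.map f).sum = ∑ i, f i := by
  rw [← List.sum_toFinset _ nd]; congr 1; ext i; simp [full]
lemma list_prod_univ {M : Type*} [CommMonoid M] {L : List X} (nd : L.Nodup) (full : ∀ i, i ∈ L) (f : X → M) :
    (L.map f).prod = ∏ i, f i := by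
  rw [← List.prod_toFinset _ nd]; congr 1; ext i; simp [full]

variable {Q : Type} [CommGroup Q] {π : FreeGroup X →* Q} {k : ℕ}

lemma pi_vec (f : FreeGroup X) : π f = ∏ z, π (FreeGroup.of z) ^ (vec f z) := by
  let ψ : FreeGroup X →* Q :=
    { toFun := fun f => ∏ z, π (FreeGroup.of z) ^ (vec f z)
      map_one' := by simp [vec_one]
      map_mul' := fun a b => by simp [vec_mul, zpow_add, Finset.prod_mul_distrib] }
  have : π = ψ := by
    apply FreeGroup.ext_hom
    intro x
    simp only [ψ, MonoidHom.coe_mk, OneHom.coe_mk, vec_of]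
    rw [Finset.prod_eq_single x]
    · simp
    · intro b _ hb; simp [Pi.single_eq_of_ne hb]
    · simp
  conv_lhs => rw [this]
  rfl

lemma pi_cw {L : List X} (nd : L.Nodup) (full : ∀ i, i ∈ L) (f : FreeGroup X) : π (cw FreeGroup.of L (vec f)) = π f := by
  rw [pi_vec f, ← list_prod_univ nd full, cw, map_list_prod, List.map_map]
  simp [Function.comp_def]

noncomputable def Vv (v : X → ℝ) (f : FreeGroup X) : ℝ := ∑ z, v z * vec f z
lemma Vv_add (v : X → ℝ) : AddFun (Vv v) := ⟨fun a b => by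
  simp [Vv, vec_mul, mul_add, Finset.sum_add_distrib]⟩
lemma Vv_neg (v : X → ℝ) (f) : Vv (fun z => - v z) f = - Vv v f := by simp [Vv]

variable {R S : Set (FreeGroup X)} {L : List X}

def Gd (R S : Set (FreeGroup X)) (L : List X) (v : X → ℝ) (t : ℕ) : Prop :=
  GP R FreeGroup.of L S t (1 / ((t : ℝ) + 1)) t v

lemma GPset_mono {v : X → ℝ} {D D' : ℤ} {e e' : ℝ} (h : D ≤ D') (h' : e' ≤ e) :
    GPset FreeGroup.of L S D e v ⊆ GPset FreeGroup.of L S D' e' v := by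
  rintro a ⟨s, hs, q, h1, h2, rfl⟩
  exact ⟨s, hs, q, h1.trans h, h'.trans h2, rfl⟩

lemma one_div_mono {t t' : ℕ} (h : t ≤ t') : 1 / ((t' : ℝ) + 1) ≤ 1 / ((t : ℝ) + 1) := by
  apply one_div_le_one_div_of_le
  · positivity
  · have : (t : ℝ) ≤ t' := by exact_mod_cast h
    linarith

lemma Gd.mono {v : X → ℝ} {t t' : ℕ} (h : Gd R S L v t) (ht : t ≤ t') : Gd R S L v t' := by
  intro s hs
  obtain ⟨w, h1, h2⟩ := h s hs
  exact ⟨w, (h1.mono_set (GPset_mono (by exact_mod_cast ht) (one_div_mono ht))).mono ht, h2.mono ht⟩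

lemma GPset_exists {v : X → ℝ} {w : FreeGroup X}
    (hw : w ∈ Subgroup.closure {a | ∃ s ∈ S, ∃ q : X → ℤ, 0 < ∑ z, v z * q z ∧ a = cc (cw FreeGroup.of L q) s}) :
    ∃ t : ℕ, PrLe (GPset FreeGroup.of L S t (1 / ((t : ℝ) + 1)) v) w t := by
  have mn : ∀ {t t' : ℕ} {w}, t ≤ t' → PrLe (GPset FreeGroup.of L S t (1 / ((t : ℝ) + 1)) v) w t →
      PrLe (GPset FreeGroup.of L S t' (1 / ((t' : ℝ) + 1)) v) w t := fun ht h =>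
    h.mono_set (GPset_mono (by exact_mod_cast ht) (one_div_mono ht))
  induction hw using Subgroup.closure_induction with
  | mem x hx =>
    obtain ⟨s, hs, q, hq, rfl⟩ := hx
    obtain ⟨n, hn⟩ := exists_nat_gt (1 / ∑ z, v z * (q z : ℝ))
    refine ⟨max (max n 1) (nsq q).toNat, PrLe.mono (n := 1) (PrLe.of_mem ?_) (by omega)⟩
    refine ⟨s, hs, q, ?_, ?_, rfl⟩
    · have := Int.self_le_toNat (nsq q)
      refine this.trans ?_
      exact_mod_cast le_max_right _ _
    · refine le_trans (one_div_mono (t := n) (by omega)) ?_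
      rw [div_le_iff₀ (by positivity)]
      rw [div_lt_iff₀ hq] at hn
      nlinarith
  | one => exact ⟨0, PrLe.one⟩
  | mul x y _ _ hx hy =>
    obtain ⟨a, ha⟩ := hx
    obtain ⟨b, hb⟩ := hy
    exact ⟨a + b, (mn (by omega) ha).mul (mn (by omega) hb)⟩
  | inv x _ hx =>
    obtain ⟨a, ha⟩ := hx
    exact ⟨a, ha.inv⟩

lemma Gd_exists (nd : L.Nodup) (full : ∀ i, i ∈ L) (hS : S.Finite) (hSK : S ⊆ π.ker)
    (hcom : ∀ a ∈ π.ker, ∀ b ∈ π.ker, a * b * (b * a)⁻¹ ∈ Subgroup.normalClosure R) {v : X → ℝ}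
    (h : ∀ s ∈ S, ∃ w ∈ CS S (fun f => 0 < Vv v f), s * w⁻¹ ∈ Subgroup.normalClosure R) : ∃ t, Gd R S L v t := by
  have key : ∀ s ∈ S, ∃ t : ℕ, ∃ w, PrLe (GPset FreeGroup.of L S t (1 / ((t : ℝ) + 1)) v) w t ∧ Eq' R s w t := by
    intro s hs
    obtain ⟨w, hw, hsw⟩ := h s hs
    set H := Subgroup.closure {a | ∃ s ∈ S, ∃ q : X → ℤ, 0 < ∑ z, v z * q z ∧ a = cc (cw FreeGroup.of L q) s} with hH
    have hle : CS S (fun f => 0 < Vv v f) ≤ H ⊔ Subgroup.normalClosure R := by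
      conv_lhs => unfold CS
      rw [Subgroup.closure_le]
      rintro a ⟨s, hs, f, hf, rfl⟩
      have h1 : cc (cw FreeGroup.of L (vec f)) s ∈ H := Subgroup.subset_closure ⟨s, hs, vec f, hf, rfl⟩
      have h2 := hcom (f * (cw FreeGroup.of L (vec f))⁻¹) (by rw [MonoidHom.mem_ker]; simp [pi_cw nd full])
        (cc (cw FreeGroup.of L (vec f)) s) (π.normal_ker.conj_mem _ (hSK hs) _)
      have h3 := mul_mem ((le_sup_right : _ ≤ H ⊔ Subgroup.normalClosure R) h2) ((le_sup_left : H ≤ H ⊔ Subgroup.normalClosure R) h1)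
      convert h3 using 1
      simp [cc, mul_assoc]
    have hs' : s ∈ H ⊔ Subgroup.normalClosure R := by
      have := mul_mem ((le_sup_right : _ ≤ H ⊔ Subgroup.normalClosure R) hsw) (hle hw)
      simpa using this
    have : (Subgroup.normalClosure R).Normal := Subgroup.normalClosure_normal
    rw [Subgroup.mem_sup_of_normal_right] at hs'
    obtain ⟨c, hc, n, hn, e⟩ := hs'
    obtain ⟨t, ht⟩ := GPset_exists hc
    obtain ⟨m, hm⟩ := exists_ar (this.conj_mem n hn c)
    have hm' : Eq' R s c m := by unfold Eq'; rw [← e]; exact hm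
    exact ⟨max t m, c, (ht.mono_set (GPset_mono (by exact_mod_cast le_max_left _ _) (one_div_mono (le_max_left _ _)))).mono (le_max_left _ _),
      hm'.mono (le_max_right _ _)⟩
  choose! t ht using key
  obtain ⟨T, hT⟩ := (hS.image t).bddAbove
  refine ⟨T, fun s hs => ?_⟩
  obtain ⟨w, h1, h2⟩ := ht s hs
  have hl : t s ≤ T := hT ⟨s, hs, rfl⟩
  exact ⟨w, (h1.mono_set (GPset_mono (by exact_mod_cast hl) (one_div_mono hl))).mono hl, h2.mono hl⟩

lemma Gd_open {v : X → ℝ} {t : ℕ} (h : Gd R S L v t) {v' : X → ℝ} (hv : ∀ z, |v' z - v z| ≤ 1 / (2 * ((t : ℝ) + 1) ^ 2)) :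
    Gd R S L v' (2 * t + 1) := by
  intro s hs
  obtain ⟨w, h1, h2⟩ := h s hs
  refine ⟨w, (h1.mono_set ?_).mono (by omega), h2.mono (by omega)⟩
  rintro a ⟨s, hs, q, h1, h2, rfl⟩
  refine ⟨s, hs, q, h1.trans (by push_cast; omega), ?_, rfl⟩
  have e : ∑ z, v z * (q z : ℝ) - ∑ z, v' z * (q z : ℝ) ≤ (1 / (2 * ((t : ℝ) + 1) ^ 2)) * t := by
    rw [← Finset.sum_sub_distrib]
    calc ∑ z, (v z * (q z : ℝ) - v' z * q z) ≤ ∑ z, (1 / (2 * ((t : ℝ) + 1) ^ 2)) * ((q z : ℝ) ^ 2) := by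
          apply Finset.sum_le_sum
          intro z _
          have a1 : |(q z : ℝ)| ≤ (q z : ℝ) ^ 2 := by
            have : |q z| ≤ q z ^ 2 := by
              rw [← sq_abs]; rcases (abs_nonneg (q z)).eq_or_lt with h | h
              · rw [← h]; simp
              · nlinarith
            exact_mod_cast this
          calc v z * (q z : ℝ) - v' z * q z = -((v' z - v z) * q z) := by ring
            _ ≤ |(v' z - v z) * q z| := neg_le_abs _
            _ = |v' z - v z| * |(q z : ℝ)| := abs_mul _ _
            _ ≤ _ := mul_le_mul (hv z) a1 (abs_nonneg _) (by positivity)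
      _ = (1 / (2 * ((t : ℝ) + 1) ^ 2)) * (nsq q : ℝ) := by
          rw [← Finset.mul_sum]; simp [nsq]
      _ ≤ _ := by
          apply mul_le_mul_of_nonneg_left _ (by positivity)
          exact_mod_cast h1
  have e2 : (1 / (2 * ((t : ℝ) + 1) ^ 2)) * t ≤ 1 / (2 * ((t : ℝ) + 1)) := by
    rw [div_mul_eq_mul_div, div_le_div_iff₀ (by positivity) (by positivity)]
    nlinarith [(Nat.cast_nonneg t : (0 : ℝ) ≤ t)]
  have e3 : 1 / (((2 * t + 1 : ℕ) : ℝ) + 1) = 1 / ((t : ℝ) + 1) - 1 / (2 * ((t : ℝ) + 1)) := by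
    push_cast
    field_simp
    ring
  rw [e3]; linarith

lemma comm_final (D : Dat π k) (hπ : Function.Surjective π) (hR : R.Finite) (hS : S.Finite)
    (hRK : ∀ r ∈ R, π r = 1) (hcom : ∀ a ∈ π.ker, ∀ b ∈ π.ker, a * b * (b * a)⁻¹ ∈ Subgroup.normalClosure R)
    (hSK : S ⊆ π.ker) (hgen : ∀ w ∈ π.ker, w ∈ CS S (fun _ => True))
    (hSc : ∀ i j : X, ∀ ε δ : ℤ, (ε = 1 ∨ ε = -1) → (δ = 1 ∨ δ = -1) →
      (FreeGroup.of i ^ ε)⁻¹ * (FreeGroup.of j ^ δ)⁻¹ * FreeGroup.of i ^ ε * FreeGroup.of j ^ δ ∈ S) :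
    ∃ C : ℕ, ∀ n : ℕ, ∀ f : FreeGroup X, freeNorm f ≤ n → ∀ s ∈ S, ∀ s' ∈ S, Cm R s (cc f s') (C ^ ((n + 1) ^ 2)) := by
  let L : List X := Finset.univ.toList
  have nd : L.Nodup := Finset.nodup_toList _
  have full : ∀ i, i ∈ L := fun i => by simp [L]
  have good : ∀ v : X → ℝ, ∑ z, v z ^ 2 = 1 → ∃ t, Gd R S L v t ∨ Gd R S L (fun z => - v z) t := by
    intro v hv
    have : ∃ f, Vv v f ≠ 0 := by
      have : ∃ z, v z ≠ 0 := by
        by_contra hc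
        push Not at hc
        simp [hc] at hv
      obtain ⟨z, hz⟩ := this
      refine ⟨FreeGroup.of z, ?_⟩
      unfold Vv
      rw [Finset.sum_eq_single z]
      · simpa [vec_of] using hz
      · intro b _ hb; simp [vec_of, Pi.single_eq_of_ne hb]
      · simp
    rcases tame D hπ hR hS hRK hcom hSK hgen (Vv_add v) this with h | h
    · obtain ⟨t, ht⟩ := Gd_exists nd full hS hSK hcom h; exact ⟨t, Or.inl ht⟩
    · obtain ⟨t, ht⟩ := Gd_exists (v := fun z => - v z) nd full hS hSK hcom (fun s hs => by
        obtain ⟨w, hw, e⟩ := h s hs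
        exact ⟨w, CS_mono (fun f hf => by rw [Vv_neg]; linarith) hw, e⟩)
      exact ⟨t, Or.inr ht⟩
  have hcpt : IsCompact {v : X → ℝ | ∑ z, v z ^ 2 = 1} := by
    apply Metric.isCompact_of_isClosed_isBounded
    · exact isClosed_eq (by fun_prop) (by fun_prop)
    · rw [Metric.isBounded_iff_subset_closedBall 0]
      refine ⟨1, fun v hv => ?_⟩
      rw [mem_closedBall_zero_iff, pi_norm_le_iff_of_nonneg (by norm_num)]
      intro z
      have h1 : v z ^ 2 ≤ 1 := by
        have hv' : ∑ z, v z ^ 2 = 1 := hv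
        rw [← hv']
        exact Finset.single_le_sum (f := fun z => v z ^ 2) (fun i _ => sq_nonneg _) (Finset.mem_univ z)
      rw [Real.norm_eq_abs]
      exact abs_le_one_iff_mul_self_le_one.2 (by nlinarith)
  have hunif : ∃ t, ∀ v ∈ {v : X → ℝ | ∑ z, v z ^ 2 = 1}, Gd R S L v t ∨ Gd R S L (fun z => - v z) t := by
    refine hcpt.induction_on (p := fun s => ∃ t, ∀ v ∈ s, Gd R S L v t ∨ Gd R S L (fun z => - v z) t) ⟨0, by simp⟩ ?_ ?_ ?_
    · rintro s s' hss ⟨t, ht⟩; exact ⟨t, fun v hv => ht v (hss hv)⟩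
    · rintro s s' ⟨t, ht⟩ ⟨t', ht'⟩
      refine ⟨max t t', ?_⟩
      rintro v (hv | hv)
      · exact (ht v hv).imp (fun h => h.mono (le_max_left _ _)) (fun h => h.mono (le_max_left _ _))
      · exact (ht' v hv).imp (fun h => h.mono (le_max_right _ _)) (fun h => h.mono (le_max_right _ _))
    · intro v hv
      obtain ⟨t, ht⟩ := good v hv
      refine ⟨Metric.closedBall v (1 / (2 * ((t : ℝ) + 1) ^ 2)), mem_nhdsWithin_of_mem_nhds (Metric.closedBall_mem_nhds _ (by positivity)), 2 * t + 1, ?_⟩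
      intro v' hv'
      rw [Metric.mem_closedBall, dist_pi_le_iff (by positivity)] at hv'
      simp only [Real.dist_eq] at hv'
      rcases ht with h | h
      · left; exact Gd_open h hv'
      · right; apply Gd_open h; intro z
        rw [show - v' z - - v z = -(v' z - v z) by ring, abs_neg]; exact hv' z
  obtain ⟨t, ht⟩ := hunif
  refine COMM (L := L) (S := S) (R := R) ⟨hSc, nd, full⟩ hS ?_ (Dq := t) (by positivity) (ε := 1 / ((t : ℝ) + 1)) (by positivity) (K0 := t) ht
  intro s hs s' hs' f
  obtain ⟨n, hn⟩ := exists_ar (hcom s (hSK hs) (cc f s') (π.normal_ker.conj_mem _ (hSK hs') _))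
  refine ⟨n, ?_⟩
  unfold Cm Eq'
  convert hn using 1
  simp [mul_assoc]
end
end MB

namespace MB
set_option linter.unusedSectionVars false

section
variable {ι σ : Type} [Fintype ι] [Fintype σ]

abbrev JJ (ι σ : Type) := (ι → ℕ) × σ
def shf (ν : ι → ℕ) (j : JJ ι σ) : JJ ι σ := (ν + j.1, j.2)
def dg (j : JJ ι σ) : ℕ := ∑ i, j.1 i

lemma shf_inj (ν : ι → ℕ) : Function.Injective (shf ν : JJ ι σ → JJ ι σ) := by
  rintro ⟨a, s⟩ ⟨b, t⟩ h
  simp only [shf, Prod.mk.injEq, add_right_inj] at h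
  exact Prod.ext h.1 h.2
lemma dg_shf (ν : ι → ℕ) (j : JJ ι σ) : dg (shf ν j) = ∑ i, ν i + dg j := by
  simp [dg, shf, Finset.sum_add_distrib]

noncomputable def sh (ν : ι → ℕ) : (JJ ι σ →₀ ℤ) →+ (JJ ι σ →₀ ℤ) := Finsupp.mapDomain.addMonoidHom (shf ν)
lemma sh_apply (ν : ι → ℕ) (m : JJ ι σ →₀ ℤ) (j) : sh ν m (shf ν j) = m j := Finsupp.mapDomain_apply (shf_inj ν) m j
lemma sh_ne (ν : ι → ℕ) (m : JJ ι σ →₀ ℤ) {j} (h : sh ν m j ≠ 0) : ∃ j', j = shf ν j' ∧ m j' ≠ 0 := by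
  classical
  have h1 : j ∈ (sh ν m).support := by simpa using h
  have h2 := Finsupp.mapDomain_support h1
  simp only [Finset.mem_image, Finsupp.mem_support_iff] at h2
  obtain ⟨j', h3, h4⟩ := h2
  exact ⟨j', h4.symm, h3⟩
def shl (ν : ι → ℕ) (l : List (JJ ι σ × Bool)) : List (JJ ι σ × Bool) := l.map fun p => (shf ν p.1, p.2)
lemma sh_lsum (ν : ι → ℕ) (l : List (JJ ι σ × Bool)) : lsum (shl ν l) = sh ν (lsum l) := by
  induction l with
  | nil => simp [shl]
  | cons p l ih =>
    simp only [shl, List.map_cons, lsum_cons, map_add] at ih ⊢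
    rw [ih]
    congr 1
    simp [sh, Finsupp.mapDomain_single]

structure Ord {κ : Type} [LinearOrder κ] (r : JJ ι σ → κ) : Prop where
  inj : Function.Injective r
  mono : ∀ ν a b, r a < r b → r (shf ν a) < r (shf ν b)
  deg : ∀ a b, r a ≤ r b → dg a ≤ dg b

lemma exists_ord (ι σ : Type) [Fintype ι] [Fintype σ] : ∃ (κ : Type) (_ : LinearOrder κ) (r : JJ ι σ → κ), Ord r := by
  let _ : LinearOrder ι := LinearOrder.lift' (Fintype.equivFin ι) (Fintype.equivFin ι).injective
  let _ : LinearOrder σ := LinearOrder.lift' (Fintype.equivFin σ) (Fintype.equivFin σ).injective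
  refine ⟨ℕ ×ₗ ((Lex (ι → ℕ)) ×ₗ σ), inferInstance, fun j => toLex (dg j, toLex (toLex j.1, j.2)), ?_, ?_, ?_⟩
  · rintro ⟨a, s⟩ ⟨b, t⟩ h
    have h1 := congrArg (fun x => (ofLex (ofLex x).2)) h
    simp only [ofLex_toLex, Prod.mk.injEq] at h1
    exact Prod.ext (toLex.injective h1.1) h1.2
  · rintro ν ⟨a, s⟩ ⟨b, t⟩ h
    simp only [Prod.Lex.toLex_lt_toLex, dg_shf] at h ⊢
    rcases h with h | ⟨h, h' | ⟨h', h''⟩⟩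
    · left; omega
    · right
      refine ⟨by omega, Or.inl ?_⟩
      simp only [shf]
      have : toLex ν + toLex a < toLex ν + toLex b := add_lt_add_right h' _
      exact this
    · right
      refine ⟨by omega, Or.inr ⟨?_, h''⟩⟩
      simp only [shf]
      have : a = b := toLex.injective h'
      rw [this]
  · rintro a b h
    rw [Prod.Lex.toLex_le_toLex] at h
    rcases h with h | ⟨h, -⟩
    · exact h.le
    · exact h.le

variable {κ : Type} [LinearOrder κ] {r : JJ ι σ → κ}

def IsLead (r : JJ ι σ → κ) (m : JJ ι σ →₀ ℤ) (j : JJ ι σ) : Prop := m j ≠ 0 ∧ ∀ j', m j' ≠ 0 → r j' ≤ r j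

lemma exists_lead {m : JJ ι σ →₀ ℤ} (h : m ≠ 0) : ∃ j, IsLead r m j := by
  obtain ⟨j, h1, h2⟩ := Finset.exists_max_image m.support r (Finsupp.support_nonempty_iff.2 h)
  exact ⟨j, by simpa using h1, fun j' hj' => h2 j' (by simpa using hj')⟩

lemma IsLead.sh (hr : Ord r) {m : JJ ι σ →₀ ℤ} {j} (h : IsLead r m j) (ν : ι → ℕ) : IsLead r (sh ν m) (shf ν j) := by
  refine ⟨by rw [sh_apply]; exact h.1, fun j' hj' => ?_⟩
  obtain ⟨j'', rfl, h2⟩ := sh_ne ν m hj'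
  rcases (h.2 j'' h2).lt_or_eq with h3 | h3
  · exact (hr.mono ν _ _ h3).le
  · rw [hr.inj h3]

variable {M : AddSubgroup (JJ ι σ →₀ ℤ)}

lemma dickson {α : Type} [PartialOrder α] [WellQuasiOrderedLE α] (A : Set α) : ∃ B ⊆ A, B.Finite ∧ ∀ a ∈ A, ∃ b ∈ B, b ≤ a := by
  refine ⟨{x | Minimal (· ∈ A) x}, fun x hx => hx.1, ?_, ?_⟩
  · apply WellQuasiOrderedLE.finite_of_isAntichain
    intro a ha b hb hab hle
    exact hab (hb.eq_of_le ha.1 hle)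
  · intro a ha
    obtain ⟨b, hb, hb'⟩ := exists_minimal_le_of_wellFoundedLT (· ∈ A) a ha
    exact ⟨b, hb', hb⟩

lemma strong_basis (hr : Ord r) (hsh : ∀ ν, ∀ m ∈ M, sh ν m ∈ M) :
    ∃ (n : ℕ) (b : Fin n → (JJ ι σ →₀ ℤ)), (∀ i, b i ∈ M) ∧ ∀ m ∈ M, ∀ j, IsLead r m j →
      ∃ i ν j0, IsLead r (b i) j0 ∧ shf ν j0 = j ∧ b i j0 ∣ m j := by
  classical
  let A : σ → Set ((ι → ℕ) × ℕ) := fun s => {x | ∃ m ∈ M, IsLead r m (x.1, s) ∧ (m (x.1, s)).natAbs = x.2}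
  choose B hBA hBf hB using fun s => dickson (A s)
  let β := Σ s, B s
  have hβ : Finite β := by
    have : ∀ s, Finite (B s) := fun s => hBf s
    infer_instance
  have hch : ∀ x : β, ∃ m ∈ M, IsLead r m (x.2.1.1, x.1) ∧ (m (x.2.1.1, x.1)).natAbs = x.2.1.2 := fun x => hBA x.1 x.2.2
  choose b hbM hbL hbc using hch
  obtain ⟨n, ⟨e⟩⟩ := Finite.exists_equiv_fin β
  refine ⟨n, fun i => b (e.symm i), fun i => hbM _, ?_⟩
  intro m hm j hj
  obtain ⟨μ, s⟩ := j
  have hex : ∃ c, ∃ m ∈ M, IsLead r m (μ, s) ∧ (m (μ, s)).natAbs = c := ⟨_, m, hm, hj, rfl⟩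
  obtain ⟨m0, hm0, hL0, hc0⟩ := Nat.find_spec hex
  set c := Nat.find hex with hc
  have hmin : ∀ m ∈ M, IsLead r m (μ, s) → c ≤ (m (μ, s)).natAbs := fun m hm hl => Nat.find_min' hex ⟨m, hm, hl, rfl⟩
  obtain ⟨x, hxB, hxle⟩ := hB s (μ, c) ⟨m0, hm0, hL0, hc0⟩
  let y : β := ⟨s, ⟨x, hxB⟩⟩
  refine ⟨e y, μ - x.1, (x.1, s), ?_, ?_, ?_⟩
  · have := hbL y
    simpa [y] using this
  · have : μ - x.1 + x.1 = μ := tsub_add_cancel_of_le hxle.1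
    simp [shf, this]
  · have e1 : shf (μ - x.1) (x.1, s) = (μ, s) := by
      have : μ - x.1 + x.1 = μ := tsub_add_cancel_of_le hxle.1
      simp [shf, this]
    simp only [Equiv.symm_apply_apply]
    have h1 := hmin _ (hsh (μ - x.1) _ (hbM y)) (by have := (hbL y).sh hr (μ - x.1); rwa [e1] at this)
    rw [← e1, sh_apply] at h1
    have h2 : (b y (x.1, s)).natAbs = x.2 := hbc y
    have h3 : x.2 ≤ c := hxle.2
    have h4 : (b y (x.1, s)).natAbs = c := by omega
    rw [← Int.natAbs_dvd_natAbs, h4, ← hc0, Int.natAbs_dvd_natAbs]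
    -- Euclid
    by_contra hnd
    let q := m (μ, s) / m0 (μ, s)
    have hv : (m - q • m0) (μ, s) = m (μ, s) % m0 (μ, s) := by
      simp only [Finsupp.coe_sub, Finsupp.coe_smul, Pi.sub_apply, Pi.smul_apply, smul_eq_mul, q]
      have := Int.emod_add_mul_ediv (m (μ, s)) (m0 (μ, s))
      linarith
    have hlead : IsLead r (m - q • m0) (μ, s) := by
      refine ⟨?_, fun j' hj' => ?_⟩
      · rw [hv]; intro h; exact hnd (Int.dvd_of_emod_eq_zero h)
      · by_cases h : m j' = 0
        · apply hL0.2
          intro h'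
          apply hj'
          simp [h, h']
        · exact hj.2 _ h
    have := hmin _ (M.sub_mem hm (M.zsmul_mem hm0 q)) hlead
    rw [hv, ← hc0] at this
    have h5 := Int.emod_lt_abs (m (μ, s)) hL0.1
    have h6 := Int.emod_nonneg (m (μ, s)) hL0.1
    rw [Int.abs_eq_natAbs] at h5
    omega

def NL (m : JJ ι σ →₀ ℤ) (n : ℕ) : Prop := ∃ l : List (JJ ι σ × Bool), l.length ≤ n ∧ lsum l = m

lemma NL.add {m m' : JJ ι σ →₀ ℤ} {n n' : ℕ} (h : NL m n) (h' : NL m' n') : NL (m + m') (n + n') := by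
  obtain ⟨l, h1, rfl⟩ := h
  obtain ⟨l', h1', rfl⟩ := h'
  exact ⟨l ++ l', by simp; omega, by simp⟩
lemma NL.neg {m : JJ ι σ →₀ ℤ} {n : ℕ} (h : NL m n) : NL (-m) n := by
  obtain ⟨l, h1, rfl⟩ := h
  exact ⟨linv l, by simpa using h1, by simp⟩
lemma NL.mono {m : JJ ι σ →₀ ℤ} {n n' : ℕ} (h : NL m n) (hn : n ≤ n') : NL m n' := by
  obtain ⟨l, h1, rfl⟩ := h
  exact ⟨l, h1.trans hn, rfl⟩
lemma NL.nsmul {m : JJ ι σ →₀ ℤ} {n : ℕ} (h : NL m n) (c : ℕ) : NL (c • m) (c * n) := by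
  induction c with
  | zero => exact ⟨[], by simp, by simp⟩
  | succ c ih => rw [succ_nsmul, add_mul, one_mul]; exact ih.add h
lemma NL.zsmul {m : JJ ι σ →₀ ℤ} {n : ℕ} (h : NL m n) (c : ℤ) : NL (c • m) (c.natAbs * n) := by
  obtain ⟨a, rfl | rfl⟩ := c.eq_nat_or_neg
  · simpa using h.nsmul a
  · simpa using (h.nsmul a).neg
lemma NL.sh {m : JJ ι σ →₀ ℤ} {n : ℕ} (h : NL m n) (ν : ι → ℕ) : NL (sh ν m) n := by
  obtain ⟨l, h1, rfl⟩ := h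
  exact ⟨shl ν l, by simpa [shl] using h1, sh_lsum ν l⟩
lemma NL.apply {m : JJ ι σ →₀ ℤ} {n : ℕ} (h : NL m n) (j) : (m j).natAbs ≤ n := by
  classical
  obtain ⟨l, h1, rfl⟩ := h
  refine le_trans ?_ h1
  clear h1
  induction l with
  | nil => simp
  | cons p l ih =>
    rw [lsum_cons, Finsupp.add_apply, List.length_cons]
    have h2 := Int.natAbs_add_le (Finsupp.single p.1 (sg p.2) j) (lsum l j)
    have h3 : (Finsupp.single p.1 (sg p.2) j).natAbs ≤ 1 := by
      rw [Finsupp.single_apply]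
      split
      · unfold sg; split <;> simp
      · simp
    omega

noncomputable def bsum {n : ℕ} (b : Fin n → (JJ ι σ →₀ ℤ)) (L : List (((ι → ℕ) × Fin n) × Bool)) : JJ ι σ →₀ ℤ :=
  (L.map fun p => sg p.2 • sh p.1.1 (b p.1.2)).sum

lemma division (hr : Ord r) {n : ℕ} {b : Fin n → (JJ ι σ →₀ ℤ)} (hbM : ∀ i, b i ∈ M) (hsh : ∀ ν, ∀ m ∈ M, sh ν m ∈ M)
    (hb : ∀ m ∈ M, ∀ j, IsLead r m j → ∃ i ν j0, IsLead r (b i) j0 ∧ shf ν j0 = j ∧ b i j0 ∣ m j)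
    {K : ℕ} (hK : ∀ i, NL (b i) K) {d : ℕ} (Jd : Finset (JJ ι σ)) (hJd : ∀ j, j ∈ Jd ↔ dg j ≤ d) :
    ∀ (t : ℕ) (m : JJ ι σ →₀ ℤ) (e : ℕ), m ∈ M → NL m e → (∀ j, m j ≠ 0 → j ∈ Jd) →
      (∃ U : Finset (JJ ι σ), U.card ≤ t ∧ ∀ j ∈ Jd, (∃ j1, m j1 ≠ 0 ∧ r j ≤ r j1) → j ∈ U) →
      ∃ L : List (((ι → ℕ) × Fin n) × Bool), L.length ≤ (2 + K) ^ t * e ∧ bsum b L = m ∧ ∀ p ∈ L, ∑ i, p.1.1 i ≤ d := by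
  classical
  intro t
  induction t with
  | zero =>
    rintro m e hm he hJ ⟨U, hU, hU'⟩
    have : m = 0 := by
      ext j
      by_contra hc
      have : U = ∅ := by simpa using hU
      have h2 := hU' j (hJ j hc) ⟨j, hc, le_rfl⟩
      simp [this] at h2
    exact ⟨[], by simp, by simp [bsum, this], by simp⟩
  | succ t ih =>
    rintro m e hm he hJ ⟨U, hU, hU'⟩
    by_cases h0 : m = 0
    · exact ⟨[], by simp, by simp [bsum, h0], by simp⟩
    obtain ⟨j, hj⟩ := exists_lead (r := r) h0
    obtain ⟨i, ν, j0, hl, rfl, q, hq⟩ := hb m hm j hj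
    let m' := m - q • sh ν (b i)
    have hlj := hl.sh hr ν
    have hm'0 : m' (shf ν j0) = 0 := by
      simp only [m', Finsupp.coe_sub, Finsupp.coe_smul, Pi.sub_apply, Pi.smul_apply, smul_eq_mul, sh_apply, hq]; ring
    have hle : ∀ j', m' j' ≠ 0 → r j' < r (shf ν j0) := by
      intro j' hj'
      have h1 : r j' ≤ r (shf ν j0) := by
        by_cases h : m j' = 0
        · apply hlj.2
          intro h'
          apply hj'
          simp [m', h, h']
        · exact hj.2 _ h
      refine lt_of_le_of_ne h1 fun h => hj' ?_
      rw [hr.inj h]; exact hm'0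
    have hjd := (hJd _).1 (hJ _ hj.1)
    have hqe : q.natAbs ≤ e := by
      have h1 := he.apply (shf ν j0)
      rw [hq, Int.natAbs_mul] at h1
      have h2 : 0 < (b i j0).natAbs := Int.natAbs_pos.2 hl.1
      nlinarith
    have hNL : NL m' (e * (1 + K)) := by
      have : m' = m + -(q • sh ν (b i)) := by simp only [m']; abel
      rw [this]
      refine (he.add ((((hK i).sh ν).zsmul q).neg)).mono ?_
      nlinarith
    obtain ⟨L, hL1, hL2, hL3⟩ := ih m' (e * (1 + K)) (M.sub_mem hm (M.zsmul_mem (hsh ν _ (hbM i)) q)) hNL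
      (fun j' hj' => (hJd _).2 ((hr.deg _ _ (hle j' hj').le).trans hjd))
      ⟨U.erase (shf ν j0), by
        have h1 : shf ν j0 ∈ U := hU' _ (hJ _ hj.1) ⟨_, hj.1, le_rfl⟩
        rw [Finset.card_erase_of_mem h1]; omega, by
        rintro j' hj' ⟨j1, h1, h2⟩
        have h3 := h2.trans_lt (hle j1 h1)
        refine Finset.mem_erase.2 ⟨fun h => ?_, hU' j' hj' ⟨_, hj.1, h3.le⟩⟩
        rw [h] at h3; exact lt_irrefl _ h3⟩
    refine ⟨List.replicate q.natAbs ((ν, i), decide (0 ≤ q)) ++ L, ?_, ?_, ?_⟩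
    · simp only [List.length_append, List.length_replicate]
      have h1 : 1 ≤ (2 + K) ^ t := Nat.one_le_pow _ _ (by omega)
      calc q.natAbs + L.length ≤ e + (2 + K) ^ t * (e * (1 + K)) := by omega
        _ ≤ (2 + K) ^ t * e + (2 + K) ^ t * (e * (1 + K)) := by nlinarith
        _ = _ := by ring
    · simp only [bsum, List.map_append, List.map_replicate, List.sum_append, List.sum_replicate] at hL2 ⊢
      rw [hL2]
      have : q.natAbs • (sg (decide (0 ≤ q)) • sh ν (b i)) = q • sh ν (b i) := by
        rw [← natCast_zsmul, smul_smul]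
        congr 1
        unfold sg
        by_cases h : 0 ≤ q
        · simp [h]
        · push Not at h
          simp [not_le.2 h, abs_of_neg h]
      rw [this]; simp [m']
    · intro p hp
      rcases List.mem_append.1 hp with h | h
      · rw [List.eq_of_mem_replicate h]
        rw [dg_shf] at hjd
        simp only; omega
      · exact hL3 p h

/-- Main algebraic statement. -/
lemma groebner (M : AddSubgroup (JJ ι σ →₀ ℤ)) (hsh : ∀ ν, ∀ m ∈ M, sh ν m ∈ M) :
    ∃ (n : ℕ) (b : Fin n → (JJ ι σ →₀ ℤ)) (K : ℕ), (∀ i, b i ∈ M) ∧ ∀ d e m, m ∈ M → NL m e → (∀ j, m j ≠ 0 → dg j ≤ d) →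
      ∃ L : List (((ι → ℕ) × Fin n) × Bool), L.length ≤ K ^ (Fintype.card σ * (d + 1) ^ (Fintype.card ι)) * e ∧ bsum b L = m ∧
        ∀ p ∈ L, ∑ i, p.1.1 i ≤ d := by
  classical
  obtain ⟨κ, _, r, hr⟩ := exists_ord ι σ
  obtain ⟨n, b, hbM, hb⟩ := strong_basis hr hsh
  have hNL : ∀ m : JJ ι σ →₀ ℤ, ∃ K, NL m K := by
    intro m
    induction m using Finsupp.induction_linear with
    | zero => exact ⟨0, [], by simp, by simp⟩
    | add f g hf hg =>
      obtain ⟨a, ha⟩ := hf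
      obtain ⟨b, hb⟩ := hg
      exact ⟨_, ha.add hb⟩
    | single j c =>
      have h1 : NL (Finsupp.single j 1 : JJ ι σ →₀ ℤ) 1 := ⟨[(j, true)], by simp, by simp [sg]⟩
      refine ⟨c.natAbs * 1, ?_⟩
      have := h1.zsmul c
      rw [Finsupp.smul_single, smul_eq_mul, mul_one] at this
      exact this
  choose f hf using fun i => hNL (b i)
  obtain ⟨K, hK⟩ := Finite.exists_le f
  refine ⟨n, b, 2 + K, hbM, ?_⟩
  intro d e m hm he hd
  let Jd : Finset (JJ ι σ) := ((Fintype.piFinset fun _ : ι => Finset.range (d + 1)) ×ˢ (Finset.univ : Finset σ)).filter fun j => dg j ≤ d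
  have hJd : ∀ j, j ∈ Jd ↔ dg j ≤ d := by
    intro j
    simp only [Jd, Finset.mem_filter, Finset.mem_product, Fintype.mem_piFinset, Finset.mem_range, Finset.mem_univ, and_true, and_iff_right_iff_imp]
    intro h i
    have : j.1 i ≤ dg j := Finset.single_le_sum (f := j.1) (fun _ _ => Nat.zero_le _) (Finset.mem_univ i)
    omega
  have hcard : Jd.card ≤ Fintype.card σ * (d + 1) ^ (Fintype.card ι) := by
    refine (Finset.card_filter_le _ _).trans ?_
    rw [Finset.card_product, Fintype.card_piFinset]
    simp [mul_comm]
  exact division hr hbM hsh hb (fun i => (hf i).mono (hK i)) Jd hJd _ m e hm he (fun j hj => (hJd j).2 (hd j hj)) ⟨Jd, hcard, fun j hj _ => hj⟩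
end
end MB

namespace MB
set_option linter.unusedSectionVars false
section
variable {F : Type} [Group F] {R : Set F}
variable {ι σ : Type} [Fintype ι] [Fintype σ]

lemma exists_dg_le (l : List (JJ ι σ × Bool)) : ∃ e, ∀ p ∈ l, dg p.1 ≤ e := by
  induction l with
  | nil => exact ⟨0, by simp⟩
  | cons p l ih =>
    obtain ⟨e, he⟩ := ih
    refine ⟨max e (dg p.1), ?_⟩
    intro q hq
    rcases List.mem_cons.1 hq with rfl | h
    · exact le_max_right _ _
    · exact (he q h).trans (le_max_left _ _)

lemma lsum_supp {J : Type*} (l : List (J × Bool)) (j : J) (h : lsum l j ≠ 0) : ∃ p ∈ l, p.1 = j := by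
  classical
  induction l with
  | nil => simp at h
  | cons p l ih =>
    by_cases hp : p.1 = j
    · exact ⟨p, by simp, hp⟩
    · rw [lsum_cons, Finsupp.add_apply, Finsupp.single_apply, if_neg hp, zero_add] at h
      obtain ⟨q, hq, e⟩ := ih h
      exact ⟨q, by simp [hq], e⟩

lemma shl_eq (g : JJ ι σ → F) (u : F) (ν : ι → ℕ) {B : ℕ} (l : List (JJ ι σ × Bool))
    (h : ∀ p ∈ l, Eq' R (g (shf ν p.1)) (cc u (g p.1)) B) :
    Eq' R (lprod g (shl ν l)) (cc u (lprod g l)) (l.length * B) := by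
  induction l with
  | nil => simp only [shl, List.map_nil, lprod_nil]; simpa [cc] using Eq'.refl
  | cons p l ih =>
    have ih := ih fun q hq => h q (by simp [hq])
    have hp := h p (by simp)
    have h1 : Eq' R (sv g (shf ν p.1, p.2)) (cc u (sv g p)) B := by
      obtain ⟨j, b⟩ := p
      cases b
      · simp only [sv, Bool.false_eq_true, if_false]
        rw [cc_inv]; exact hp.inv
      · simpa only [sv, if_true] using hp
    have h2 := h1.mul ih
    have e : cc u (lprod g (p :: l)) = cc u (sv g p) * cc u (lprod g l) := by
      simp [cc, mul_assoc]
    rw [e]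
    simp only [shl, List.map_cons, lprod_cons, List.length_cons] at h2 ⊢
    exact h2.mono (by ring_nf; omega)

def gg (Y : ι → F) (L : List ι) (S : Set F) (j : JJ ι S) : F := cc (cm Y L j.1) j.2

lemma prLe_list {σ' : Set F} {Y : ι → F} {L : List ι} {d n : ℕ} {w : F} (h : PrLe (MS Y L σ' d) w n) :
    ∃ l : List (((ι → ℕ) × σ') × Bool), l.length ≤ n ∧ lprod (gg Y L σ') l = w ∧ ∀ p ∈ l, ∑ i, p.1.1 i ≤ d := by
  obtain ⟨l, h1, h2, rfl⟩ := h
  have : ∃ l' : List (((ι → ℕ) × σ') × Bool), l'.length = l.length ∧ lprod (gg Y L σ') l' = l.prod ∧ ∀ p ∈ l', ∑ i, p.1.1 i ≤ d := by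
    clear h1
    induction l with
    | nil => exact ⟨[], by simp, by simp, by simp⟩
    | cons a l ih =>
      obtain ⟨l', e1, e2, e3⟩ := ih fun a ha => h2 a (by simp [ha])
      have : ∃ p : ((ι → ℕ) × σ') × Bool, sv (gg Y L σ') p = a ∧ ∑ i, p.1.1 i ≤ d := by
        rcases h2 a (by simp) with ⟨ζ, hζ, μ, hμ, e⟩ | ⟨ζ, hζ, μ, hμ, e⟩
        · exact ⟨((μ, ⟨ζ, hζ⟩), true), by simp [sv, gg, e], hμ⟩
        · exact ⟨((μ, ⟨ζ, hζ⟩), false), by simp [sv, gg, ← e], hμ⟩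
      obtain ⟨p, f1, f2⟩ := this
      refine ⟨p :: l', by simp [e1], by simp [e2, f1], ?_⟩
      intro q hq
      rcases List.mem_cons.1 hq with rfl | h
      · exact f2
      · exact e3 q h
  obtain ⟨l', e1, e2, e3⟩ := this
  exact ⟨l', by omega, e2, e3⟩

lemma blocks (g : JJ ι σ → F) {nb : ℕ} {b : Fin nb → (JJ ι σ →₀ ℤ)} (lb : Fin nb → List (JJ ι σ × Bool))
    (hlb : ∀ i, lsum (lb i) = b i) {d K0 K1 A : ℕ} (hd : ∀ i, ∀ p ∈ lb i, dg p.1 ≤ K0) (hlen : ∀ i, (lb i).length ≤ K1)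
    (L : List (((ι → ℕ) × Fin nb) × Bool)) (hL : ∀ p ∈ L, ∑ i, p.1.1 i ≤ d)
    (hA : ∀ ν : ι → ℕ, ∑ i, ν i ≤ d → ∀ i, Ar R (lprod g (shl ν (lb i))) A) :
    ∃ l : List (JJ ι σ × Bool), l.length ≤ L.length * K1 ∧ lsum l = bsum b L ∧ Ar R (lprod g l) (L.length * A) ∧
      ∀ p ∈ l, dg p.1 ≤ d + K0 := by
  induction L with
  | nil => exact ⟨[], by simp, by simp [bsum], by simpa using PrLe.one, by simp⟩
  | cons q L ih =>
    obtain ⟨l, h1, h2, h3, h4⟩ := ih fun p hp => hL p (by simp [hp])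
    have hq := hL q (by simp)
    obtain ⟨⟨ν, i⟩, s⟩ := q
    simp only at hq
    have hsd : ∀ p ∈ shl ν (lb i), dg p.1 ≤ d + K0 := by
      intro p hp
      simp only [shl, List.mem_map] at hp
      obtain ⟨p', hp', rfl⟩ := hp
      simp only [dg_shf]
      have := hd i p' hp'
      omega
    have hsl : (shl ν (lb i)).length ≤ K1 := by simpa [shl] using hlen i
    have : ∃ l0 : List (JJ ι σ × Bool), l0.length ≤ K1 ∧ lsum l0 = sg s • sh ν (b i) ∧ Ar R (lprod g l0) A ∧ ∀ p ∈ l0, dg p.1 ≤ d + K0 := by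
      cases s
      · refine ⟨linv (shl ν (lb i)), by simpa using hsl, ?_, ?_, ?_⟩
        · simp [sh_lsum, hlb, sg]
        · rw [lprod_linv]; exact (hA ν hq i).inv
        · intro p hp
          obtain ⟨p', h, e⟩ := mem_linv hp
          rw [← e]; exact hsd p' h
      · refine ⟨shl ν (lb i), hsl, ?_, hA ν hq i, hsd⟩
        simp [sh_lsum, hlb, sg]
    obtain ⟨l0, g1, g2, g3, g4⟩ := this
    refine ⟨l0 ++ l, ?_, ?_, ?_, ?_⟩
    · simp only [List.length_append, List.length_cons]; ring_nf; omega
    · rw [lsum_append, g2, h2]; simp [bsum]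
    · rw [lprod_append]
      refine (g3.mul h3).mono ?_
      simp only [List.length_cons]; ring_nf; omega
    · intro p hp
      rcases List.mem_append.1 hp with h | h
      · exact g4 p h
      · exact h4 p h

lemma pi_cm {Q : Type*} [CommGroup Q] (π : F →* Q) (Y : ι → F) (L : List ι) (μ ν : ι → ℕ) :
    π (cm Y L (μ + ν)) = π (cm Y L μ) * π (cm Y L ν) := by
  classical
  induction L with
  | nil => simp
  | cons i L ih =>
    simp only [cm_cons, map_mul, ih, Pi.add_apply, pow_add]
    exact mul_mul_mul_comm _ _ _ _
end

section
variable {X : Type} [Fintype X]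
lemma freeNorm_one : freeNorm (1 : FreeGroup X) = 0 := by
  let _ := Classical.decEq X
  exact FreeGroup.norm_one
lemma freeNorm_pow (a : FreeGroup X) (n : ℕ) : freeNorm (a ^ n) ≤ n * freeNorm a := by
  induction n with
  | zero => simp [freeNorm_one]
  | succ n ih =>
    rw [pow_succ]
    have := freeNorm_mul (a ^ n) a
    rw [add_mul]; omega

lemma cm_norm {ι : Type} [Fintype ι] (Y : ι → FreeGroup X) {L : List ι} (nd : L.Nodup) (full : ∀ i, i ∈ L) :
    ∃ c, ∀ μ : ι → ℕ, freeNorm (cm Y L μ) ≤ c * ∑ i, μ i := by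
  classical
  obtain ⟨c, hc⟩ := Finite.exists_le fun i => freeNorm (Y i)
  refine ⟨c, fun μ => ?_⟩
  have h1 : ∑ i, μ i = (L.map μ).sum := by
    have : (Finset.univ : Finset ι) = L.toFinset := by ext i; simp [full]
    rw [this, List.sum_toFinset _ nd]
  rw [h1]
  clear h1 nd full
  induction L with
  | nil => simp [freeNorm_one]
  | cons i L ih =>
    rw [cm_cons, List.map_cons, List.sum_cons]
    have h1 := freeNorm_mul (Y i ^ μ i) (cm Y L μ)
    have h2 := freeNorm_pow (Y i) (μ i)
    have h3 : μ i * freeNorm (Y i) ≤ μ i * c := Nat.mul_le_mul_left _ (hc i)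
    rw [mul_add, mul_comm c]; omega
end

/-! growth bookkeeping -/
def EE (k d : ℕ) : ℕ := (d + 1) ^ (2 * k) + (d + 1) ^ 2
lemma EE_pos (k d : ℕ) : 1 ≤ EE k d := by
  unfold EE
  have : 1 ≤ (d + 1) ^ 2 := Nat.one_le_pow _ _ (by omega)
  omega
def Gr (k : ℕ) (f : ℕ → ℕ) : Prop := ∃ c, ∀ d, f d ≤ 2 ^ (c * EE k d)

lemma Gr.mul {k : ℕ} {f g : ℕ → ℕ} (hf : Gr k f) (hg : Gr k g) : Gr k (fun d => f d * g d) := by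
  obtain ⟨a, ha⟩ := hf
  obtain ⟨b, hb⟩ := hg
  refine ⟨a + b, fun d => ?_⟩
  rw [add_mul, pow_add]
  exact Nat.mul_le_mul (ha d) (hb d)
lemma Gr.mono {k : ℕ} {f g : ℕ → ℕ} (hg : Gr k g) (h : ∀ d, f d ≤ g d) : Gr k f := by
  obtain ⟨b, hb⟩ := hg
  exact ⟨b, fun d => (h d).trans (hb d)⟩
lemma Gr.const {k : ℕ} (c : ℕ) : Gr k (fun _ => c) := by
  refine ⟨c, fun d => ?_⟩
  have h1 : c < 2 ^ c := Nat.lt_two_pow_self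
  exact h1.le.trans (Nat.pow_le_pow_right (by norm_num) (Nat.le_mul_of_pos_right _ (EE_pos k d)))
lemma Gr.id {k : ℕ} : Gr k (fun d => d + 1) := by
  refine ⟨1, fun d => ?_⟩
  have h1 : d + 1 < 2 ^ (d + 1) := Nat.lt_two_pow_self
  refine h1.le.trans (Nat.pow_le_pow_right (by norm_num) ?_)
  unfold EE
  nlinarith [Nat.zero_le ((d + 1) ^ (2 * k))]
lemma Gr.add {k : ℕ} {f g : ℕ → ℕ} (hf : Gr k f) (hg : Gr k g) : Gr k (fun d => f d + g d) := by
  obtain ⟨a, ha⟩ := hf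
  obtain ⟨b, hb⟩ := hg
  refine ⟨a + b + 1, fun d => ?_⟩
  have h1 := ha d
  have h2 := hb d
  have h3 : 2 ^ (a * EE k d) ≤ 2 ^ ((a + b) * EE k d) := Nat.pow_le_pow_right (by norm_num) (by rw [add_mul]; omega)
  have h4 : 2 ^ (b * EE k d) ≤ 2 ^ ((a + b) * EE k d) := Nat.pow_le_pow_right (by norm_num) (by rw [add_mul]; omega)
  have h5 : 2 ^ ((a + b) * EE k d + 1) ≤ 2 ^ ((a + b + 1) * EE k d) := Nat.pow_le_pow_right (by norm_num) (by
    rw [add_mul (a + b)]; have := EE_pos k d; omega)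
  rw [pow_succ] at h5
  show f d + g d ≤ _
  omega
lemma Gr.pow {k : ℕ} (c : ℕ) {f : ℕ → ℕ} {a : ℕ} (hf : ∀ d, f d ≤ a * EE k d) : Gr k (fun d => c ^ f d) := by
  refine ⟨c * a, fun d => ?_⟩
  rcases Nat.eq_zero_or_pos c with rfl | hc
  · rcases Nat.eq_zero_or_pos (f d) with h | h
    · simp [h]
    · simp [Nat.zero_pow h]
  have h1 : c ≤ 2 ^ c := Nat.lt_two_pow_self.le
  calc c ^ f d ≤ c ^ (a * EE k d) := Nat.pow_le_pow_right hc (hf d)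
    _ ≤ (2 ^ c) ^ (a * EE k d) := Nat.pow_le_pow_left h1 _
    _ = _ := by rw [← pow_mul, mul_assoc]
lemma Gr.sq {k : ℕ} (c a b : ℕ) : Gr k (fun d => c ^ ((a * d + b + 1) ^ 2)) := by
  refine Gr.pow (a := (a + b + 1) ^ 2) c fun d => ?_
  have h1 : a * d + b + 1 ≤ (a + b + 1) * (d + 1) := by nlinarith
  calc _ ≤ ((a + b + 1) * (d + 1)) ^ 2 := Nat.pow_le_pow_left h1 2
    _ = (a + b + 1) ^ 2 * (d + 1) ^ 2 := by ring
    _ ≤ _ := Nat.mul_le_mul_left _ (by unfold EE; omega)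
end MB

namespace MB
set_option linter.unusedSectionVars false
section
variable {X : Type} [Fintype X] [DecidableEq X]
variable {Q : Type} [CommGroup Q] {π : FreeGroup X →* Q} {k : ℕ} {R : Set (FreeGroup X)}

def Cset (X : Type) : Set (FreeGroup X) := Set.range fun p : (X × Bool) × (X × Bool) =>
  (FreeGroup.of p.1.1 ^ (sg p.1.2))⁻¹ * (FreeGroup.of p.2.1 ^ (sg p.2.2))⁻¹ * FreeGroup.of p.1.1 ^ (sg p.1.2) * FreeGroup.of p.2.1 ^ (sg p.2.2)

lemma exists_sg {ε : ℤ} (h : ε = 1 ∨ ε = -1) : ∃ b, ε = sg b := by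
  rcases h with rfl | rfl
  · exact ⟨true, by simp [sg]⟩
  · exact ⟨false, by simp [sg]⟩

lemma area_bound (D : Dat π k) (hπ : Function.Surjective π) (hR : R.Finite)
    (hRK : ∀ r ∈ R, π r = 1) (hcom : ∀ a ∈ π.ker, ∀ b ∈ π.ker, a * b * (b * a)⁻¹ ∈ Subgroup.normalClosure R) :
    ∃ c, ∃ f : ℕ → ℕ, Gr k f ∧ ∀ n d w, w ∈ Subgroup.normalClosure R → freeNorm w ≤ n → (k = 0 ∨ c * (n + 1) ≤ d) →
      Ar R w (f d * (n + 1) ^ 2) := by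
  obtain ⟨L, nd, full, vs⟩ := exists_vsort (sv D.y) (fun _ => (0 : ℝ))
  have hL : Lok D.y (fun _ => 0) L := ⟨⟨fun _ _ => by simp⟩, nd, full, vs⟩
  obtain ⟨S', cs, hS'f, hS'K, hst⟩ := step1 D hL
  obtain ⟨c0, hc0⟩ := cm_norm (sv D.y) nd full
  have hNK : Subgroup.normalClosure R ≤ π.ker := Subgroup.normalClosure_le_normal hRK
  -- commutation
  obtain ⟨c1, hc1⟩ : ∃ C : ℕ, ∀ n : ℕ, ∀ f : FreeGroup X, freeNorm f ≤ n → ∀ s ∈ S', ∀ s' ∈ S', Cm R s (cc f s') (C ^ ((n + 1) ^ 2)) := by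
    obtain ⟨C, hC⟩ := comm_final (S := S' ∪ Cset X) D hπ hR (hS'f.union (Set.finite_range _)) hRK hcom
      (by
        rintro a (h | ⟨p, rfl⟩)
        · exact hS'K h
        · simp only [SetLike.mem_coe, MonoidHom.mem_ker, map_mul, map_inv]
          rw [mul_comm, ← mul_assoc]
          simp [mul_comm])
      (by
        intro w hw
        have h1 := hst (freeNorm w) _ w hw le_rfl (Or.inr le_rfl)
        refine h1.mem_subgroup _ ?_
        rintro a ⟨ζ, hζ, μ, -, rfl⟩
        exact Subgroup.subset_closure ⟨ζ, Or.inl hζ, _, trivial, rfl⟩)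
      (by
        intro i j ε δ hε hδ
        obtain ⟨a, rfl⟩ := exists_sg hε
        obtain ⟨b, rfl⟩ := exists_sg hδ
        exact Or.inr ⟨((i, a), (j, b)), rfl⟩)
    exact ⟨C, fun n f hf s hs s' hs' => hC n f hf s (Or.inl hs) s' (Or.inl hs')⟩
  let _ : Fintype S' := hS'f.fintype
  let g := gg (sv D.y) L S'
  have hcomm : ∀ e (j j' : JJ (Fin k × Bool) S'), dg j ≤ e → dg j' ≤ e → Cm R (g j) (g j') (c1 ^ ((2 * (c0 * e) + 1) ^ 2)) := by
    intro e j j' hj hj'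
    apply Cm.cj' (f := (cm (sv D.y) L j.1)⁻¹)
    have h := hc1 (2 * (c0 * e)) ((cm (sv D.y) L j.1)⁻¹ * cm (sv D.y) L j'.1) (by
      have h1 := freeNorm_mul (cm (sv D.y) L j.1)⁻¹ (cm (sv D.y) L j'.1)
      rw [freeNorm_inv] at h1
      have h2 := (hc0 j.1).trans (Nat.mul_le_mul_left c0 hj)
      have h3 := (hc0 j'.1).trans (Nat.mul_le_mul_left c0 hj')
      omega) j.2 j.2.2 j'.2 j'.2.2
    convert h using 1
    · simp [g, gg, cc, mul_assoc]
    · simp [g, gg, cc, mul_assoc]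
  let d1 : ℕ → ℕ → ℕ := fun d e => cs * (2 * (c0 * (d + e)) + 1) + (d + e)
  let B2 : ℕ → ℕ → ℕ := fun d e => cs * (2 * (c0 * (d + e)) + 1) * (d1 d e + 1) * c1 ^ ((2 * (c0 * d1 d e) + 1) ^ 2)
  have hshift : ∀ d e (ν : Fin k × Bool → ℕ), ∑ i, ν i ≤ d → ∀ j : JJ (Fin k × Bool) S', dg j ≤ e →
      Eq' R (g (shf ν j)) (cc (cm (sv D.y) L ν) (g j)) (B2 d e) := by
    intro d e ν hν j hj
    let κ := cm (sv D.y) L ν * cm (sv D.y) L j.1 * (cm (sv D.y) L (ν + j.1))⁻¹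
    have hsum : ∑ i, (ν + j.1) i ≤ d + e := by
      have : ∑ i, (ν + j.1) i = ∑ i, ν i + dg j := by simp [dg, Finset.sum_add_distrib]
      omega
    have hκ : κ ∈ π.ker := by
      simp only [κ, MonoidHom.mem_ker, map_mul, map_inv, pi_cm]
      simp
    have hκn : freeNorm κ ≤ 2 * (c0 * (d + e)) := by
      have h1 := freeNorm_mul (cm (sv D.y) L ν * cm (sv D.y) L j.1) (cm (sv D.y) L (ν + j.1))⁻¹
      have h2 := freeNorm_mul (cm (sv D.y) L ν) (cm (sv D.y) L j.1)
      rw [freeNorm_inv] at h1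
      have h3 := (hc0 (ν + j.1)).trans (Nat.mul_le_mul_left c0 hsum)
      have h4 := (hc0 ν).trans (Nat.mul_le_mul_left c0 hν)
      have h5 := (hc0 j.1).trans (Nat.mul_le_mul_left c0 hj)
      have h6 : c0 * (d + e) = c0 * d + c0 * e := by ring
      simp only [κ]
      omega
    have h1 := hst _ (d1 d e) κ hκ hκn (Or.inr (by simp only [d1]; omega))
    have h2 : Cm R κ (g (shf ν j)) (B2 d e) := by
      refine Cm.of_prLe h1 ?_
      rintro z ⟨ζ, hζ, μ, hμ, rfl⟩
      exact hcomm (d1 d e) (μ, ⟨ζ, hζ⟩) (shf ν j) hμ (by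
        rw [dg_shf]; simp only [d1]; omega)
    have h3 : cc (cm (sv D.y) L ν) (g j) = κ * g (shf ν j) * κ⁻¹ := by
      simp only [g, gg, shf, κ, cc]
      group
    rw [h3]
    exact Eq'.symm h2
  have hshl : ∀ d e (ν : Fin k × Bool → ℕ), ∑ i, ν i ≤ d → ∀ l : List (JJ (Fin k × Bool) S' × Bool), (∀ p ∈ l, dg p.1 ≤ e) →
      ∀ a, Ar R (lprod g l) a → Ar R (lprod g (shl ν l)) (l.length * B2 d e + a) := by
    intro d e ν hν l hl a ha
    have h1 := shl_eq (R := R) g (cm (sv D.y) L ν) ν l (fun p hp => hshift d e ν hν p.1 (hl p hp))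
    exact h1.ar (ha.cj _)
  -- the module of relations
  let M : AddSubgroup (JJ (Fin k × Bool) S' →₀ ℤ) :=
    { carrier := {m | ∃ l, lsum l = m ∧ lprod g l ∈ Subgroup.normalClosure R}
      zero_mem' := ⟨[], by simp, by simp [Subgroup.one_mem]⟩
      add_mem' := by
        rintro _ _ ⟨l, rfl, h⟩ ⟨l', rfl, h'⟩
        exact ⟨l ++ l', by simp, by rw [lprod_append]; exact Subgroup.mul_mem _ h h'⟩
      neg_mem' := by
        rintro _ ⟨l, rfl, h⟩
        exact ⟨linv l, by simp, by rw [lprod_linv]; exact Subgroup.inv_mem _ h⟩ }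
  have hMsh : ∀ ν, ∀ m ∈ M, sh ν m ∈ M := by
    rintro ν _ ⟨l, rfl, h⟩
    refine ⟨shl ν l, sh_lsum ν l, ?_⟩
    obtain ⟨e, he⟩ := exists_dg_le l
    obtain ⟨a, ha⟩ := exists_ar h
    exact Ar.mem (hshl _ e ν le_rfl l he a ha)
  obtain ⟨nb, b, K, hbM, hgr⟩ := groebner M hMsh
  choose lb hlb hlbN using hbM
  obtain ⟨K2, hK2⟩ := exists_ar_finite _ hlbN
  choose e0 he0 using fun i => exists_dg_le (lb i)
  obtain ⟨K0, hK0⟩ := Finite.exists_le e0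
  obtain ⟨K1, hK1⟩ := Finite.exists_le fun i => (lb i).length
  let Kd : ℕ → ℕ := fun d => K ^ (Fintype.card S' * (d + 1) ^ (2 * k))
  let A : ℕ → ℕ := fun d => K1 * B2 d K0 + K2
  let B : ℕ → ℕ := fun d => c1 ^ ((2 * (c0 * (d + K0)) + 1) ^ 2)
  let N : ℕ → ℕ := fun d => cs * (d + 1)
  refine ⟨cs, fun d => (N d + Kd d * N d * K1) * (N d + Kd d * N d * K1) * B d + Kd d * N d * A d, ?_, ?_⟩
  · have gN : Gr k N := (Gr.const cs).mul Gr.id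
    have gK : Gr k Kd := by
      refine Gr.pow (a := Fintype.card S') K fun d => Nat.mul_le_mul_left _ ?_
      unfold EE; omega
    have gB : Gr k B := by
      refine (Gr.sq c1 (2 * c0) (2 * c0 * K0)).mono fun d => le_of_eq ?_
      simp only [B]; congr 2; ring
    have gB2 : Gr k (fun d => B2 d K0) := by
      have g1 : Gr k (fun d => cs * (2 * (c0 * (d + K0)) + 1)) := by
        refine ((Gr.const (cs * (2 * c0 + 2 * c0 * K0 + 1))).mul Gr.id).mono fun d => ?_
        rw [mul_assoc]
        refine Nat.mul_le_mul_left _ ?_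
        ring_nf
        nlinarith [Nat.zero_le (c0 * K0 * d)]
      have g2 : Gr k (fun d => d1 d K0 + 1) := by
        refine (g1.add ((Gr.const (K0 + 1)).add Gr.id)).mono fun d => ?_
        simp only [d1]; omega
      refine (g1.mul g2).mul ((Gr.sq c1 (2 * c0 * (2 * cs * c0 + 1)) (2 * c0 * (cs * (2 * (c0 * K0) + 1) + K0))).mono fun d => le_of_eq ?_)
      simp only [d1]; congr 2; ring
    have gA : Gr k A := ((Gr.const K1).mul gB2).add (Gr.const K2)
    have gT := gN.add ((gK.mul gN).mul (Gr.const K1))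
    exact ((gT.mul gT).mul gB).add ((gK.mul gN).mul gA)
  · intro n d w hw hwn hd
    have h1 := hst n d w (hNK hw) hwn hd
    obtain ⟨l₁, hl1, hl2, hl3⟩ := prLe_list h1
    have hm : lsum l₁ ∈ M := ⟨l₁, rfl, by rw [show lprod g l₁ = w from hl2]; exact hw⟩
    obtain ⟨Lb, hLb1, hLb2, hLb3⟩ := hgr d _ _ hm ⟨l₁, hl1, rfl⟩ (by
      intro j hj
      obtain ⟨p, hp, rfl⟩ := lsum_supp l₁ j hj
      exact hl3 p hp)
    obtain ⟨l₂, g1, g2, g3, g4⟩ := blocks (R := R) g lb hlb (d := d) (K0 := K0) (K1 := K1) (A := A d)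
      (fun i p hp => (he0 i p hp).trans (hK0 i)) hK1 Lb hLb3 (by
        intro ν hν i
        refine (hshl d K0 ν hν (lb i) (fun p hp => (he0 i p hp).trans (hK0 i)) K2 (hK2 i)).mono ?_
        simp only [A]
        have := Nat.mul_le_mul_right (B2 d K0) (hK1 i)
        omega)
    have hNn : cs * (n + 1) * (d + 1) = N d * (n + 1) := by simp only [N]; ring
    rw [hNn] at hl1 hLb1
    have hcard : Fintype.card (Fin k × Bool) = 2 * k := by simp [mul_comm]
    rw [hcard] at hLb1
    have hLb1' : Lb.length ≤ Kd d * N d * (n + 1) := by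
      refine hLb1.trans (le_of_eq ?_)
      simp only [Kd]; ring
    have hlen : (l₁ ++ linv l₂).length ≤ (N d + Kd d * N d * K1) * (n + 1) := by
      simp only [List.length_append, length_linv]
      have := g1.trans (Nat.mul_le_mul_right K1 hLb1')
      nlinarith
    have h5 := abel (R := R) g (B := B d) _ (l₁ ++ linv l₂) hlen (by
      rw [lsum_append, lsum_linv, g2, hLb2]; simp) (by
      have hdeg : ∀ p ∈ l₁ ++ linv l₂, dg p.1 ≤ d + K0 := by
        intro p hp
        rcases List.mem_append.1 hp with h | h
        · exact le_add_right (hl3 p h)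
        · obtain ⟨p', h, e⟩ := mem_linv h
          rw [← e]; exact g4 p' h
      intro p hp p' hp'
      exact hcomm (d + K0) _ _ (hdeg p hp) (hdeg p' hp'))
    rw [lprod_append, lprod_linv, show lprod g l₁ = w from hl2] at h5
    have h6 := PrLe.mul h5 g3
    rw [inv_mul_cancel_right] at h6
    refine h6.mono ?_
    have h7 := Nat.mul_le_mul_right (A d) hLb1'
    have h8 : Kd d * N d * (n + 1) * A d ≤ Kd d * N d * A d * (n + 1) ^ 2 := by
      have : Kd d * N d * A d * (n + 1) * 1 ≤ Kd d * N d * A d * (n + 1) * (n + 1) := Nat.mul_le_mul_left _ (by omega)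
      nlinarith
    nlinarith
end
end MB

namespace MB
lemma final0 {δ : ℕ → ℕ} {c : ℕ} (h : ∀ n, δ n ≤ c * (n + 1) ^ 2) : Dominates δ fun n => n ^ 2 := by
  refine ⟨2 * c + 1, by omega, fun n => ?_⟩
  refine (h n).trans ?_
  show _ ≤ (2 * c + 1) * ((2 * c + 1) * n) ^ 2 + (2 * c + 1) * n + (2 * c + 1)
  have h1 : n ≤ (2 * c + 1) * n := Nat.le_mul_of_pos_left _ (by omega)
  have h2 : n ^ 2 ≤ ((2 * c + 1) * n) ^ 2 := Nat.pow_le_pow_left h1 2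
  have h3 : (2 * c + 1) * n ^ 2 ≤ (2 * c + 1) * ((2 * c + 1) * n) ^ 2 := Nat.mul_le_mul_left _ h2
  nlinarith

lemma final1 {δ : ℕ → ℕ} {k c a : ℕ} (hk : 0 < k) (hc : 0 < c) (h : ∀ n, δ n ≤ 2 ^ (a * EE k (c * (n + 1))) * (n + 1) ^ 2) :
    Dominates δ fun n => 2 ^ n ^ (2 * k) := by
  refine ⟨4 * c * (2 * a + 4) + δ 0, by positivity, fun n => ?_⟩
  show _ ≤ _ * 2 ^ (((4 * c * (2 * a + 4) + δ 0) * n) ^ (2 * k)) + _ + _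
  rcases Nat.eq_zero_or_pos n with rfl | hn
  · exact (Nat.le_add_left _ _).trans (Nat.le_add_left _ _)
  have h2k : 2 * k ≠ 0 := by omega
  have e1 : c * (n + 1) + 1 ≤ 4 * c * n := by nlinarith
  have e2 : EE k (c * (n + 1)) ≤ 2 * (4 * c * n) ^ (2 * k) := by
    unfold EE
    have h1 : (c * (n + 1) + 1) ^ 2 ≤ (c * (n + 1) + 1) ^ (2 * k) := Nat.pow_le_pow_right (by omega) (by omega)
    have h2 : (c * (n + 1) + 1) ^ (2 * k) ≤ (4 * c * n) ^ (2 * k) := Nat.pow_le_pow_left e1 _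
    omega
  have e3 : (n + 1) ^ 2 ≤ 2 ^ (4 * (4 * c * n) ^ (2 * k)) := by
    have h1 : n + 1 ≤ 2 ^ (n + 1) := Nat.lt_two_pow_self.le
    calc (n + 1) ^ 2 ≤ (2 ^ (n + 1)) ^ 2 := Nat.pow_le_pow_left h1 2
      _ = 2 ^ ((n + 1) * 2) := by rw [← pow_mul]
      _ ≤ _ := by
        apply Nat.pow_le_pow_right (by norm_num)
        have h3 : 4 * c * n ≤ (4 * c * n) ^ (2 * k) := Nat.le_self_pow h2k _
        nlinarith
  have e4 : (2 * a + 4) * (4 * c * n) ^ (2 * k) ≤ ((4 * c * (2 * a + 4) + δ 0) * n) ^ (2 * k) := by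
    calc (2 * a + 4) * (4 * c * n) ^ (2 * k) ≤ (2 * a + 4) ^ (2 * k) * (4 * c * n) ^ (2 * k) :=
          Nat.mul_le_mul_right _ (Nat.le_self_pow h2k _)
      _ = ((2 * a + 4) * (4 * c * n)) ^ (2 * k) := (mul_pow _ _ _).symm
      _ ≤ _ := by
        apply Nat.pow_le_pow_left
        nlinarith [Nat.zero_le (δ 0 * n)]
  have e5 : δ n ≤ 2 ^ (((4 * c * (2 * a + 4) + δ 0) * n) ^ (2 * k)) := by
    refine (h n).trans ?_
    calc _ ≤ 2 ^ (a * (2 * (4 * c * n) ^ (2 * k))) * 2 ^ (4 * (4 * c * n) ^ (2 * k)) :=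
          Nat.mul_le_mul (Nat.pow_le_pow_right (by norm_num) (Nat.mul_le_mul_left _ e2)) e3
      _ = 2 ^ ((2 * a + 4) * (4 * c * n) ^ (2 * k)) := by rw [← pow_add]; congr 1; ring
      _ ≤ _ := Nat.pow_le_pow_right (by norm_num) e4
  refine e5.trans (le_trans ?_ (le_trans (Nat.le_add_right _ _) (Nat.le_add_right _ _)))
  exact Nat.le_mul_of_pos_left _ (by positivity)

lemma main {X : Type} [Finite X] (R : Set (FreeGroup X)) (hR : R.Finite) (δ : ℕ → ℕ) (hδ : IsDehnFunctionOf R δ) (k : ℕ)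
    (hk : k ∈ abelianRankSet (FreeGroup X ⧸ Subgroup.normalClosure R)) :
    (k = 0 → Dominates δ fun n => n ^ 2) ∧ (0 < k → Dominates δ fun n => 2 ^ n ^ (2 * k)) := by
  classical
  have := Fintype.ofFinite X
  obtain ⟨A, hA, hAc, hab, hrk⟩ := hk
  let _ : CommGroup ((FreeGroup X ⧸ Subgroup.normalClosure R) ⧸ A) := { mul_comm := hab }
  let π : FreeGroup X →* ((FreeGroup X ⧸ Subgroup.normalClosure R) ⧸ A) :=
    (QuotientGroup.mk' A).comp (QuotientGroup.mk' (Subgroup.normalClosure R))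
  have hπ : Function.Surjective π := (QuotientGroup.mk'_surjective A).comp (QuotientGroup.mk'_surjective _)
  have hker : ∀ a, a ∈ π.ker → QuotientGroup.mk' (Subgroup.normalClosure R) a ∈ A := by
    intro a ha
    exact (QuotientGroup.eq_one_iff _).1 ha
  obtain ⟨D⟩ := exists_dat (π := π) hπ hrk
  obtain ⟨c, f, ⟨a, hf⟩, h⟩ := area_bound (R := R) D hπ hR (by
      intro r hr
      have : QuotientGroup.mk' (Subgroup.normalClosure R) r = 1 :=
        (QuotientGroup.eq_one_iff _).2 (Subgroup.subset_normalClosure hr)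
      simp only [π, MonoidHom.comp_apply, this, map_one]) (by
      intro x hx y hy
      have h1 := hAc _ _ (hker x hx) (hker y hy)
      rw [← QuotientGroup.ker_mk' (Subgroup.normalClosure R), MonoidHom.mem_ker, map_mul, map_inv, map_mul, map_mul, h1,
        mul_inv_cancel])
  have hb : ∀ n d, (k = 0 ∨ c * (n + 1) ≤ d) → δ n ≤ f d * (n + 1) ^ 2 := by
    intro n d hd
    exact (hδ n).2 fun w hw hn => areaLe_of_ar (h n d w hw hn hd)
  constructor
  · intro h0
    exact final0 (c := f 0) fun n => hb n 0 (Or.inl h0)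
  · intro h0
    refine final1 (c := c + 1) (a := a) h0 (by omega) fun n => ?_
    refine (hb n ((c + 1) * (n + 1)) (Or.inr (Nat.mul_le_mul_right _ (by omega)))).trans ?_
    exact Nat.mul_le_mul_right _ (hf _)
end MB

/-- Upper bound for the Dehn function of a finitely presented
metabelian group in terms of the minimal torsion-free rank `k`. -/
theorem dehn_upper_bound_metabelian {X : Type} [Finite X]
    (R : Set (FreeGroup X)) (hR : R.Finite)
    (hmeta : IsMetabelian (FreeGroup X ⧸ Subgroup.normalClosure R))
    (δ : ℕ → ℕ) (hδ : IsDehnFunctionOf R δ)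
    (k : ℕ) (hk : IsLeast (abelianRankSet (FreeGroup X ⧸ Subgroup.normalClosure R)) k) :
    (k = 0 → Dominates δ fun n => n ^ 2) ∧
    (0 < k → Dominates δ fun n => 2 ^ n ^ (2 * k)) := by
  exact MB.main R hR δ hδ k hk.1
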